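/- arXiv:2407.20226 — 3 statements merged into one kernel-verified Lean document; each statement's English description precedes it below -/
import Mathlib

section
/- Let G be a finite connected simple graph, let T_1 and T_2 be spanning trees of G with cycle relations R_1 and R_2, and suppose β : E(G) → E(G) is a bijection that is cycle-expanding from T_1 to T_2, i.e., β(E(T_1)) = E(T_2) and for all edges e ∈ T_1 and e' ∉ T_1, e R_1 e' implies β(e) R_2 β(e'). Then P_MST(T_1;G) ≥ P_MST(T_2;G). Moreover, if β is strictly cycle-expanding, i.e., additionally there exist e ∈ T_2, e' ∉ T_2 with e R_2 e' but β^{−1}(e) R_1 β^{−1}(e') failing, then P_MST(T_1;G) > P_MST(T_2;G). -/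
open MeasureTheory SimpleGraph
open scoped Classical

noncomputable section

namespace RST

variable {V : Type*}

/-- The i.i.d. uniform-on-`[0,1]` product measure on weight vectors indexed by `E`. -/
def edgeUniform (E : Type*) [Fintype E] : Measure (E → ℝ) :=
  Measure.pi fun _ => (volume : Measure ℝ).restrict (Set.Icc (0 : ℝ) 1)

/-- The graph on `V` whose edge set is the finset `T`. -/
def spanGraph (T : Finset (Sym2 V)) : SimpleGraph V :=
  SimpleGraph.fromEdgeSet ↑T

/-- `T` is (the edge set of) a spanning tree of `G`. -/
def IsSpanningTree (G : SimpleGraph V) (T : Finset (Sym2 V)) : Prop :=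
  ↑T ⊆ G.edgeSet ∧ (spanGraph T).Connected ∧ (spanGraph T).IsAcyclic

/-- Total weight `∑_{e ∈ T} w e` of the tree `T`. -/
def treeWeight (G : SimpleGraph V) [Fintype V] (w : G.edgeSet → ℝ) (T : Finset (Sym2 V)) : ℝ :=
  ∑ e : G.edgeSet, if (e : Sym2 V) ∈ T then w e else 0

/-- The event that `T` is the unique minimum-weight spanning tree of `G`. -/
def mstEvent (G : SimpleGraph V) [Fintype V] (T : Finset (Sym2 V)) : Set (G.edgeSet → ℝ) :=
  {w | IsSpanningTree G T ∧ ∀ T' : Finset (Sym2 V), IsSpanningTree G T' → T' ≠ T →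
    treeWeight G w T < treeWeight G w T'}

/-- `P_MST(T; G)`: probability that `T` is the unique minimum-weight spanning tree. -/
def mstProb (G : SimpleGraph V) [Fintype V] (T : Finset (Sym2 V)) : ℝ :=
  (edgeUniform G.edgeSet (mstEvent G T)).toReal

/-- The cycle relation `R_T`: `e R_T e'` iff `e` is an edge of the tree `T`, `e'` is an
edge of `G` not in `T`, and `e` lies on the unique path in `T` between the two
endpoints of `e'`. -/
def CycleRel (G : SimpleGraph V) (T : Finset (Sym2 V)) (e e' : Sym2 V) : Prop :=
  e ∈ T ∧ e' ∈ G.edgeSet ∧ e' ∉ T ∧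
    ∀ (u v : V) (p : (spanGraph T).Walk u v), p.IsPath → e' = s(u, v) → e ∈ p.edges

/-! For a spanning tree `T`, the event that `T` is the unique minimum is exactly
`{w | e R_T e' → w e < w e'}`: a tree edge heavier than a non-tree edge it is related to could be
swapped out, and conversely a symmetric exchange strictly improves every other spanning tree, so
that only `T` can be a minimizer. As `R_T` goes from `T` to its complement, it is a strict partial
order, and the theorem compares the events attached to two such orders on `E(G)`, one of which
contains the other after relabelling along `β`. Relabelling preserves the i.i.d. measure, so the
larger order is respected with smaller probability. If a pair `a, b` belongs to the larger order
only, then the smaller one is respected by some weights with `w b < w a`, hence by an open set of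
them, and the inequality is strict. -/

section CompatibleWeights

variable {E : Type*} {r s : E → E → Prop} {a b : E}

/-- The weight vectors that are strictly increasing along the relation `r`. Applied to a cycle
relation `R_T`, this is the event that `T` is the unique minimum-weight spanning tree. -/
def compatibleWeights (r : E → E → Prop) : Set (E → ℝ) :=
  {w | ∀ a b, r a b → w a < w b}

lemma compatibleWeights_antitone (hrs : r ≤ s) : compatibleWeights s ⊆ compatibleWeights r :=
  fun _ hw a b hab => hw a b (hrs a b hab)

lemma isOpen_compatibleWeights [Finite E] (r : E → E → Prop) : IsOpen (compatibleWeights r) := by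
  simp only [compatibleWeights, Set.ofPred_forall]
  exact isOpen_iInter_of_finite fun a => isOpen_iInter_of_finite fun b =>
    isOpen_iInter_of_finite fun _ => isOpen_lt (continuous_apply a) (continuous_apply b)

lemma exists_mem_compatibleWeights_lt [Finite E] [IsStrictOrder E r] (hab : a ≠ b)
    (hr : ¬ r a b) : ∃ w ∈ compatibleWeights r, w b < w a := by
  cases nonempty_fintype E
  -- The number of predecessors respects `r`; raise the upper closure of `a` above everything else.
  let preds (x : E) : Finset E := {y | r y x}
  have mem_preds {x y : E} : y ∈ preds x ↔ r y x := Finset.mem_filter_univ y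
  let raise (x : E) : ℕ := if x = a ∨ r a x then Fintype.card E + 1 else 0
  refine ⟨fun x => ((preds x).card + raise x : ℕ), fun x y hxy => Nat.cast_lt.2 ?_,
    Nat.cast_lt.2 ?_⟩
  · have hpreds : (preds x).card < (preds y).card := by
      have hsub : preds x ⊆ preds y := fun z hz => mem_preds.2 (_root_.trans (mem_preds.1 hz) hxy)
      exact Finset.card_lt_card <| (Finset.ssubset_iff_of_subset hsub).2
        ⟨x, mem_preds.2 hxy, mem_preds.not.2 (irrefl x)⟩
    have hraise : raise x ≤ raise y := by
      have hclosed : x = a ∨ r a x → y = a ∨ r a y := by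
        rintro (rfl | hax)
        · exact .inr hxy
        · exact .inr (_root_.trans hax hxy)
      simp only [raise]
      split_ifs <;> simp_all
    exact add_lt_add_of_lt_of_le hpreds hraise
  · have hb : (preds b).card ≤ Fintype.card E := Finset.card_le_univ _
    simp only [raise, hab.symm, hr, or_self, true_or, if_true, if_false]
    lia

variable [Fintype E]

instance : IsProbabilityMeasure (edgeUniform E) := by
  have : IsProbabilityMeasure ((volume : Measure ℝ).restrict (Set.Icc (0 : ℝ) 1)) := ⟨by simp⟩
  unfold edgeUniform
  infer_instance

lemma edgeUniform_eq_restrict :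
    edgeUniform E = volume.restrict (Set.univ.pi fun _ => Set.Icc (0 : ℝ) 1) :=
  (Measure.restrict_pi_pi _ _).symm

lemma edgeUniform_pos_of_isOpen {U : Set (E → ℝ)} (hU : IsOpen U) {w : E → ℝ} (hw : w ∈ U)
    (hw01 : ∀ x, w x ∈ Set.Ioo (0 : ℝ) 1) : 0 < edgeUniform E U := by
  rw [edgeUniform_eq_restrict, Measure.restrict_apply hU.measurableSet]
  have hopen : IsOpen (U ∩ Set.univ.pi fun _ => Set.Ioo (0 : ℝ) 1) :=
    hU.inter (isOpen_set_pi Set.finite_univ fun _ _ => isOpen_Ioo)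
  refine (hopen.measure_pos volume ⟨w, hw, fun x _ => hw01 x⟩).trans_le (measure_mono ?_)
  exact Set.inter_subset_inter_right _ (Set.pi_mono fun _ _ => Set.Ioo_subset_Icc_self)

lemma edgeUniform_compatibleWeights_preimage {F : Type*} [Fintype F] (σ : E ≃ F)
    (r : F → F → Prop) :
    edgeUniform E (compatibleWeights (σ ⁻¹'o r)) = edgeUniform F (compatibleWeights r) := by
  have hσ : MeasurePreserving (MeasurableEquiv.arrowCongr' σ (MeasurableEquiv.refl ℝ))
      (edgeUniform E) (edgeUniform F) :=
    measurePreserving_arrowCongr' _ _ σ _ fun _ => .id _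
  rw [← hσ.measure_preimage_equiv]
  congr 1
  ext w
  have hcoe (x : F) : MeasurableEquiv.arrowCongr' σ (MeasurableEquiv.refl ℝ) w x = w (σ.symm x) :=
    rfl
  simp only [compatibleWeights, Set.mem_preimage, Set.mem_ofPred_eq, hcoe]
  rw [σ.forall_congr_left]
  refine forall_congr' fun x => ?_
  rw [σ.forall_congr_left]
  simp [Order.Preimage]

lemma edgeUniform_compatibleWeights_lt [IsStrictOrder E r] (hrs : r ≤ s) (hab : a ≠ b)
    (hs : s a b) (hr : ¬ r a b) :
    edgeUniform E (compatibleWeights s) < edgeUniform E (compatibleWeights r) := by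
  set U : Set (E → ℝ) := compatibleWeights r ∩ {w | w b < w a}
  have hU : IsOpen U :=
    (isOpen_compatibleWeights r).inter (isOpen_lt (continuous_apply b) (continuous_apply a))
  have hUpos : 0 < edgeUniform E U := by
    obtain ⟨w, hw, hba⟩ := exists_mem_compatibleWeights_lt hab hr
    have hmem : (fun x => Real.sigmoid (w x)) ∈ U :=
      ⟨fun x y hxy => Real.sigmoid_strictMono (hw x y hxy), Real.sigmoid_strictMono hba⟩
    exact edgeUniform_pos_of_isOpen hU hmem fun x => ⟨Real.sigmoid_pos _, Real.sigmoid_lt_one _⟩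
  have hdisj : Disjoint (compatibleWeights s) U :=
    Set.disjoint_left.2 fun w hw hwU => lt_asymm (hw a b hs) hwU.2
  calc edgeUniform E (compatibleWeights s)
      < edgeUniform E (compatibleWeights s) + edgeUniform E U :=
        ENNReal.lt_add_right (measure_ne_top _ _) hUpos.ne'
    _ = edgeUniform E (compatibleWeights s ∪ U) := (measure_union hdisj hU.measurableSet).symm
    _ ≤ edgeUniform E (compatibleWeights r) :=
        measure_mono (Set.union_subset (compatibleWeights_antitone hrs) Set.inter_subset_left)

end CompatibleWeights

section Exchange

lemma not_reachable_deleteEdges_of_mem_edges {G : SimpleGraph V} (hG : G.IsAcyclic) {u v : V}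
    {p : G.Walk u v} (hp : p.IsPath) {e : Sym2 V} (he : e ∈ p.edges) :
    ¬ (G.deleteEdges {e}).Reachable u v := by
  induction e with | _ a b =>
  rw [reachable_deleteEdges_iff_exists_walk]
  rintro ⟨q, hq⟩
  have hpq : p = q.bypass :=
    congrArg Subtype.val ((hG.subsingleton_path u v).elim ⟨p, hp⟩ ⟨q.bypass, q.bypass_isPath⟩)
  exact hq (q.edges_bypass_subset_edges (hpq ▸ he))

lemma isTree_deleteEdges_sup_edge {G : SimpleGraph V} (hG : G.IsTree) {a b u v : V}
    (hab : G.Adj a b) (huv : ¬ G.Adj u v)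
    (hsep : ¬ (G.deleteEdges {s(a, b)}).Reachable u v) :
    (G.deleteEdges {s(a, b)} ⊔ edge u v).IsTree := by
  set F := G.deleteEdges {s(a, b)} ⊔ edge u v with hF
  have hne : u ≠ v := fun h => hsep (h ▸ Reachable.refl u)
  have hF_acyclic : F.IsAcyclic :=
    (hG.isAcyclic.anti (G.deleteEdges_le _)).sup_edge_of_not_reachable hsep
  have hFG : F ⊔ edge a b = G ⊔ edge u v := by
    rw [hF, sup_right_comm, deleteEdges, ← edge, sdiff_sup_cancel ((edge_le_iff G).2 (.inr hab))]
  -- Otherwise `F` plus `s(a, b)`, that is, `G` plus `s(u, v)`, would have no cycle.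
  have hF_reachable : F.Reachable a b := by
    by_contra h
    have hacyclic := hF_acyclic.sup_edge_of_not_reachable h
    rw [hFG, isAcyclic_sup_fromEdgeSet_iff] at hacyclic
    exact (hacyclic.2 (hG.connected u v)).elim hne huv
  have hdelete : (G ⊔ edge u v).deleteEdges {s(a, b)} = F := by
    have hab_ne : ¬ (edge u v).Adj a b := fun h =>
      huv (by rwa [← mem_edgeSet, ((adj_edge ..).1 h).1])
    have hedge : (edge u v).deleteEdges {s(a, b)} = edge u v := sdiff_edge _ hab_ne
    rw [deleteEdges_sup, hedge]
  have hF_connected : F.Connected := by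
    rw [← hdelete] at hF_reachable ⊢
    exact (hG.connected.mono le_sup_left).connected_delete_edge_of_not_isBridge
      (not_not.2 hF_reachable)
  exact ⟨hF_connected, hF_acyclic⟩

variable {G : SimpleGraph V} {T T' : Finset (Sym2 V)}

lemma edgeSet_spanGraph (hT : ↑T ⊆ G.edgeSet) : (spanGraph T).edgeSet = ↑T := by
  rw [spanGraph, edgeSet_fromEdgeSet, sdiff_eq_left, Set.disjoint_left]
  exact fun e he => G.not_isDiag_of_mem_edgeSet (hT he)

lemma spanGraph_erase (T : Finset (Sym2 V)) (e : Sym2 V) :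
    spanGraph (T.erase e) = (spanGraph T).deleteEdges {e} := by
  simp [spanGraph]

lemma spanGraph_insert (T : Finset (Sym2 V)) (u v : V) :
    spanGraph (insert s(u, v) T) = spanGraph T ⊔ edge u v := by
  rw [spanGraph, spanGraph, edge, Finset.coe_insert, Set.insert_eq, fromEdgeSet_union, sup_comm]

lemma cycleRel_mk_iff {e : Sym2 V} {u v : V} :
    CycleRel G T e s(u, v) ↔ e ∈ T ∧ s(u, v) ∈ G.edgeSet ∧ s(u, v) ∉ T ∧
      ¬ (spanGraph (T.erase e)).Reachable u v := by
  induction e with | _ a b =>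
  refine and_congr_right' (and_congr_right' (and_congr_right' ?_))
  rw [spanGraph_erase, reachable_deleteEdges_iff_exists_walk, not_exists_not]
  constructor
  · exact fun h q => q.edges_bypass_subset_edges (h u v q.bypass q.bypass_isPath rfl)
  · intro h x y p _ hxy
    rcases Sym2.eq_iff.1 hxy with ⟨rfl, rfl⟩ | ⟨rfl, rfl⟩
    · exact h p
    · simpa using h p.reverse

instance : IsStrictOrder (Sym2 V) (CycleRel G T) where
  irrefl _ h := h.2.2.1 h.1
  trans _ _ _ h h' := absurd h'.1 h.2.2.1

lemma IsSpanningTree.isTree (hT : IsSpanningTree G T) : (spanGraph T).IsTree :=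
  ⟨hT.2.1, hT.2.2⟩

lemma IsSpanningTree.insert_erase (hT : IsSpanningTree G T) {e e' : Sym2 V}
    (h : CycleRel G T e e') : IsSpanningTree G (insert e' (T.erase e)) := by
  induction e with | _ a b =>
  induction e' with | _ u v =>
  obtain ⟨hab, huvG, huv, hsep⟩ := cycleRel_mk_iff.1 h
  have hsub : (↑(insert s(u, v) (T.erase s(a, b))) : Set (Sym2 V)) ⊆ G.edgeSet := by
    rw [Finset.coe_insert, Set.insert_subset_iff]
    exact ⟨huvG, (Finset.coe_subset.2 (T.erase_subset _)).trans hT.1⟩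
  rw [← Finset.mem_coe, ← edgeSet_spanGraph hT.1] at hab huv
  rw [spanGraph_erase] at hsep
  have htree := isTree_deleteEdges_sup_edge hT.isTree hab huv hsep
  rw [← spanGraph_erase, ← spanGraph_insert] at htree
  exact ⟨hsub, htree.connected, htree.isAcyclic⟩

lemma IsSpanningTree.exists_exchange (hT : IsSpanningTree G T) (hT' : IsSpanningTree G T')
    {e' : Sym2 V} (he' : e' ∈ T') (he'T : e' ∉ T) :
    ∃ e, CycleRel G T e e' ∧ CycleRel G T' e' e := by
  induction e' with | _ u v =>
  obtain ⟨p, hp⟩ := hT.2.1.exists_isPath u v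
  have hsep : ¬ (spanGraph (T'.erase s(u, v))).Reachable u v := by
    rw [spanGraph_erase, ← isBridge_iff]
    refine isAcyclic_iff_forall_isBridge.1 hT'.2.2 ?_
    rwa [edgeSet_spanGraph hT'.1, Finset.mem_coe]
  -- Some edge of the `T`-path from `u` to `v` leaves the component of `u` in `T' - s(u, v)`.
  obtain ⟨d, hdp, hd_fst, hd_snd⟩ := p.exists_boundary_dart
    {x | (spanGraph (T'.erase s(u, v))).Reachable u x} (Reachable.refl u) hsep
  have hd_sep : ¬ (spanGraph (T'.erase s(u, v))).Reachable d.fst d.snd :=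
    fun h => hd_snd (hd_fst.trans h)
  have hd_edges : d.edge ∈ p.edges := List.mem_map_of_mem hdp
  have hdT : d.edge ∈ T := by
    rw [← Finset.mem_coe, ← edgeSet_spanGraph hT.1]
    exact p.edges_subset_edgeSet hd_edges
  have hdT' : d.edge ∉ T' := by
    refine fun h => hd_sep (Adj.reachable ?_)
    refine (fromEdgeSet_adj _).2 ⟨?_, d.fst_ne_snd⟩
    exact Finset.mem_erase.2 ⟨fun h_eq => he'T (h_eq ▸ hdT), h⟩
  refine ⟨d.edge, cycleRel_mk_iff.2 ⟨hdT, hT'.1 he', he'T, ?_⟩,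
    cycleRel_mk_iff.2 ⟨he', hT.1 hdT, hdT', hd_sep⟩⟩
  rw [spanGraph_erase]
  exact not_reachable_deleteEdges_of_mem_edges hT.2.2 hp hd_edges

lemma IsSpanningTree.exists_exchange_of_ne (hT : IsSpanningTree G T) (hT' : IsSpanningTree G T')
    (hne : T' ≠ T) : ∃ e e', CycleRel G T e e' ∧ CycleRel G T' e' e := by
  obtain ⟨e, he⟩ : ∃ e, ¬ (e ∈ T' ↔ e ∈ T) := by simpa [Finset.ext_iff] using hne
  by_cases heT : e ∈ T
  · obtain ⟨e', h', h⟩ := hT'.exists_exchange hT heT (by tauto)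
    exact ⟨e, e', h, h'⟩
  · obtain ⟨e', h, h'⟩ := hT.exists_exchange hT' (by tauto) heT
    exact ⟨e', e, h, h'⟩

end Exchange

section MinimumSpanningTree

variable [Fintype V] {G : SimpleGraph V} {T : Finset (Sym2 V)}

lemma treeWeight_insert (w : G.edgeSet → ℝ) {e : G.edgeSet} (he : ↑e ∉ T) :
    treeWeight G w (insert ↑e T) = w e + treeWeight G w T := by
  have hfilter : ({x | ↑x ∈ insert ↑e T} : Finset G.edgeSet) =
      insert e ({x | ↑x ∈ T} : Finset G.edgeSet) := by
    ext x
    simp [Subtype.ext_iff]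
  rw [treeWeight, treeWeight, ← Finset.sum_filter, ← Finset.sum_filter, hfilter,
    Finset.sum_insert (by simpa using he)]

lemma treeWeight_insert_erase (w : G.edgeSet → ℝ) {e e' : G.edgeSet} (he : ↑e ∈ T)
    (he' : ↑e' ∉ T) :
    treeWeight G w (insert ↑e' (T.erase ↑e)) + w e = treeWeight G w T + w e' := by
  have herase : treeWeight G w T = w e + treeWeight G w (T.erase ↑e) := by
    rw [← treeWeight_insert w (T.notMem_erase _), Finset.insert_erase he]
  rw [treeWeight_insert w (fun h => he' (Finset.mem_of_mem_erase h)), herase]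
  ring

lemma IsSpanningTree.exists_treeWeight_lt (hT : IsSpanningTree G T) {w : G.edgeSet → ℝ}
    (hw : w ∈ compatibleWeights (Subtype.val ⁻¹'o CycleRel G T)) {T' : Finset (Sym2 V)}
    (hT' : IsSpanningTree G T') (hne : T' ≠ T) :
    ∃ T'', IsSpanningTree G T'' ∧ treeWeight G w T'' < treeWeight G w T' := by
  obtain ⟨e, e', h, h'⟩ := hT.exists_exchange_of_ne hT' hne
  lift e to G.edgeSet using h'.2.1
  lift e' to G.edgeSet using h.2.1
  refine ⟨insert ↑e (T'.erase ↑e'), hT'.insert_erase h', ?_⟩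
  linarith [hw e e' h, treeWeight_insert_erase w h'.1 h'.2.2.1]

lemma mstEvent_eq_compatibleWeights (hT : IsSpanningTree G T) :
    mstEvent G T = compatibleWeights (Subtype.val ⁻¹'o CycleRel G T) := by
  ext w
  constructor
  · rintro ⟨-, hmin⟩ e e' h
    have hne : insert ↑e' (T.erase ↑e) ≠ T := fun h_eq =>
      h.2.2.1 (h_eq ▸ Finset.mem_insert_self _ _)
    have hlt := hmin _ (hT.insert_erase h) hne
    linarith [treeWeight_insert_erase w h.1 h.2.2.1]
  · intro hw
    -- No tree other than `T` is a minimizer, so the minimizer that exists by finiteness is `T`.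
    obtain ⟨T₀, hT₀, hmin⟩ := Set.exists_min_image {T' | IsSpanningTree G T'} (treeWeight G w)
      (Set.toFinite _) ⟨T, hT⟩
    have hT₀_eq : T₀ = T := by
      by_contra hne
      obtain ⟨T'', hT'', hlt⟩ := hT.exists_treeWeight_lt hw hT₀ hne
      exact hlt.not_ge (hmin T'' hT'')
    subst hT₀_eq
    refine ⟨hT, fun T' hT' hne => ?_⟩
    obtain ⟨T'', hT'', hlt⟩ := hT.exists_treeWeight_lt hw hT' hne
    exact (hmin T'' hT'').trans_lt hlt

theorem cycle_expansion_inequality_general {W : Type*} [Fintype W] {H : SimpleGraph W}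
    {S : Finset (Sym2 W)} (hT : IsSpanningTree G T) (hS : IsSpanningTree H S)
    (β : G.edgeSet ≃ H.edgeSet)
    (hexp : ∀ e e' : G.edgeSet, CycleRel G T e e' → CycleRel H S (β e) (β e')) :
    mstProb H S ≤ mstProb G T ∧
      ((∃ e e' : G.edgeSet, CycleRel H S (β e) (β e') ∧ ¬ CycleRel G T e e') →
        mstProb H S < mstProb G T) := by
  rw [mstProb, mstProb, mstEvent_eq_compatibleWeights hT, mstEvent_eq_compatibleWeights hS,
    ← edgeUniform_compatibleWeights_preimage β]
  refine ⟨ENNReal.toReal_mono (measure_ne_top _ _)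
    (measure_mono (compatibleWeights_antitone hexp)), ?_⟩
  rintro ⟨e, e', h, hn⟩
  have hne : e ≠ e' := by
    rintro rfl
    exact irrefl _ h
  exact ENNReal.toReal_strict_mono (measure_ne_top _ _)
    (edgeUniform_compatibleWeights_lt hexp hne h hn)

end MinimumSpanningTree

/-- Cycle expansion inequality: if `β` is a bijection of `E(G)` carrying `T1` to `T2`
with `e R_{T1} e' → β e R_{T2} β e'`, then `P_MST(T1) ≥ P_MST(T2)`; and if moreover the
inclusion of relations is strict, then the inequality is strict. -/
theorem cycle_expansion_inequality [Fintype V] (G : SimpleGraph V) (hG : G.Connected)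
    (T1 T2 : Finset (Sym2 V)) (hT1 : IsSpanningTree G T1) (hT2 : IsSpanningTree G T2)
    (β : Sym2 V → Sym2 V) (hβ : Set.BijOn β G.edgeSet G.edgeSet)
    (hmap : T1.image β = T2)
    (hexp : ∀ e e' : Sym2 V, CycleRel G T1 e e' → CycleRel G T2 (β e) (β e')) :
    mstProb G T1 ≥ mstProb G T2 ∧
    ((∃ e e' : Sym2 V, CycleRel G T2 e e' ∧
        ∃ f f' : Sym2 V, f ∈ G.edgeSet ∧ f' ∈ G.edgeSet ∧ β f = e ∧ β f' = e' ∧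
          ¬CycleRel G T1 f f') →
      mstProb G T1 > mstProb G T2) := by
  obtain ⟨hle, hlt⟩ :=
    cycle_expansion_inequality_general hT1 hT2 (hβ.equiv β) fun e e' => hexp e e'
  refine ⟨hle, ?_⟩
  rintro ⟨_, _, h, f, f', hf, hf', rfl, rfl, hn⟩
  exact hlt ⟨⟨f, hf⟩, ⟨f', hf'⟩, h, hn⟩

end RST
end
end

section
/- Let n ≥ 2, let T⋆ be any spanning tree of K_n that is a star (all edges incident to one vertex), and let T_P be any spanning tree of K_n that is a Hamiltonian path. Then for every spanning tree T of K_n, P_MST(T⋆; K_n) ≥ P_MST(T; K_n) ≥ P_MST(T_P; K_n); moreover the left inequality is an equality if and only if T is itself a star, and the right inequality is an equality if and only if T is itself a path. -/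
open MeasureTheory SimpleGraph
open scoped Classical

noncomputable section

namespace RST

variable {V : Type*}

/-- A star spanning tree of `K_n`: a spanning tree all of whose edges share a common
vertex. -/
def IsStarTree (n : ℕ) (T : Finset (Sym2 (Fin n))) : Prop :=
  IsSpanningTree (⊤ : SimpleGraph (Fin n)) T ∧ ∃ c : Fin n, ∀ e ∈ T, c ∈ e

/-- A Hamiltonian-path spanning tree of `K_n`: the consecutive edges of an enumeration
of `n` distinct vertices. -/
def IsPathTree (n : ℕ) (T : Finset (Sym2 (Fin n))) : Prop :=
  IsSpanningTree (⊤ : SimpleGraph (Fin n)) T ∧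
    ∃ f : ℕ → Fin n, (∀ i < n, ∀ j < n, f i = f j → i = j) ∧
      T = (Finset.range (n - 1)).image fun i => s(f i, f (i + 1))

/-! The tree `S` is the minimum spanning tree when every chord is heavier than the other edges of
the cycle it closes. Conditioning on the heaviest edge `e` of `S`, of weight `t`, writes the
probability `F(S)` of this event as a sum over `e` of integrals of `(1 - t) ^ (a + b + ab) F_t(S₁)
F_t(S₂)`, where `S₁` and `S₂` are the components of `S - e`, with `a` and `b` edges, and `F_t` is
`F` with the weights of the tree edges restricted to be less than `t`.

By the four functions theorem `F_t` is log-supermodular on the subforests of a tree, with a gain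
from the chords that only the union closes: `(1 - t) ^ (ab) F_t(S₁) F_t(S₂) ≤ F_t(S₁ ∪ S₂)` for
edge-disjoint trees with `a` and `b` edges sharing a vertex. By induction on the number of edges,
each term of `S` is therefore at most each term of a star, in which one of the components is always
a single vertex.

For a path, log-supermodularity for overlapping subpaths shows that the more balanced the cut, the
smaller the term, so by induction a term of `S` is at least any term of the path that comes from an
at least as balanced cut. For every `m`, at least as many edges of `S` as of the path cut off a tree
with fewer than `m` edges, so Hall's theorem matches the terms of `S` with such terms of the path.

Strictness comes from a cut of `S` that is not pendant, and from a third pendant edge of `S`, which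
has to be matched with an inner edge of the path. -/

section FourFunctions

theorem add_le_add_of_mul_le_mul {A B C D : ENNReal} (hA : A ≤ C) (hB : B ≤ C)
    (h : A * B ≤ C * D) : A + B ≤ C + D := by
  rcases eq_or_ne C ⊤ with rfl | hC
  · simp
  rcases eq_or_ne D ⊤ with rfl | hD
  · simp
  lift C to NNReal using hC
  lift D to NNReal using hD
  lift A to NNReal using ne_top_of_le_ne_top ENNReal.coe_ne_top hA
  lift B to NNReal using ne_top_of_le_ne_top ENNReal.coe_ne_top hB
  norm_cast at *
  rcases eq_zero_or_pos C with rfl | hpos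
  · simp_all
  refine le_of_mul_le_mul_left ?_ hpos
  rw [← NNReal.coe_le_coe] at *
  push_cast at *
  nlinarith [mul_nonneg (sub_nonneg.2 hA) (sub_nonneg.2 hB)]

theorem two_mul_lintegral_mul_lintegral {α : Type*} [MeasurableSpace α] {μ : Measure α}
    {f g : α → ENNReal} (hf : Measurable f) (hg : Measurable g) :
    2 * ((∫⁻ a, f a ∂μ) * ∫⁻ a, g a ∂μ) = ∫⁻ a, ∫⁻ b, f a * g b + f b * g a ∂μ ∂μ := by
  have inner (a : α) : ∫⁻ b, f a * g b + f b * g a ∂μ =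
      f a * (∫⁻ b, g b ∂μ) + (∫⁻ b, f b ∂μ) * g a := by
    rw [lintegral_add_left (by fun_prop), lintegral_const_mul _ hg, lintegral_mul_const _ hf]
  simp_rw [inner]
  rw [lintegral_add_left (by fun_prop), lintegral_mul_const _ hf, lintegral_const_mul _ hg,
    two_mul]

theorem lintegral_four_functions {α : Type*} [LinearOrder α] [MeasurableSpace α]
    {μ : Measure α} {U : Set α} (hU : ∀ᵐ a ∂μ, a ∈ U) {f₁ f₂ f₃ f₄ : α → ENNReal}
    (h₁ : Measurable f₁) (h₂ : Measurable f₂) (h₃ : Measurable f₃) (h₄ : Measurable f₄)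
    (h : ∀ a ∈ U, ∀ b ∈ U, f₁ a * f₂ b ≤ f₃ (a ⊔ b) * f₄ (a ⊓ b)) :
    (∫⁻ a, f₁ a ∂μ) * (∫⁻ a, f₂ a ∂μ) ≤ (∫⁻ a, f₃ a ∂μ) * ∫⁻ a, f₄ a ∂μ := by
  have ordered : ∀ a ∈ U, ∀ b ∈ U, a ≤ b →
      f₁ a * f₂ b + f₁ b * f₂ a ≤ f₃ b * f₄ a + f₃ a * f₄ b := by
    intro a ha b hb hab
    refine add_le_add_of_mul_le_mul (by simpa [hab] using h a ha b hb)
      (by simpa [hab] using h b hb a ha) ?_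
    calc f₁ a * f₂ b * (f₁ b * f₂ a) = (f₁ a * f₂ a) * (f₁ b * f₂ b) := by ring
      _ ≤ (f₃ a * f₄ a) * (f₃ b * f₄ b) :=
        mul_le_mul' (by simpa using h a ha a ha) (by simpa using h b hb b hb)
      _ = f₃ b * f₄ a * (f₃ a * f₄ b) := by ring
  refine (ENNReal.mul_le_mul_iff_right (a := 2) (by simp) (by simp)).1 ?_
  rw [two_mul_lintegral_mul_lintegral h₁ h₂, two_mul_lintegral_mul_lintegral h₃ h₄]
  refine lintegral_mono_ae (hU.mono fun a ha => lintegral_mono_ae (hU.mono fun b hb => ?_))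
  rcases le_total a b with hab | hba
  · simpa only [add_comm] using ordered a ha b hb hab
  · simpa only [add_comm] using ordered b hb a ha hba

variable {ι : Type*} [DecidableEq ι] {X : ι → Type*} [∀ i, LinearOrder (X i)]
  [∀ i, MeasurableSpace (X i)] {μ : ∀ i, Measure (X i)} [∀ i, SigmaFinite (μ i)]

theorem lmarginal_four_functions {U : ∀ i, Set (X i)} (hU : ∀ i, ∀ᵐ a ∂μ i, a ∈ U i)
    {N : Set ι} {f₁ f₂ f₃ f₄ : (∀ i, X i) → ENNReal} (h₁ : Measurable f₁) (h₂ : Measurable f₂)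
    (h₃ : Measurable f₃) (h₄ : Measurable f₄)
    (h : ∀ x y, (∀ i ∈ N, x i ∈ U i) → (∀ i ∈ N, y i ∈ U i) →
      f₁ x * f₂ y ≤ f₃ (x ⊔ y) * f₄ (x ⊓ y))
    (s : Finset ι) {x y : ∀ i, X i} (hx : ∀ i ∈ N \ s, x i ∈ U i) (hy : ∀ i ∈ N \ s, y i ∈ U i) :
    (∫⋯∫⁻_s, f₁ ∂μ) x * (∫⋯∫⁻_s, f₂ ∂μ) y ≤
      (∫⋯∫⁻_s, f₃ ∂μ) (x ⊔ y) * (∫⋯∫⁻_s, f₄ ∂μ) (x ⊓ y) := by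
  induction s using Finset.induction_on generalizing x y with
  | empty => simpa using h x y (by simpa using hx) (by simpa using hy)
  | insert i s hi ih =>
    have update_mem {z : ∀ i, X i} (hz : ∀ j ∈ N \ ↑(insert i s), z j ∈ U j) {a : X i}
        (ha : a ∈ U i) : ∀ j ∈ N \ s, Function.update z i a j ∈ U j := by
      intro j hj
      rcases eq_or_ne j i with rfl | hji
      · simpa using ha
      · simpa [hji] using hz j ⟨hj.1, by simpa [hji] using hj.2⟩
    simp only [lmarginal_insert _ h₁ hi, lmarginal_insert _ h₂ hi, lmarginal_insert _ h₃ hi,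
      lmarginal_insert _ h₄ hi]
    refine lintegral_four_functions (hU i) ((h₁.lmarginal μ).comp (measurable_update x))
      ((h₂.lmarginal μ).comp (measurable_update y))
      ((h₃.lmarginal μ).comp (measurable_update _))
      ((h₄.lmarginal μ).comp (measurable_update _)) fun a ha b hb => ?_
    have sup_update : Function.update (x ⊔ y) i (a ⊔ b) =
        Function.update x i a ⊔ Function.update y i b :=
      funext fun j => by obtain rfl | hji := eq_or_ne j i <;> simp [*]
    have inf_update : Function.update (x ⊓ y) i (a ⊓ b) =
        Function.update x i a ⊓ Function.update y i b :=
      funext fun j => by obtain rfl | hji := eq_or_ne j i <;> simp [*]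
    rw [sup_update, inf_update]
    exact ih (update_mem hx ha) (update_mem hy hb)

end FourFunctions

section Closure

variable {R S : Finset (Sym2 V)} {e f : Sym2 V} {x y z : V}

/-- The closure of `R` in the graphic matroid: the (possibly degenerate) edges whose ends are
joined by a path of edges of `R`. -/
def edgeClosure (R : Finset (Sym2 V)) : Set (Sym2 V) :=
  Sym2.fromRel (r := (spanGraph R).Reachable) ⟨fun _ _ h => h.symm⟩

/-- Independence in the graphic matroid: `S` is the edge set of a forest. Loops are excluded, as
they lie in every closure. -/
def EdgeIndep (S : Finset (Sym2 V)) : Prop :=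
  ∀ e ∈ S, e ∉ edgeClosure (S.erase e)

theorem mk_mem_edgeClosure : s(x, y) ∈ edgeClosure R ↔ (spanGraph R).Reachable x y :=
  Sym2.fromRel_prop

theorem spanGraph_adj : (spanGraph R).Adj x y ↔ s(x, y) ∈ R ∧ x ≠ y := by
  simp [spanGraph]

theorem spanGraph_mono (h : R ⊆ S) : spanGraph R ≤ spanGraph S :=
  fromEdgeSet_mono (by exact_mod_cast h)

theorem edgeClosure_mono (h : R ⊆ S) : edgeClosure R ⊆ edgeClosure S := by
  rintro ⟨x, y⟩ hf
  exact mk_mem_edgeClosure.2 ((mk_mem_edgeClosure.1 hf).mono (spanGraph_mono h))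

theorem mem_edgeClosure_of_isDiag (h : f.IsDiag) : f ∈ edgeClosure R := by
  obtain ⟨x, y⟩ := f
  obtain rfl : x = y := by simpa using h
  exact mk_mem_edgeClosure.2 .rfl

theorem mem_edgeClosure_of_mem (h : f ∈ R) : f ∈ edgeClosure R := by
  obtain ⟨x, y⟩ := f
  rcases eq_or_ne x y with rfl | hxy
  · exact mem_edgeClosure_of_isDiag (by simp)
  · exact mk_mem_edgeClosure.2 (spanGraph_adj.2 ⟨h, hxy⟩).reachable

theorem mk_mem_edgeClosure_trans (h₁ : s(x, y) ∈ edgeClosure R) (h₂ : s(y, z) ∈ edgeClosure R) :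
    s(x, z) ∈ edgeClosure R :=
  mk_mem_edgeClosure.2 ((mk_mem_edgeClosure.1 h₁).trans (mk_mem_edgeClosure.1 h₂))

theorem edgeClosure_induction {P : V → Prop}
    (step : ∀ a b, s(a, b) ∈ R → P a → P b)
    (h : s(x, y) ∈ edgeClosure R) (hx : P x) : P y := by
  obtain ⟨p⟩ := mk_mem_edgeClosure.1 h
  induction p with
  | nil => exact hx
  | cons hab p ih =>
    exact ih (mk_mem_edgeClosure.2 p.reachable) (step _ _ (spanGraph_adj.1 hab).1 hx)

theorem EdgeIndep.not_isDiag (hS : EdgeIndep S) (he : e ∈ S) : ¬e.IsDiag :=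
  fun h => hS e he (mem_edgeClosure_of_isDiag h)

theorem EdgeIndep.mono (hS : EdgeIndep S) (h : R ⊆ S) : EdgeIndep R :=
  fun e he h' => hS e (h he) (edgeClosure_mono (Finset.erase_subset_erase e h) h')

theorem spanGraph_erase_s10 : spanGraph (S.erase e) = (spanGraph S).deleteEdges {e} := by
  ext x y
  simp only [spanGraph_adj, deleteEdges_adj, Finset.mem_erase, Set.mem_singleton_iff]
  tauto

theorem edgeIndep_iff : EdgeIndep S ↔ (∀ e ∈ S, ¬e.IsDiag) ∧ (spanGraph S).IsAcyclic := by
  rw [isAcyclic_iff_forall_adj_isBridge]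
  constructor
  · refine fun hS => ⟨fun e => hS.not_isDiag, fun x y hxy => ?_⟩
    rw [isBridge_iff, ← spanGraph_erase_s10, ← mk_mem_edgeClosure]
    exact hS _ (spanGraph_adj.1 hxy).1
  · rintro ⟨hdiag, hbridge⟩ ⟨x, y⟩ he
    have hxy : (spanGraph S).Adj x y := spanGraph_adj.2 ⟨he, by simpa using hdiag _ he⟩
    exact fun h => isBridge_iff.1 (hbridge hxy) (spanGraph_erase_s10 ▸ mk_mem_edgeClosure.1 h)

theorem EdgeIndep.exists_notMem_edgeClosure_erase (hS : EdgeIndep S) (hf : f ∈ edgeClosure S)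
    (hfR : f ∉ edgeClosure R) : ∃ e ∈ S, e ∉ R ∧ f ∉ edgeClosure (S.erase e) := by
  obtain ⟨x, y⟩ := f
  obtain ⟨p, hp⟩ := (mk_mem_edgeClosure.1 hf).exists_isPath
  obtain ⟨e, hep, heR⟩ : ∃ e ∈ p.edges, e ∉ R := by
    by_contra! h
    refine hfR (mk_mem_edgeClosure.2 ⟨p.transfer _ fun e he => ?_⟩)
    obtain ⟨a, b⟩ := e
    exact spanGraph_adj.2 ⟨h _ he, (p.adj_of_mem_edges he).ne⟩
  refine ⟨e, ?_, heR, fun h => ?_⟩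
  · obtain ⟨a, b⟩ := e
    exact (spanGraph_adj.1 (p.adj_of_mem_edges hep)).1
  · obtain ⟨q, hq⟩ := (mk_mem_edgeClosure.1 h).exists_isPath
    have hpq : p = q.mapLe (spanGraph_mono (S.erase_subset e)) :=
      congrArg Subtype.val
        (((edgeIndep_iff.1 hS).2.subsingleton_path x y).elim ⟨p, hp⟩ ⟨_, hq.mapLe _⟩)
    rw [hpq, Walk.edges_mapLe_eq_edges] at hep
    obtain ⟨a, b⟩ := e
    simpa using (spanGraph_adj.1 (q.adj_of_mem_edges hep)).1

theorem EdgeIndep.mem_edgeClosure_inter (hS : EdgeIndep S) {R₁ R₂ : Finset (Sym2 V)}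
    (h₁ : R₁ ⊆ S) (h₂ : R₂ ⊆ S) (hf₁ : f ∈ edgeClosure R₁) (hf₂ : f ∈ edgeClosure R₂) :
    f ∈ edgeClosure (R₁ ∩ R₂) := by
  by_contra hf
  obtain ⟨e, -, he, hfe⟩ :=
    hS.exists_notMem_edgeClosure_erase (edgeClosure_mono h₁ hf₁) hf
  rw [Finset.mem_inter, not_and_or] at he
  rcases he with he | he
  · exact hfe (edgeClosure_mono (Finset.subset_erase.2 ⟨h₁, he⟩) hf₁)
  · exact hfe (edgeClosure_mono (Finset.subset_erase.2 ⟨h₂, he⟩) hf₂)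

end Closure

section Lmarginal

variable {ι : Type*} [DecidableEq ι] {X : ι → Type*} [∀ i, MeasurableSpace (X i)]
  {μ : ∀ i, Measure (X i)} {f g : (∀ i, X i) → ENNReal} {s t : Finset ι}

theorem lmarginal_eq_of_dependsOn (hf : DependsOn f s) (x y : ∀ i, X i) :
    (∫⋯∫⁻_s, f ∂μ) x = (∫⋯∫⁻_s, f ∂μ) y :=
  lintegral_congr fun z => hf fun i hi => by simp [Function.updateFinset, Finset.mem_coe.1 hi]

theorem lmarginal_const_mul (c : ENNReal) (hf : Measurable f) (x : ∀ i, X i) :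
    (∫⋯∫⁻_s, fun y => c * f y ∂μ) x = c * (∫⋯∫⁻_s, f ∂μ) x :=
  lintegral_const_mul c (hf.comp measurable_updateFinset)

variable [∀ i, SigmaFinite (μ i)]

theorem lmarginal_const (c : ENNReal) (x : ∀ i, X i) :
    (∫⋯∫⁻_s, fun _ => c ∂μ) x = c * ∏ i ∈ s, μ i Set.univ := by
  rw [lmarginal, lintegral_const, Measure.pi_univ, Finset.prod_coe_sort s fun i => μ i Set.univ]

theorem lmarginal_mul_of_disjoint (hf : Measurable f) (hg : Measurable g) (hfs : DependsOn f s)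
    (hgt : DependsOn g t) (hst : Disjoint s t) (x : ∀ i, X i) :
    (∫⋯∫⁻_s ∪ t, fun y => f y * g y ∂μ) x = (∫⋯∫⁻_s, f ∂μ) x * (∫⋯∫⁻_t, g ∂μ) x := by
  have inner : (∫⋯∫⁻_t, fun y => f y * g y ∂μ) = fun y => (∫⋯∫⁻_t, g ∂μ) x * f y := by
    ext y
    have hfy (z : ∀ i : t, X i) : f (Function.updateFinset y t z) = f y := hfs fun i hi => by
      simp [Function.updateFinset, Finset.disjoint_left.1 hst hi]
    rw [lmarginal_eq_of_dependsOn hgt x y, mul_comm, ← lmarginal_const_mul _ hg]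
    simp only [lmarginal, hfy]
  rw [lmarginal_union μ (fun y => f y * g y) (hf.mul hg) hst, inner,
    lmarginal_const_mul _ hf, mul_comm]

theorem lmarginal_eq_mul_prod_sdiff (hf : Measurable f) (hfs : DependsOn f s) (hst : s ⊆ t)
    (x : ∀ i, X i) :
    (∫⋯∫⁻_t, f ∂μ) x = (∫⋯∫⁻_s, f ∂μ) x * ∏ i ∈ t \ s, μ i Set.univ := by
  have h := lmarginal_mul_of_disjoint (μ := μ) (g := fun _ => 1) (t := t \ s) hf measurable_const
    hfs ((dependsOn_const _).mono (Set.empty_subset _)) Finset.disjoint_sdiff x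
  simpa only [mul_one, Finset.union_sdiff_of_subset hst, lmarginal_const, one_mul] using h

theorem lmarginal_restrict {U : ∀ i, Set (X i)} (hU : ∀ i, MeasurableSet (U i))
    (x : ∀ i, X i) :
    (∫⋯∫⁻_s, f ∂fun i => (μ i).restrict (U i)) x =
      (∫⋯∫⁻_s, {y | ∀ i ∈ s, y i ∈ U i}.indicator f ∂μ) x := by
  rw [lmarginal, ← Measure.restrict_pi_pi, ← lintegral_indicator
    (MeasurableSet.univ_pi fun i : s => hU i), lmarginal]
  refine lintegral_congr fun y => ?_
  simp +contextual [Set.indicator, Function.updateFinset]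

theorem ae_injective_pi {ι α : Type*} [Fintype ι] [MeasurableSpace α] [MeasurableEq α]
    (μ : ι → Measure α) [∀ i, SigmaFinite (μ i)] [∀ i, NullSingletonClass (μ i)] :
    ∀ᵐ y ∂Measure.pi μ, Function.Injective y := by
  have tie_null (i j : ι) (hij : i ≠ j) : ∀ᵐ y ∂Measure.pi μ, y i ≠ y j := by
    have hmeas : MeasurableSet {y : ι → α | y i = y j} :=
      measurableSet_eq_fun (measurable_pi_apply i) (measurable_pi_apply j)
    rw [ae_iff]
    simp only [ne_eq, not_not]
    rw [← lintegral_indicator_one hmeas]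
    rcases isEmpty_or_nonempty α with hα | ⟨⟨a⟩⟩
    · have : IsEmpty (ι → α) := ⟨fun y => hα.elim (y i)⟩
      simp
    rw [lintegral_eq_lmarginal_univ fun _ => a, lmarginal_erase' _ (measurable_one.indicator hmeas)
      (Finset.mem_univ i)]
    have slice_null (y : ι → α) :
        ∫⁻ t, {y : ι → α | y i = y j}.indicator 1 (Function.update y i t) ∂μ i = 0 := by
      have : (fun t => {y : ι → α | y i = y j}.indicator (1 : (ι → α) → ENNReal)
          (Function.update y i t)) = ({y j} : Set α).indicator 1 := by
        ext t
        simp [Set.indicator, hij.symm]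
      rw [this, lintegral_indicator_one (measurableSet_singleton _), measure_singleton]
    simp only [slice_null]
    simp [lmarginal]
  have h : ∀ᵐ y ∂Measure.pi μ, ∀ i j, i ≠ j → y i ≠ y j := by
    simpa only [ae_all_iff] using tie_null
  exact h.mono fun y hy i j => not_imp_not.1 (hy i j)

end Lmarginal

section Survival

variable {ν ν' : Measure ℝ} {R S S₁ S₂ : Finset (Sym2 V)} {e f : Sym2 V} {w x y : Sym2 V → ℝ}

/-- The thresholds `z` at which the edges of `S` lighter than `z` connect the ends of `f`. -/
def closingWeights (S : Finset (Sym2 V)) (f : Sym2 V) (w : Sym2 V → ℝ) : Set ℝ :=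
  {z | f ∈ edgeClosure {e ∈ S | w e < z}}

theorem isUpperSet_closingWeights : IsUpperSet (closingWeights S f w) :=
  fun _ _ hz h => edgeClosure_mono
    (Finset.monotone_filter_right S fun _ _ he => he.trans_le hz) h

theorem closingWeights_anti (h : ∀ e ∈ S, x e ≤ y e) :
    closingWeights S f y ⊆ closingWeights S f x :=
  fun _ hz => edgeClosure_mono
    (Finset.monotone_filter_right S fun e he hye => (h e he).trans_lt hye) hz

theorem closingWeights_mono (h : R ⊆ S) : closingWeights R f w ⊆ closingWeights S f w :=
  fun _ hz => edgeClosure_mono (Finset.filter_subset_filter _ h) hz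

theorem closingWeights_congr (h : ∀ e ∈ S, x e = y e) :
    closingWeights S f x = closingWeights S f y :=
  (closingWeights_anti fun e he => (h e he).ge).antisymm
    (closingWeights_anti fun e he => (h e he).le)

theorem Ioi_subset_closingWeights (hf : f ∈ edgeClosure S) {t : ℝ} (h : ∀ e ∈ S, w e ≤ t) :
    Set.Ioi t ⊆ closingWeights S f w := by
  intro z hz
  rwa [closingWeights, Set.mem_ofPred, Finset.filter_true_of_mem fun e he => (h e he).trans_lt hz]

theorem measurableSet_closingWeights (S : Finset (Sym2 V)) (f : Sym2 V) :
    MeasurableSet {p : (Sym2 V → ℝ) × ℝ | p.2 ∈ closingWeights S f p.1} := by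
  have : {p : (Sym2 V → ℝ) × ℝ | p.2 ∈ closingWeights S f p.1} =
      ⋃ R ∈ {R ∈ S.powerset | f ∈ edgeClosure R}, ⋂ e ∈ R, {p | p.1 e < p.2} := by
    ext p
    simp only [Set.mem_iUnion, Finset.mem_filter, Finset.mem_powerset]
    constructor
    · refine fun h => ⟨_, ⟨Finset.filter_subset _ S, h⟩, ?_⟩
      simp +contextual
    · rintro ⟨R, ⟨hRS, hfR⟩, hR⟩
      refine edgeClosure_mono (fun e he => Finset.mem_filter.2 ⟨hRS he, ?_⟩) hfR
      simpa using Set.mem_iInter₂.1 hR e he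
  rw [this]
  exact Finset.measurableSet_biUnion _ fun R _ => Finset.measurableSet_biInter _ fun e _ =>
    measurableSet_lt ((measurable_pi_apply e).comp measurable_fst) measurable_snd

theorem measure_closingWeights_mul_le_of_edgeIndep {N : Finset (Sym2 V)} (hN : EdgeIndep N)
    (h₁ : S₁ ⊆ N) (h₂ : S₂ ⊆ N) :
    ν (closingWeights S₁ f x) * ν (closingWeights S₂ f y) ≤
      ν (closingWeights (S₁ ∩ S₂) f (x ⊔ y)) * ν (closingWeights N f (x ⊓ y)) := by
  have inter_subset : closingWeights S₁ f x ∩ closingWeights S₂ f y ⊆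
      closingWeights (S₁ ∩ S₂) f (x ⊔ y) := by
    rintro z ⟨hx, hy⟩
    refine edgeClosure_mono (fun e he => ?_) (hN.mem_edgeClosure_inter
      ((Finset.filter_subset _ _).trans h₁) ((Finset.filter_subset _ _).trans h₂) hx hy)
    simp only [Finset.mem_inter, Finset.mem_filter] at he ⊢
    exact ⟨⟨he.1.1, he.2.1⟩, max_lt he.1.2 he.2.2⟩
  have left_subset : closingWeights S₁ f x ⊆ closingWeights N f (x ⊓ y) :=
    (closingWeights_mono h₁).trans (closingWeights_anti fun e _ => min_le_left _ _)
  have right_subset : closingWeights S₂ f y ⊆ closingWeights N f (x ⊓ y) :=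
    (closingWeights_mono h₂).trans (closingWeights_anti fun e _ => min_le_right _ _)
  rcases (isUpperSet_closingWeights (S := S₁) (f := f) (w := x)).total
    (isUpperSet_closingWeights (S := S₂) (f := f) (w := y)) with h | h
  · exact mul_le_mul' (measure_mono ((Set.subset_inter subset_rfl h).trans inter_subset))
      (measure_mono right_subset)
  · rw [mul_comm]
    exact mul_le_mul' (measure_mono ((Set.subset_inter h subset_rfl).trans inter_subset))
      (measure_mono left_subset)

theorem closingWeights_eq_of_subset (hS : EdgeIndep S) (h : R ⊆ S) (hf : f ∈ edgeClosure R) :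
    closingWeights S f w = closingWeights R f w := by
  refine Set.Subset.antisymm (fun z hz => ?_) (closingWeights_mono h)
  have hz' : f ∈ edgeClosure {e ∈ S | w e < z} := hz
  refine edgeClosure_mono (fun e he => ?_)
    (hS.mem_edgeClosure_inter (Finset.filter_subset _ _) h hz' hf)
  simp only [Finset.mem_inter, Finset.mem_filter] at he ⊢
  exact ⟨he.2, he.1.2⟩

variable [Fintype V]

/-- The chords of `S`: the edges outside `S` that close a cycle with edges of `S`. -/
def chords (S : Finset (Sym2 V)) : Finset (Sym2 V) :=
  {f | ¬f.IsDiag ∧ f ∈ edgeClosure S ∧ f ∉ S}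

/-- The probability, when the edges of `S` have weights `w` and the other edges independent
weights of law `ν`, that every chord of `S` is heavier than all the edges of the cycle it closes. -/
def survival (ν : Measure ℝ) (S : Finset (Sym2 V)) (w : Sym2 V → ℝ) : ENNReal :=
  ∏ f ∈ chords S, ν (closingWeights S f w)

/-- The integral of `survival ν S` when the edges of `S` have independent weights of law `ν'`. For
a spanning tree `S` of the complete graph and `ν' = ν` this is the probability that `S` is the
minimum spanning tree; the cut recursion needs restrictions of `ν` to half-lines as `ν'`. -/
def forestProb (ν ν' : Measure ℝ) (S : Finset (Sym2 V)) : ENNReal :=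
  (∫⋯∫⁻_S, survival ν S ∂fun _ => ν') 0

theorem mem_chords : f ∈ chords S ↔ ¬f.IsDiag ∧ f ∈ edgeClosure S ∧ f ∉ S := by
  simp [chords]

theorem chords_subset_chords (hS : EdgeIndep S) (h : R ⊆ S) : chords R ⊆ chords S := by
  intro f hf
  rw [mem_chords] at hf ⊢
  refine ⟨hf.1, edgeClosure_mono h hf.2.1, fun hfS => hS f hfS ?_⟩
  exact edgeClosure_mono (Finset.subset_erase.2 ⟨h, hf.2.2⟩) hf.2.1

theorem chords_inter (hS : EdgeIndep S) (h₁ : S₁ ⊆ S) (h₂ : S₂ ⊆ S) :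
    chords (S₁ ∩ S₂) = chords S₁ ∩ chords S₂ := by
  refine (Finset.subset_inter (chords_subset_chords (hS.mono h₁) Finset.inter_subset_left)
    (chords_subset_chords (hS.mono h₂) Finset.inter_subset_right)).antisymm fun f hf => ?_
  simp only [Finset.mem_inter, mem_chords] at hf ⊢
  exact ⟨hf.1.1, hS.mem_edgeClosure_inter h₁ h₂ hf.1.2.1 hf.2.2.1, fun h => hf.1.2.2 h.1⟩

theorem dependsOn_survival : DependsOn (survival ν S) S :=
  fun _ _ h => Finset.prod_congr rfl fun _ _ => by rw [closingWeights_congr h]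

theorem measurable_survival [SFinite ν] : Measurable (survival ν S) :=
  Finset.measurable_prod _ fun f _ =>
    measurable_measure_prodMk_left (measurableSet_closingWeights S f)

theorem forestProb_eq_lmarginal (x : Sym2 V → ℝ) :
    forestProb ν ν' S = (∫⋯∫⁻_S, survival ν S ∂fun _ => ν') x :=
  lmarginal_eq_of_dependsOn dependsOn_survival _ _

theorem survival_lt_top [IsFiniteMeasure ν] : survival ν S w < ⊤ :=
  ENNReal.prod_lt_top fun _ _ => measure_lt_top _ _

theorem survival_le : survival ν S w ≤ ν Set.univ ^ (chords S).card :=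
  Finset.prod_le_pow_card _ _ _ fun _ _ => measure_mono (Set.subset_univ _)

theorem forestProb_le [SigmaFinite ν'] :
    forestProb ν ν' S ≤ ν Set.univ ^ (chords S).card * ν' Set.univ ^ S.card :=
  calc forestProb ν ν' S
      ≤ (∫⋯∫⁻_S, fun _ => ν Set.univ ^ (chords S).card ∂fun _ => ν') 0 :=
        lmarginal_mono (fun _ => survival_le) 0
    _ = _ := by rw [lmarginal_const, Finset.prod_const]

theorem forestProb_lt_top [IsFiniteMeasure ν] [IsFiniteMeasure ν'] : forestProb ν ν' S < ⊤ :=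
  forestProb_le.trans_lt (ENNReal.mul_lt_top (ENNReal.pow_lt_top (measure_lt_top _ _))
    (ENNReal.pow_lt_top (measure_lt_top _ _)))

theorem survival_eq_of_lt (hS : EdgeIndep S) (he : e ∈ S) (hw : ∀ e' ∈ S.erase e, w e' < w e) :
    survival ν S w =
      ν (Set.Ioi (w e)) ^ (chords S \ chords (S.erase e)).card * survival ν (S.erase e) w := by
  have le_max (e' : Sym2 V) (he' : e' ∈ S) : w e' ≤ w e := by
    rcases eq_or_ne e' e with rfl | hne
    · rfl
    · exact (hw e' (Finset.mem_erase.2 ⟨hne, he'⟩)).le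
  have light_subset {z : ℝ} (hz : z ≤ w e) : {e' ∈ S | w e' < z} ⊆ S.erase e := by
    intro e' he'
    rw [Finset.mem_filter] at he'
    exact Finset.mem_erase.2 ⟨fun h => (he'.2.trans_le hz).ne (by rw [h]), he'.1⟩
  have cross (f : Sym2 V) (hf : f ∈ chords S \ chords (S.erase e)) :
      closingWeights S f w = Set.Ioi (w e) := by
    rw [Finset.mem_sdiff, mem_chords, mem_chords] at hf
    refine Set.Subset.antisymm (fun z hz => Set.mem_Ioi.2 <| lt_of_not_ge fun hze =>
      hf.2 ⟨hf.1.1, ?_, ?_⟩) (Ioi_subset_closingWeights hf.1.2.1 le_max)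
    · exact edgeClosure_mono (light_subset hze) hz
    · exact fun h => hf.1.2.2 (Finset.mem_of_mem_erase h)
  rw [survival, survival, ← Finset.prod_sdiff (chords_subset_chords hS (S.erase_subset e)),
    Finset.prod_congr rfl fun f hf => by rw [cross f hf], Finset.prod_const,
    Finset.prod_congr rfl fun f hf => by
      rw [closingWeights_eq_of_subset hS (S.erase_subset e) (mem_chords.1 hf).2.1]]

end Survival

section CutRecursion

variable {ν ν' : Measure ℝ} {S : Finset (Sym2 V)} {e : Sym2 V}

theorem measurableSet_forall_lt (R : Finset (Sym2 V)) (e : Sym2 V) :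
    MeasurableSet {w : Sym2 V → ℝ | ∀ e' ∈ R, w e' < w e} := by
  simp only [Set.ofPred_forall]
  exact R.measurableSet_biInter fun e' _ =>
    measurableSet_lt (measurable_pi_apply e') (measurable_pi_apply e)

theorem sum_indicator_heaviest (hS : S.Nonempty) {w : Sym2 V → ℝ} (hw : Set.InjOn w S)
    (g : (Sym2 V → ℝ) → ENNReal) :
    ∑ e ∈ S, {w | ∀ e' ∈ S.erase e, w e' < w e}.indicator g w = g w := by
  obtain ⟨e, he, hmax⟩ := S.exists_max_image w hS
  rw [Finset.sum_eq_single_of_mem e he, Set.indicator_of_mem]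
  · refine fun e' he' => (hmax e' (Finset.mem_of_mem_erase he')).lt_of_ne fun h => ?_
    exact Finset.ne_of_mem_erase he' (hw (Finset.mem_of_mem_erase he') he h)
  · refine fun e' he' hne => Set.indicator_of_notMem (fun h => ?_) _
    exact (hmax e' he').not_gt (h e (Finset.mem_erase.2 ⟨hne.symm, he⟩))

variable [Fintype V]

/-- The part of `forestProb ν ν' S` coming from the weights for which `e` is the heaviest edge of
`S`: given the weight of `e`, the chords that `e` alone separates must be heavier than `e`, and the
rest concerns the forest `S.erase e` with its weights conditioned to be smaller than that of `e`. -/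
def cutTerm (ν ν' : Measure ℝ) (S : Finset (Sym2 V)) (e : Sym2 V) : ENNReal :=
  ∫⁻ t, ν (Set.Ioi t) ^ (chords S \ chords (S.erase e)).card *
    forestProb ν (ν'.restrict (Set.Iio t)) (S.erase e) ∂ν'

theorem lmarginal_indicator_heaviest [SFinite ν] [SigmaFinite ν'] (hS : EdgeIndep S)
    (he : e ∈ S) :
    (∫⋯∫⁻_S, {w | ∀ e' ∈ S.erase e, w e' < w e}.indicator (survival ν S) ∂fun _ => ν') 0 =
      cutTerm ν ν' S e := by
  rw [lmarginal_erase _ (measurable_survival.indicator (measurableSet_forall_lt _ _)) he]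
  refine lintegral_congr fun t => ?_
  have slice (y : S.erase e → ℝ) :
      {w | ∀ e' ∈ S.erase e, w e' < w e}.indicator (survival ν S)
        (Function.updateFinset (Function.update (0 : Sym2 V → ℝ) e t) (S.erase e) y) =
      ν (Set.Ioi t) ^ (chords S \ chords (S.erase e)).card *
        {w | ∀ e' ∈ S.erase e, w e' ∈ Set.Iio t}.indicator (survival ν (S.erase e))
          (Function.updateFinset (Function.update (0 : Sym2 V → ℝ) e t) (S.erase e) y) := by
    set w : Sym2 V → ℝ := Function.updateFinset (Function.update (0 : Sym2 V → ℝ) e t) (S.erase e) y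
    have hwe : w e = t := by simp [w, Function.updateFinset]
    by_cases h : ∀ e' ∈ S.erase e, w e' < w e
    · have h' : ∀ e' ∈ S.erase e, w e' ∈ Set.Iio t := fun e' he' => hwe ▸ h e' he'
      rw [Set.indicator_of_mem (by exact h), Set.indicator_of_mem (by exact h'),
        survival_eq_of_lt hS he h, hwe]
    · have h' : ¬∀ e' ∈ S.erase e, w e' ∈ Set.Iio t := fun h' => h fun e' he' => hwe ▸ h' e' he'
      rw [Set.indicator_of_notMem (by exact h), Set.indicator_of_notMem (by exact h'), mul_zero]
  have hmeas : MeasurableSet {w : Sym2 V → ℝ | ∀ e' ∈ S.erase e, w e' ∈ Set.Iio t} := by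
    simp only [Set.ofPred_forall]
    exact (S.erase e).measurableSet_biInter fun e' _ => measurable_pi_apply e' measurableSet_Iio
  rw [forestProb_eq_lmarginal (Function.update (0 : Sym2 V → ℝ) e t),
    lmarginal_restrict fun _ => measurableSet_Iio,
    ← lmarginal_const_mul _ (measurable_survival.indicator hmeas)]
  exact lintegral_congr slice

theorem forestProb_eq_sum_cutTerm [SFinite ν] [SigmaFinite ν'] [NullSingletonClass ν']
    (hS : EdgeIndep S) (hne : S.Nonempty) :
    forestProb ν ν' S = ∑ e ∈ S, cutTerm ν ν' S e := by
  have hmeas (e : Sym2 V) : Measurable fun y : S → ℝ =>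
      {w | ∀ e' ∈ S.erase e, w e' < w e}.indicator (survival ν S)
        (Function.updateFinset 0 S y) :=
    (measurable_survival.indicator (measurableSet_forall_lt _ _)).comp measurable_updateFinset
  rw [Finset.sum_congr rfl fun e he => (lmarginal_indicator_heaviest hS he).symm]
  simp only [lmarginal, forestProb]
  rw [← lintegral_finsetSum _ fun e _ => hmeas e]
  refine lintegral_congr_ae ((ae_injective_pi _).mono fun y hy => ?_)
  refine (sum_indicator_heaviest hne (fun a ha b hb hab => ?_) _).symm
  have hyab : y ⟨a, ha⟩ = y ⟨b, hb⟩ := by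
    simpa [Function.updateFinset, Finset.mem_coe.1 ha, Finset.mem_coe.1 hb] using hab
  exact congrArg Subtype.val (hy hyab)

end CutRecursion

section Supermodular

variable [Fintype V] {ν ν' : Measure ℝ} {S S₁ S₂ : Finset (Sym2 V)} {c : ENNReal}

theorem isDiag_of_mem_edgeClosure_empty {V : Type*} {f : Sym2 V} (hf : f ∈ edgeClosure ∅) :
    f.IsDiag := by
  obtain ⟨x, y⟩ := f
  exact edgeClosure_induction (P := (x = ·)) (by simp) hf rfl

theorem exists_Ioi_subset_closingWeights {f : Sym2 V} (hf : f ∈ chords S) (w : Sym2 V → ℝ) :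
    ∃ e ∈ S, Set.Ioi (w e) ⊆ closingWeights S f w := by
  have hne : S.Nonempty := Finset.nonempty_iff_ne_empty.2 <| by
    rintro rfl
    exact (mem_chords.1 hf).1 (isDiag_of_mem_edgeClosure_empty (mem_chords.1 hf).2.1)
  obtain ⟨e, he, hmax⟩ := S.exists_max_image w hne
  exact ⟨e, he, Ioi_subset_closingWeights (mem_chords.1 hf).2.1 hmax⟩

theorem survival_eq_prod_ite (h : chords S₁ ⊆ chords S) (w : Sym2 V → ℝ) :
    survival ν S₁ w =
      ∏ f ∈ chords S, if f ∈ chords S₁ then ν (closingWeights S₁ f w) else 1 := by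
  rw [Finset.prod_ite_mem, Finset.inter_eq_right.2 h, survival]

theorem survival_mul_survival_le (hS : EdgeIndep (S₁ ∪ S₂)) {x y : Sym2 V → ℝ}
    (hx : ∀ e ∈ S₁ ∪ S₂, c ≤ ν (Set.Ioi (x e))) :
    survival ν S₁ x *
        (c ^ (chords (S₁ ∪ S₂) \ (chords S₁ ∪ chords S₂)).card * survival ν S₂ y) ≤
      survival ν (S₁ ∩ S₂) (x ⊔ y) * survival ν (S₁ ∪ S₂) (x ⊓ y) := by
  have h₁ := Finset.subset_union_left (s₁ := S₁) (s₂ := S₂)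
  have h₂ := Finset.subset_union_right (s₁ := S₁) (s₂ := S₂)
  have cross : c ^ (chords (S₁ ∪ S₂) \ (chords S₁ ∪ chords S₂)).card =
      ∏ f ∈ chords (S₁ ∪ S₂), if f ∈ chords S₁ ∪ chords S₂ then 1 else c := by
    simp_rw [← ite_not (_ ∈ _), ← Finset.prod_filter, Finset.filter_notMem_eq_sdiff,
      Finset.prod_const]
  have hxy : ∀ e ∈ S₁ ∪ S₂, c ≤ ν (Set.Ioi ((x ⊓ y) e)) := fun e he =>
    (hx e he).trans (measure_mono (Set.Ioi_subset_Ioi (min_le_left _ _)))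
  rw [survival_eq_prod_ite (chords_subset_chords hS h₁),
    survival_eq_prod_ite (chords_subset_chords hS h₂), cross,
    survival_eq_prod_ite (chords_subset_chords hS (Finset.inter_subset_left.trans h₁)),
    survival, ← Finset.prod_mul_distrib, ← Finset.prod_mul_distrib, ← Finset.prod_mul_distrib]
  refine Finset.prod_le_prod' fun f hf => ?_
  by_cases hf₁ : f ∈ chords S₁ <;> by_cases hf₂ : f ∈ chords S₂ <;>
    simp only [chords_inter hS h₁ h₂, Finset.mem_inter, Finset.mem_union, hf₁, hf₂, if_true,
      if_false, one_mul, mul_one, or_true, true_or, or_self, and_true, and_false, and_self]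
  · exact measure_closingWeights_mul_le_of_edgeIndep hS h₁ h₂
  · exact measure_mono ((closingWeights_mono h₁).trans
      (closingWeights_anti fun e _ => min_le_left _ _))
  · exact measure_mono ((closingWeights_mono h₂).trans
      (closingWeights_anti fun e _ => min_le_right _ _))
  · obtain ⟨e, he, hsub⟩ := exists_Ioi_subset_closingWeights hf (x ⊓ y)
    exact (hxy e he).trans (measure_mono hsub)

theorem forestProb_zero_of_nonempty (hS : S.Nonempty) : forestProb ν 0 S = 0 := by
  simpa [hS.ne_empty] using forestProb_le (ν := ν) (ν' := 0) (S := S)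

theorem forestProb_logSupermodular [IsFiniteMeasure ν] [IsFiniteMeasure ν']
    (hS : EdgeIndep (S₁ ∪ S₂)) (hc : ∀ᵐ t ∂ν', c ≤ ν (Set.Ioi t)) :
    c ^ (chords (S₁ ∪ S₂) \ (chords S₁ ∪ chords S₂)).card *
        (forestProb ν ν' S₁ * forestProb ν ν' S₂) ≤
      forestProb ν ν' (S₁ ∩ S₂) * forestProb ν ν' (S₁ ∪ S₂) := by
  set n := (chords (S₁ ∪ S₂) \ (chords S₁ ∪ chords S₂)).card with hn
  have extend {R : Finset (Sym2 V)} (hR : R ⊆ S₁ ∪ S₂) :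
      (∫⋯∫⁻_S₁ ∪ S₂, survival ν R ∂fun _ => ν') 0 =
        forestProb ν ν' R * ν' Set.univ ^ ((S₁ ∪ S₂) \ R).card := by
    rw [lmarginal_eq_mul_prod_sdiff measurable_survival dependsOn_survival hR, Finset.prod_const,
      forestProb]
  have four := lmarginal_four_functions (μ := fun _ : Sym2 V => ν') (fun _ => hc)
    (N := (↑(S₁ ∪ S₂) : Set (Sym2 V))) (f₁ := survival ν S₁)
    (f₂ := fun y => c ^ n * survival ν S₂ y) (f₃ := survival ν (S₁ ∩ S₂))
    (f₄ := survival ν (S₁ ∪ S₂)) measurable_survival (measurable_survival.const_mul _)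
    measurable_survival measurable_survival
    (fun x y hx _ => survival_mul_survival_le hS hx) (S₁ ∪ S₂) (x := 0) (y := 0)
    (by simp) (by simp)
  rw [lmarginal_const_mul _ measurable_survival, sup_idem, inf_idem,
    extend Finset.subset_union_left, extend Finset.subset_union_right,
    extend (Finset.inter_subset_left.trans Finset.subset_union_left), ← forestProb] at four
  have card_eq : ((S₁ ∪ S₂) \ (S₁ ∩ S₂)).card =
      ((S₁ ∪ S₂) \ S₁).card + ((S₁ ∪ S₂) \ S₂).card := by
    rw [show _ \ (_ ∩ _) = _ from sdiff_inf, Finset.sup_eq_union, Finset.card_union_of_disjoint]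
    grind [Finset.disjoint_left]
  set k := ((S₁ ∪ S₂) \ (S₁ ∩ S₂)).card with hk
  by_cases hM : ν' Set.univ ^ k = 0
  · obtain ⟨hM₀, hk₀⟩ := pow_eq_zero_iff'.1 hM
    obtain rfl := Measure.measure_univ_eq_zero.1 hM₀
    rcases S₁.eq_empty_or_nonempty with rfl | h₁
    · have h₂ : S₂.Nonempty := Finset.nonempty_iff_ne_empty.2 fun h => hk₀ (by simp [hk, h])
      simp [forestProb_zero_of_nonempty h₂]
    · simp [forestProb_zero_of_nonempty h₁]
  · refine (ENNReal.mul_le_mul_iff_left hM (ENNReal.pow_ne_top (measure_ne_top _ _))).1 ?_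
    calc _ = forestProb ν ν' S₁ * ν' Set.univ ^ ((S₁ ∪ S₂) \ S₁).card *
          (c ^ n * (forestProb ν ν' S₂ * ν' Set.univ ^ ((S₁ ∪ S₂) \ S₂).card)) := by
          rw [card_eq, pow_add]; ring
      _ ≤ _ := four
      _ = _ := by ring

theorem chords_empty : chords (∅ : Finset (Sym2 V)) = ∅ :=
  Finset.eq_empty_of_forall_notMem fun _ hf =>
    (mem_chords.1 hf).1 (isDiag_of_mem_edgeClosure_empty (mem_chords.1 hf).2.1)

theorem forestProb_empty : forestProb ν ν' (∅ : Finset (Sym2 V)) = 1 := by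
  simp [forestProb, survival, chords_empty, lmarginal]

theorem disjoint_chords (hS : EdgeIndep (S₁ ∪ S₂)) (h : Disjoint S₁ S₂) :
    Disjoint (chords S₁) (chords S₂) := by
  rw [Finset.disjoint_iff_inter_eq_empty,
    ← chords_inter hS Finset.subset_union_left Finset.subset_union_right,
    Finset.disjoint_iff_inter_eq_empty.1 h, chords_empty]

theorem survival_union (hS : EdgeIndep (S₁ ∪ S₂)) (hd : Disjoint S₁ S₂) (w : Sym2 V → ℝ) :
    survival ν (S₁ ∪ S₂) w =
      (∏ f ∈ chords (S₁ ∪ S₂) \ (chords S₁ ∪ chords S₂), ν (closingWeights (S₁ ∪ S₂) f w)) *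
        (survival ν S₁ w * survival ν S₂ w) := by
  have h₁ := Finset.subset_union_left (s₁ := S₁) (s₂ := S₂)
  have h₂ := Finset.subset_union_right (s₁ := S₁) (s₂ := S₂)
  have inside {R : Finset (Sym2 V)} (hR : R ⊆ S₁ ∪ S₂) :
      survival ν R w = ∏ f ∈ chords R, ν (closingWeights (S₁ ∪ S₂) f w) :=
    Finset.prod_congr rfl fun f hf => by
      rw [closingWeights_eq_of_subset hS hR (mem_chords.1 hf).2.1]
  rw [inside h₁, inside h₂, ← Finset.prod_union (disjoint_chords hS hd), Finset.prod_sdiff,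
    survival]
  exact Finset.union_subset (chords_subset_chords hS h₁) (chords_subset_chords hS h₂)

theorem forestProb_mul_forestProb [SFinite ν] [SigmaFinite ν'] (hd : Disjoint S₁ S₂) :
    forestProb ν ν' S₁ * forestProb ν ν' S₂ =
      (∫⋯∫⁻_S₁ ∪ S₂, fun w => survival ν S₁ w * survival ν S₂ w ∂fun _ => ν') 0 :=
  (lmarginal_mul_of_disjoint measurable_survival measurable_survival dependsOn_survival
    dependsOn_survival hd 0).symm

theorem forestProb_union_of_chords [SFinite ν] [SigmaFinite ν'] (hS : EdgeIndep (S₁ ∪ S₂))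
    (hd : Disjoint S₁ S₂) (h : chords (S₁ ∪ S₂) = chords S₁ ∪ chords S₂) :
    forestProb ν ν' (S₁ ∪ S₂) = forestProb ν ν' S₁ * forestProb ν ν' S₂ := by
  rw [forestProb_mul_forestProb hd, forestProb]
  congr 2
  ext w
  rw [survival_union hS hd, h, Finset.sdiff_self, Finset.prod_empty, one_mul]

theorem pow_card_mul_survival_mul_survival_lt [IsFiniteMeasure ν] (hS : EdgeIndep (S₁ ∪ S₂))
    (hd : Disjoint S₁ S₂) (hne : (chords (S₁ ∪ S₂) \ (chords S₁ ∪ chords S₂)).Nonempty)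
    {w : Sym2 V → ℝ} (hw : ∀ e ∈ S₁ ∪ S₂, c < ν (Set.Ioi (w e))) :
    c ^ (chords (S₁ ∪ S₂) \ (chords S₁ ∪ chords S₂)).card * (survival ν S₁ w * survival ν S₂ w) <
      survival ν (S₁ ∪ S₂) w := by
  have lt_closing {R : Finset (Sym2 V)} (hR : R ⊆ S₁ ∪ S₂) {f : Sym2 V} (hf : f ∈ chords R) :
      c < ν (closingWeights R f w) := by
    obtain ⟨e, he, hsub⟩ := exists_Ioi_subset_closingWeights hf w
    exact (hw e (hR he)).trans_le (measure_mono hsub)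
  have survival_ne_zero {R : Finset (Sym2 V)} (hR : R ⊆ S₁ ∪ S₂) : survival ν R w ≠ 0 :=
    Finset.prod_ne_zero_iff.2 fun f hf => (bot_le.trans_lt (lt_closing hR hf)).ne'
  obtain ⟨f₀, hf₀, hmin⟩ := Finset.exists_min_image _
    (fun f => ν (closingWeights (S₁ ∪ S₂) f w)) hne
  rw [survival_union hS hd]
  refine ENNReal.mul_lt_mul_left (mul_ne_zero (survival_ne_zero Finset.subset_union_left)
    (survival_ne_zero Finset.subset_union_right))
    (ENNReal.mul_lt_top survival_lt_top survival_lt_top).ne ?_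
  calc c ^ (chords (S₁ ∪ S₂) \ (chords S₁ ∪ chords S₂)).card
      < ν (closingWeights (S₁ ∪ S₂) f₀ w) ^
          (chords (S₁ ∪ S₂) \ (chords S₁ ∪ chords S₂)).card :=
        ENNReal.pow_lt_pow_left (Finset.card_ne_zero.2 hne)
          (lt_closing subset_rfl (Finset.mem_sdiff.1 hf₀).1)
    _ ≤ _ := Finset.pow_card_le_prod _ _ _ hmin

theorem pow_card_mul_forestProb_mul_forestProb_lt [IsFiniteMeasure ν] [IsFiniteMeasure ν']
    (hν' : ν' ≠ 0) (hS : EdgeIndep (S₁ ∪ S₂)) (hd : Disjoint S₁ S₂)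
    (hc : ∀ᵐ t ∂ν', c < ν (Set.Ioi t))
    (hne : (chords (S₁ ∪ S₂) \ (chords S₁ ∪ chords S₂)).Nonempty) :
    c ^ (chords (S₁ ∪ S₂) \ (chords S₁ ∪ chords S₂)).card *
        (forestProb ν ν' S₁ * forestProb ν ν' S₂) <
      forestProb ν ν' (S₁ ∪ S₂) := by
  have ae_lt : ∀ᵐ y ∂Measure.pi (fun _ : ↥(S₁ ∪ S₂) => ν'), ∀ e, c < ν (Set.Ioi (y e)) :=
    Filter.eventually_all.2 fun e =>
      (Measure.tendsto_eval_ae_ae (μ := fun _ => ν')).eventually hc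
  have ne_zero : Measure.pi (fun _ : ↥(S₁ ∪ S₂) => ν') ≠ 0 := by
    rw [ne_eq, ← Measure.measure_univ_eq_zero, Measure.pi_univ, Finset.prod_eq_zero_iff]
    simp [hν']
  rw [forestProb_mul_forestProb hd, ← lmarginal_const_mul (f := fun w => _ * _) _
    (measurable_survival.mul measurable_survival)]
  have lt_ae := ae_lt.mono fun y hy => pow_card_mul_survival_mul_survival_lt hS hd hne
    (w := Function.updateFinset 0 (S₁ ∪ S₂) y) fun e he => by
      simpa [Function.updateFinset, Finset.mem_union.1 he] using hy ⟨e, he⟩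
  refine lintegral_strict_mono ne_zero
    (measurable_survival.comp measurable_updateFinset).aemeasurable (ne_of_lt ?_) lt_ae
  exact (lintegral_mono_ae (lt_ae.mono fun y hy => hy.le)).trans_lt forestProb_lt_top

end Supermodular

section Trees

variable {A A₁ A₂ : Finset V} {R S S₁ S₂ R₁ R₂ : Finset (Sym2 V)} {e f : Sym2 V} {u v x y : V}

theorem EdgeIndep.insert (hS : EdgeIndep S) (hf : f ∉ edgeClosure S) :
    EdgeIndep (insert f S) := by
  obtain ⟨x, y⟩ := f
  have hxy : x ≠ y := fun h => hf (mem_edgeClosure_of_isDiag (by simpa using h))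
  have hgraph : spanGraph (Insert.insert s(x, y) S) = spanGraph S ⊔ edge x y := by
    ext a b
    simp only [spanGraph_adj, sup_adj, edge_adj, Finset.mem_insert, Sym2.eq_iff]
    tauto
  rw [edgeIndep_iff] at hS ⊢
  refine ⟨fun e he => ?_, ?_⟩
  · rcases Finset.mem_insert.1 he with rfl | he
    · simpa using hxy
    · exact hS.1 e he
  · rw [hgraph, isAcyclic_add_edge_iff_of_not_reachable x y fun h => hf (mk_mem_edgeClosure.2 h)]
    exact hS.2

theorem mem_and_mem_edgeClosure_of_union {B : Set V} (h₁ : ∀ e ∈ R₁, ∀ x ∈ e, x ∈ B)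
    (h₂ : ∀ e ∈ R₂, ∀ x ∈ e, x ∉ B) (h : s(x, y) ∈ edgeClosure (R₁ ∪ R₂)) (hx : x ∈ B) :
    y ∈ B ∧ s(x, y) ∈ edgeClosure R₁ := by
  refine edgeClosure_induction (P := fun z => z ∈ B ∧ s(x, z) ∈ edgeClosure R₁)
    (fun a b hab ha => ?_) h ⟨hx, mem_edgeClosure_of_isDiag (by simp)⟩
  rcases Finset.mem_union.1 hab with hab | hab
  · exact ⟨h₁ _ hab b (by simp), mk_mem_edgeClosure_trans ha.2 (mem_edgeClosure_of_mem hab)⟩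
  · exact absurd ha.1 (h₂ _ hab a (by simp))

theorem mem_edgeClosure_union {B : Set V} (h₁ : ∀ e ∈ R₁, ∀ x ∈ e, x ∈ B)
    (h₂ : ∀ e ∈ R₂, ∀ x ∈ e, x ∉ B) :
    f ∈ edgeClosure (R₁ ∪ R₂) ↔ f ∈ edgeClosure R₁ ∨ f ∈ edgeClosure R₂ := by
  refine ⟨fun h => ?_, fun h => h.elim (fun h => edgeClosure_mono Finset.subset_union_left h)
    fun h => edgeClosure_mono Finset.subset_union_right h⟩
  obtain ⟨x, y⟩ := f
  by_cases hx : x ∈ B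
  · exact .inl (mem_and_mem_edgeClosure_of_union h₁ h₂ h hx).2
  · rw [Finset.union_comm] at h
    exact .inr (mem_and_mem_edgeClosure_of_union (B := Bᶜ) h₂ (by simpa using h₁) h hx).2

theorem EdgeIndep.union {B : Set V} (hS₁ : EdgeIndep S₁) (hS₂ : EdgeIndep S₂)
    (h₁ : ∀ e ∈ S₁, ∀ x ∈ e, x ∈ B) (h₂ : ∀ e ∈ S₂, ∀ x ∈ e, x ∉ B) : EdgeIndep (S₁ ∪ S₂) := by
  rintro ⟨a, b⟩ he hcl
  rw [Finset.erase_union_distrib] at hcl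
  have h₁' : ∀ e ∈ S₁.erase s(a, b), ∀ x ∈ e, x ∈ B := fun e he => h₁ e (Finset.mem_of_mem_erase he)
  have h₂' : ∀ e ∈ S₂.erase s(a, b), ∀ x ∈ e, x ∉ B := fun e he => h₂ e (Finset.mem_of_mem_erase he)
  rcases Finset.mem_union.1 he with he | he
  · exact hS₁ _ he (mem_and_mem_edgeClosure_of_union h₁' h₂' hcl (h₁ _ he a (by simp))).2
  · rw [Finset.union_comm] at hcl
    exact hS₂ _ he (mem_and_mem_edgeClosure_of_union (B := Bᶜ) h₂' (by simpa using h₁') hcl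
      (h₂ _ he a (by simp))).2

/-- `S` is the edge set of a tree with vertex set `A`. -/
structure IsTreeOn (A : Finset V) (S : Finset (Sym2 V)) : Prop where
  nonempty : A.Nonempty
  indep : EdgeIndep S
  mem : ∀ e ∈ S, ∀ x ∈ e, x ∈ A
  conn : ∀ x ∈ A, ∀ y ∈ A, s(x, y) ∈ edgeClosure S

/-- Deleting the edge `e` cuts the tree `S` into the trees `S₁`, on `A₁`, and `S₂`, on `A₂`. -/
structure IsSplit (S : Finset (Sym2 V)) (e : Sym2 V) (A₁ : Finset V) (S₁ : Finset (Sym2 V))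
    (A₂ : Finset V) (S₂ : Finset (Sym2 V)) : Prop where
  left : IsTreeOn A₁ S₁
  right : IsTreeOn A₂ S₂
  disjoint : Disjoint A₁ A₂
  eq_insert : S = insert e (S₁ ∪ S₂)
  joins : ∃ u ∈ A₁, ∃ v ∈ A₂, e = s(u, v)

theorem isTreeOn_singleton (x : V) : IsTreeOn {x} ∅ where
  nonempty := Finset.singleton_nonempty x
  indep := by simp [EdgeIndep]
  mem := by simp
  conn := by simpa using mem_edgeClosure_of_isDiag (by simp)

theorem IsTreeOn.eq_singleton (h : IsTreeOn A ∅) (hx : x ∈ A) : A = {x} :=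
  Finset.eq_singleton_iff_unique_mem.2 ⟨hx, fun y hy => by
    simpa using isDiag_of_mem_edgeClosure_empty (h.conn y hy x hx)⟩

namespace IsSplit

variable (h : IsSplit S e A₁ S₁ A₂ S₂)
include h

theorem symm : IsSplit S e A₂ S₂ A₁ S₁ where
  left := h.right
  right := h.left
  disjoint := h.disjoint.symm
  eq_insert := by rw [Finset.union_comm, h.eq_insert]
  joins := by
    obtain ⟨u, hu, v, hv, he⟩ := h.joins
    exact ⟨v, hv, u, hu, he.trans Sym2.eq_swap⟩

theorem mk_notMem_edgeClosure (hu : u ∈ A₁) (hv : v ∈ A₂) : s(u, v) ∉ edgeClosure (S₁ ∪ S₂) :=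
  fun hcl => Finset.disjoint_left.1 h.disjoint (mem_and_mem_edgeClosure_of_union (B := A₁)
    h.left.mem (fun e' he' x hx => Finset.disjoint_right.1 h.disjoint (h.right.mem e' he' x hx))
    hcl hu).1 hv

theorem notMem_edgeClosure : e ∉ edgeClosure (S₁ ∪ S₂) := by
  obtain ⟨u, hu, v, hv, rfl⟩ := h.joins
  exact h.mk_notMem_edgeClosure hu hv

theorem notMem : e ∉ S₁ ∪ S₂ :=
  fun he => h.notMem_edgeClosure (mem_edgeClosure_of_mem he)

theorem mem : e ∈ S :=
  h.eq_insert ▸ Finset.mem_insert_self e _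

theorem erase_eq : S.erase e = S₁ ∪ S₂ := by
  rw [h.eq_insert, Finset.erase_insert h.notMem]

theorem notMem_right_of_mem_left : ∀ e' ∈ S₁, ∀ x ∈ e', x ∉ A₂ :=
  fun e' he' x hx => Finset.disjoint_left.1 h.disjoint (h.left.mem e' he' x hx)

theorem disjoint_edges : Disjoint S₁ S₂ := by
  refine Finset.disjoint_left.2 fun e' h₁ h₂ => ?_
  obtain ⟨x, y⟩ := e'
  exact h.notMem_right_of_mem_left _ h₁ x (by simp) (h.right.mem _ h₂ x (by simp))

theorem card_eq : S.card = S₁.card + S₂.card + 1 := by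
  rw [h.eq_insert, Finset.card_insert_of_notMem h.notMem,
    Finset.card_union_of_disjoint h.disjoint_edges]

theorem mem_edgeClosure_union_iff :
    f ∈ edgeClosure (S₁ ∪ S₂) ↔ f ∈ edgeClosure S₁ ∨ f ∈ edgeClosure S₂ :=
  mem_edgeClosure_union (B := A₁) h.left.mem h.symm.notMem_right_of_mem_left

theorem isTreeOn : IsTreeOn (A₁ ∪ A₂) S where
  nonempty := h.left.nonempty.mono Finset.subset_union_left
  indep := h.eq_insert ▸ (h.left.indep.union (B := A₁) h.right.indep h.left.mem
    h.symm.notMem_right_of_mem_left).insert h.notMem_edgeClosure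
  mem e' he' x hx := by
    obtain ⟨u, hu, v, hv, h_eq⟩ := h.joins
    rw [h.eq_insert, Finset.mem_insert, Finset.mem_union] at he'
    rw [Finset.mem_union]
    rcases he' with rfl | he' | he'
    · rw [h_eq, Sym2.mem_iff] at hx
      rcases hx with rfl | rfl
      exacts [.inl hu, .inr hv]
    · exact .inl (h.left.mem e' he' x hx)
    · exact .inr (h.right.mem e' he' x hx)
  conn := by
    obtain ⟨u, hu, v, hv, he⟩ := h.joins
    have from_u : ∀ x ∈ A₁ ∪ A₂, s(u, x) ∈ edgeClosure S := by
      intro x hx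
      have huv : s(u, v) ∈ edgeClosure S := mem_edgeClosure_of_mem (he ▸ h.mem)
      have hsub : S₁ ∪ S₂ ⊆ S := h.eq_insert ▸ Finset.subset_insert e _
      rcases Finset.mem_union.1 hx with hx | hx
      · exact edgeClosure_mono (Finset.union_subset_left hsub) (h.left.conn u hu x hx)
      · exact mk_mem_edgeClosure_trans huv
          (edgeClosure_mono (Finset.union_subset_right hsub) (h.right.conn v hv x hx))
    exact fun x hx y hy => mk_mem_edgeClosure_trans (Sym2.eq_swap ▸ from_u x hx) (from_u y hy)

end IsSplit

theorem IsTreeOn.mem_edgeClosure_erase (h : IsTreeOn A S) (he : s(u, v) ∈ S) (hx : x ∈ A) :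
    s(u, x) ∈ edgeClosure (S.erase s(u, v)) ∨ s(v, x) ∈ edgeClosure (S.erase s(u, v)) := by
  refine edgeClosure_induction
    (P := fun z => s(u, z) ∈ edgeClosure (S.erase s(u, v)) ∨
      s(v, z) ∈ edgeClosure (S.erase s(u, v))) (fun a b hab ha => ?_)
    (h.conn u (h.mem _ he u (by simp)) x hx) (.inl (mem_edgeClosure_of_isDiag (by simp)))
  by_cases heq : s(a, b) = s(u, v)
  · rcases Sym2.eq_iff.1 heq with ⟨-, rfl⟩ | ⟨-, rfl⟩
    · exact .inr (mem_edgeClosure_of_isDiag (by simp))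
    · exact .inl (mem_edgeClosure_of_isDiag (by simp))
  · have hab' := mem_edgeClosure_of_mem (Finset.mem_erase.2 ⟨heq, hab⟩)
    exact ha.imp (mk_mem_edgeClosure_trans · hab') (mk_mem_edgeClosure_trans · hab')

theorem EdgeIndep.isTreeOn_component (hR : EdgeIndep R) (hmem : ∀ e ∈ R, ∀ x ∈ e, x ∈ A)
    (hu : u ∈ A) : IsTreeOn {x ∈ A | s(u, x) ∈ edgeClosure R}
      {e ∈ R | ∀ x ∈ e, s(u, x) ∈ edgeClosure R} where
  nonempty := ⟨u, by simpa [hu] using mem_edgeClosure_of_isDiag (by simp)⟩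
  indep := hR.mono (Finset.filter_subset _ _)
  mem e he x hx := by
    rw [Finset.mem_filter] at he ⊢
    exact ⟨hmem e he.1 x hx, he.2 x hx⟩
  conn x hx y hy := by
    rw [Finset.mem_filter] at hx hy
    have hxy := mk_mem_edgeClosure_trans (Sym2.eq_swap ▸ hx.2) hy.2
    refine (edgeClosure_induction (P := fun z => s(u, z) ∈ edgeClosure R ∧ s(x, z) ∈ edgeClosure
      {e ∈ R | ∀ x ∈ e, s(u, x) ∈ edgeClosure R}) (fun a b hab ha => ?_) hxy
      ⟨hx.2, mem_edgeClosure_of_isDiag (by simp)⟩).2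
    have hb := mk_mem_edgeClosure_trans ha.1 (mem_edgeClosure_of_mem hab)
    refine ⟨hb, mk_mem_edgeClosure_trans ha.2
      (mem_edgeClosure_of_mem (Finset.mem_filter.2 ⟨hab, ?_⟩))⟩
    simpa using ⟨ha.1, hb⟩

theorem IsTreeOn.exists_isSplit (h : IsTreeOn A S) (he : e ∈ S) :
    ∃ A₁ S₁ A₂ S₂, A = A₁ ∪ A₂ ∧ IsSplit S e A₁ S₁ A₂ S₂ := by
  obtain ⟨u, v⟩ := e
  set R := S.erase s(u, v) with hR
  have hu : u ∈ A := h.mem _ he u (by simp)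
  have hv : v ∈ A := h.mem _ he v (by simp)
  have hRindep : EdgeIndep R := h.indep.mono (Finset.erase_subset _ _)
  have hRmem : ∀ e ∈ R, ∀ x ∈ e, x ∈ A := fun e he => h.mem e (Finset.mem_of_mem_erase he)
  refine ⟨_, _, _, _, ?_, hRindep.isTreeOn_component hRmem hu,
    hRindep.isTreeOn_component hRmem hv, ?_, ?_, u, ?_, v, ?_, rfl⟩
  · rw [← Finset.filter_or, Finset.filter_true_of_mem fun x => h.mem_edgeClosure_erase he]
  · refine Finset.disjoint_filter.2 fun x _ hux hvx => h.indep _ he ?_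
    exact mk_mem_edgeClosure_trans hux (Sym2.eq_swap ▸ hvx)
  · rw [← Finset.filter_or, Finset.filter_true_of_mem, hR, Finset.insert_erase he]
    rintro ⟨a, b⟩ he'
    have hab := mem_edgeClosure_of_mem he'
    refine (h.mem_edgeClosure_erase he (hRmem _ he' a (by simp))).imp (fun ha => ?_)
      (fun ha => ?_) <;> simpa using ⟨ha, mk_mem_edgeClosure_trans ha hab⟩
  · simpa [hu] using mem_edgeClosure_of_isDiag (by simp)
  · simpa [hv] using mem_edgeClosure_of_isDiag (by simp)

end Trees

section TreeCounts

variable {A A₁ A₂ : Finset V} {S S₁ S₂ : Finset (Sym2 V)} {e f : Sym2 V}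

theorem IsTreeOn.card_eq (h : IsTreeOn A S) : A.card = S.card + 1 := by
  induction hn : S.card using Nat.strong_induction_on generalizing A S with
  | _ n ih =>
    subst hn
    rcases S.eq_empty_or_nonempty with rfl | ⟨e, he⟩
    · obtain ⟨x, hx⟩ := h.nonempty
      simp [h.eq_singleton hx]
    · obtain ⟨A₁, S₁, A₂, S₂, rfl, hs⟩ := h.exists_isSplit he
      have hcard := hs.card_eq
      rw [Finset.card_union_of_disjoint hs.disjoint, ih _ (by lia) hs.left rfl,
        ih _ (by lia) hs.right rfl, hcard]
      ring

theorem IsTreeOn.insert_erase (h : IsTreeOn A S) (he : e ∈ S) (hfA : ∀ x ∈ f, x ∈ A)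
    (hf : f ∉ edgeClosure (S.erase e)) : IsTreeOn A (insert f (S.erase e)) := by
  obtain ⟨A₁, S₁, A₂, S₂, rfl, hs⟩ := h.exists_isSplit he
  rw [hs.erase_eq] at hf ⊢
  obtain ⟨x, y⟩ := f
  rw [hs.mem_edgeClosure_union_iff, not_or] at hf
  have replace_edge {u v : V} (hu : u ∈ A₁) (hv : v ∈ A₂) :
      IsTreeOn (A₁ ∪ A₂) (insert s(u, v) (S₁ ∪ S₂)) :=
    IsSplit.isTreeOn ⟨hs.left, hs.right, hs.disjoint, rfl, u, hu, v, hv, rfl⟩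
  rcases Finset.mem_union.1 (hfA x (by simp)) with hx | hx <;>
    rcases Finset.mem_union.1 (hfA y (by simp)) with hy | hy
  · exact absurd (hs.left.conn x hx y hy) hf.1
  · exact replace_edge hx hy
  · have hyx := replace_edge hy hx
    rwa [Sym2.eq_swap] at hyx
  · exact absurd (hs.right.conn x hx y hy) hf.2

variable [Fintype V]

theorem isTreeOn_univ_iff {T : Finset (Sym2 V)} :
    IsTreeOn Finset.univ T ↔ IsSpanningTree ⊤ T := by
  rw [IsSpanningTree, connected_iff]
  constructor
  · intro h
    have := edgeIndep_iff.1 h.indep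
    refine ⟨fun e he => ?_, ⟨fun x y => ?_, ?_⟩, this.2⟩
    · simpa using this.1 e he
    · exact mk_mem_edgeClosure.1 (h.conn x (Finset.mem_univ x) y (Finset.mem_univ y))
    · exact Finset.univ_nonempty_iff.1 h.nonempty
  · rintro ⟨hT, ⟨hpre, hne⟩, hac⟩
    exact ⟨Finset.univ_nonempty_iff.2 hne, edgeIndep_iff.2 ⟨fun e he => by simpa using hT he, hac⟩,
      fun _ _ _ _ => Finset.mem_univ _, fun x _ y _ => mk_mem_edgeClosure.2 (hpre x y)⟩

theorem IsTreeOn.chords_union_self (h : IsTreeOn A S) :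
    chords S ∪ S = A.offDiag.image (Function.uncurry fun x y => s(x, y)) := by
  ext ⟨x, y⟩
  have hmem : s(x, y) ∈ edgeClosure S ∧ x ≠ y ↔ x ∈ A ∧ y ∈ A ∧ x ≠ y := by
    rw [← and_assoc, and_congr_left_iff]
    refine fun hxy => ⟨fun hcl => ?_, fun hA => h.conn x hA.1 y hA.2⟩
    have mem_left {x y : V} (hxy : x ≠ y) (hcl : s(x, y) ∈ edgeClosure S) : x ∈ A := by
      by_contra hx
      exact hxy (edgeClosure_induction (P := (x = ·))
        (fun a b hab ha => absurd (h.mem _ hab a (by simp)) (ha ▸ hx)) hcl rfl)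
    exact ⟨mem_left hxy hcl, mem_left hxy.symm (Sym2.eq_swap ▸ hcl)⟩
  have hS : s(x, y) ∈ S → s(x, y) ∈ edgeClosure S ∧ x ≠ y := fun hxy =>
    ⟨mem_edgeClosure_of_mem hxy, by simpa using h.indep.not_isDiag hxy⟩
  have himage : s(x, y) ∈ A.offDiag.image (Function.uncurry fun x y => s(x, y)) ↔
      x ∈ A ∧ y ∈ A ∧ x ≠ y := by
    simp only [Finset.mem_image, Finset.mem_offDiag, Prod.exists, Function.uncurry_apply_pair,
      Sym2.eq_iff]
    grind
  have hchord : s(x, y) ∈ chords S ↔ x ≠ y ∧ s(x, y) ∈ edgeClosure S ∧ s(x, y) ∉ S := by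
    rw [mem_chords, Sym2.mk_isDiag_iff]
  change s(x, y) ∈ _ ↔ s(x, y) ∈ _
  rw [himage, ← hmem, Finset.mem_union, hchord]
  tauto

theorem IsTreeOn.card_chords (h : IsTreeOn A S) : (chords S).card = S.card.choose 2 := by
  have hd : Disjoint (chords S) S := Finset.disjoint_left.2 fun f hf => (mem_chords.1 hf).2.2
  have hcard := congrArg Finset.card h.chords_union_self
  rw [Finset.card_union_of_disjoint hd, Sym2.card_image_offDiag, h.card_eq,
    Nat.choose_succ_succ' S.card 1, Nat.choose_one_right, add_comm] at hcard
  exact Nat.add_left_cancel hcard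

theorem IsSplit.chords_union (h : IsSplit S e A₁ S₁ A₂ S₂) :
    chords (S₁ ∪ S₂) = chords S₁ ∪ chords S₂ := by
  have hS : EdgeIndep (S₁ ∪ S₂) := h.erase_eq ▸ h.isTreeOn.indep.mono (Finset.erase_subset e S)
  refine Finset.Subset.antisymm (fun f hf => ?_) (Finset.union_subset
    (chords_subset_chords hS Finset.subset_union_left)
    (chords_subset_chords hS Finset.subset_union_right))
  simp only [Finset.mem_union, mem_chords, h.mem_edgeClosure_union_iff] at hf ⊢
  tauto

theorem IsSplit.card_chords_sdiff (h : IsSplit S e A₁ S₁ A₂ S₂) :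
    (chords S \ chords (S.erase e)).card = S₁.card * S₂.card + (S₁.card + S₂.card) := by
  have hsub := Finset.erase_subset e S
  have hind := h.isTreeOn.indep
  rw [Finset.card_sdiff_of_subset (chords_subset_chords hind hsub), h.erase_eq, h.chords_union,
    Finset.card_union_of_disjoint (disjoint_chords (h.erase_eq ▸ hind.mono hsub) h.disjoint_edges),
    h.isTreeOn.card_chords, h.left.card_chords, h.right.card_chords, h.card_eq]
  refine Nat.sub_eq_of_eq_add ?_
  qify
  simp only [Nat.cast_choose_two]
  push_cast
  ring

theorem card_chords_sdiff {A₃ A₄ : Finset V} (h₁ : IsTreeOn A₁ S₁) (h₂ : IsTreeOn A₂ S₂)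
    (hinter : IsTreeOn A₃ (S₁ ∩ S₂)) (hunion : IsTreeOn A₄ (S₁ ∪ S₂)) :
    (chords (S₁ ∪ S₂) \ (chords S₁ ∪ chords S₂)).card =
      (S₁ \ S₂).card * (S₂ \ S₁).card := by
  have hsub₁ := chords_subset_chords hunion.indep Finset.subset_union_left
  have hsub₂ := chords_subset_chords hunion.indep Finset.subset_union_right
  have hunion_card := Finset.card_union_add_card_inter (chords S₁) (chords S₂)
  have hsdiff := Finset.card_sdiff_add_card_eq_card (Finset.union_subset hsub₁ hsub₂)
  rw [← chords_inter hunion.indep Finset.subset_union_left Finset.subset_union_right,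
    hinter.card_chords, h₁.card_chords, h₂.card_chords] at hunion_card
  have hc₁ := Finset.card_sdiff_add_card_inter S₁ S₂
  have hc₂ := Finset.card_sdiff_add_card_inter S₂ S₁
  have hc : (S₁ ∪ S₂).card = (S₁ \ S₂).card + (S₂ \ S₁).card + (S₁ ∩ S₂).card := by
    have := Finset.card_union_add_card_inter S₁ S₂
    rw [Finset.inter_comm S₂] at hc₂
    lia
  rw [hunion.card_chords, hc] at hsdiff
  rw [← hc₁, ← hc₂, Finset.inter_comm S₂] at hunion_card
  qify at hsdiff hunion_card ⊢
  simp only [Nat.cast_choose_two] at hsdiff hunion_card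
  push_cast at hsdiff hunion_card
  linear_combination hsdiff - hunion_card

end TreeCounts

section SmallSide

variable {A A₁ A₂ : Finset V} {S S₁ S₂ : Finset (Sym2 V)} {e e' : Sym2 V}

theorem IsSplit.exists_isSplit_of_mem_left (h : IsSplit S e A₁ S₁ A₂ S₂) (he' : e' ∈ S₁) :
    ∃ B T B' T', IsSplit S e' B T B' T' ∧ T ⊆ S₁.erase e' := by
  have he'S : e' ∈ S := h.eq_insert ▸ Finset.mem_insert_of_mem (Finset.mem_union_left _ he')
  have hne : e ≠ e' := fun heq => h.notMem (heq ▸ Finset.mem_union_left _ he')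
  obtain ⟨B, T, B', T', heT', hs⟩ : ∃ B T B' T', e ∈ T' ∧ IsSplit S e' B T B' T' := by
    obtain ⟨B, T, B', T', -, hs⟩ := h.isTreeOn.exists_isSplit he'S
    have heT : e ∈ T ∪ T' := hs.erase_eq ▸ Finset.mem_erase.2 ⟨hne, h.mem⟩
    rcases Finset.mem_union.1 heT with heT | heT
    exacts [⟨B', T', B, T, heT, hs.symm⟩, ⟨B, T, B', T', heT, hs⟩]
  have hsub : A₂ ⊆ B' := by
    intro x hx
    obtain ⟨u, -, v, hv, rfl⟩ := h.joins
    have hS₂ : S₂ ⊆ T' ∪ T := by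
      rw [Finset.union_comm, ← hs.erase_eq, h.eq_insert, Finset.subset_erase]
      exact ⟨fun f hf => Finset.mem_insert_of_mem (Finset.mem_union_right _ hf),
        Finset.disjoint_left.1 h.disjoint_edges he'⟩
    exact (mem_and_mem_edgeClosure_of_union (B := B') hs.right.mem hs.notMem_right_of_mem_left
      (edgeClosure_mono hS₂ (h.right.conn v hv x hx)) (hs.right.mem _ heT' v (by simp))).1
  refine ⟨B, T, B', T', hs, fun f hf => ?_⟩
  have hfS : f ∈ S.erase e' := hs.erase_eq ▸ Finset.mem_union_left _ hf
  have hfe : f ≠ e := fun hfe => Finset.disjoint_left.1 hs.disjoint_edges hf (hfe ▸ heT')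
  have hfS₂ : f ∉ S₂ := by
    obtain ⟨x, y⟩ := f
    exact fun hf' => hs.notMem_right_of_mem_left _ hf x (by simp)
      (hsub (h.right.mem _ hf' x (by simp)))
  rw [h.eq_insert] at hfS
  simp only [Finset.mem_erase, Finset.mem_insert, Finset.mem_union] at hfS ⊢
  tauto

/-- The number of edges of the smaller of the two trees into which `e` cuts `S`; it is `0` when
there is no such cut. -/
def smallSide (S : Finset (Sym2 V)) (e : Sym2 V) : ℕ :=
  sInf {k | ∃ A₁ S₁ A₂ S₂, IsSplit S e A₁ S₁ A₂ S₂ ∧ S₁.card = k}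

theorem IsSplit.smallSide_le (h : IsSplit S e A₁ S₁ A₂ S₂) : smallSide S e ≤ S₁.card :=
  Nat.sInf_le ⟨A₁, S₁, A₂, S₂, h, rfl⟩

theorem IsTreeOn.exists_isSplit_smallSide (h : IsTreeOn A S) (he : e ∈ S) :
    ∃ A₁ S₁ A₂ S₂, IsSplit S e A₁ S₁ A₂ S₂ ∧ S₁.card = smallSide S e := by
  obtain ⟨A₁, S₁, A₂, S₂, -, hs⟩ := h.exists_isSplit he
  exact Nat.sInf_mem (s := {k | ∃ A₁ S₁ A₂ S₂, IsSplit S e A₁ S₁ A₂ S₂ ∧ S₁.card = k})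
    ⟨_, A₁, S₁, A₂, S₂, hs, rfl⟩

theorem IsSplit.min_card_le_card_smallSide_lt (h : IsSplit S e A₁ S₁ A₂ S₂) (j : ℕ) :
    min S₁.card j ≤ {e' ∈ S₁ | smallSide S e' < j}.card := by
  induction hn : S₁.card using Nat.strong_induction_on generalizing e A₁ S₁ A₂ S₂ with
  | _ n ih =>
    subst hn
    by_cases hall : ∀ e' ∈ S₁, smallSide S e' < j
    · rw [Finset.filter_true_of_mem hall]
      exact min_le_left _ _
    · push Not at hall
      obtain ⟨e', he', hj⟩ := hall
      obtain ⟨B, T, B', T', hs, hT⟩ := h.exists_isSplit_of_mem_left he'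
      calc min S₁.card j ≤ min T.card j :=
            le_min (min_le_of_right_le (hj.trans hs.smallSide_le)) (min_le_right _ _)
        _ ≤ {e' ∈ T | smallSide S e' < j}.card :=
            ih _ ((Finset.card_le_card hT).trans_lt (Finset.card_erase_lt_of_mem he')) hs rfl
        _ ≤ _ := Finset.card_le_card
            (Finset.filter_subset_filter _ (hT.trans (Finset.erase_subset _ _)))

theorem IsTreeOn.min_le_card_smallSide_lt (h : IsTreeOn A S) (j : ℕ) :
    min (2 * j) S.card ≤ {e ∈ S | smallSide S e < j}.card := by
  by_cases hall : ∀ e ∈ S, smallSide S e < j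
  · rw [Finset.filter_true_of_mem hall]
    exact min_le_right _ _
  · push Not at hall
    obtain ⟨e, he, hj⟩ := hall
    obtain ⟨A₁, S₁, A₂, S₂, -, hs⟩ := h.exists_isSplit he
    calc min (2 * j) S.card ≤ min S₁.card j + min S₂.card j := by
          rw [min_eq_right (hj.trans hs.smallSide_le), min_eq_right (hj.trans hs.symm.smallSide_le)]
          lia
      _ ≤ {e ∈ S₁ | smallSide S e < j}.card + {e ∈ S₂ | smallSide S e < j}.card :=
          add_le_add (hs.min_card_le_card_smallSide_lt j) (hs.symm.min_card_le_card_smallSide_lt j)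
      _ = {e ∈ S₁ ∪ S₂ | smallSide S e < j}.card := by
          rw [Finset.filter_union, Finset.card_union_of_disjoint
            (Finset.disjoint_filter_filter hs.disjoint_edges)]
      _ ≤ _ := Finset.card_le_card (Finset.filter_subset_filter _
          (hs.erase_eq ▸ Finset.erase_subset e S))

end SmallSide

section Pendant

variable {A : Finset V} {S : Finset (Sym2 V)} {e : Sym2 V}

/-- `e` is the only edge of `S` at one of its ends. -/
def IsPendant (S : Finset (Sym2 V)) (e : Sym2 V) : Prop :=
  ∃ x ∈ e, ∀ e' ∈ S, x ∈ e' → e' = e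

theorem IsTreeOn.eq_empty_of_notMem {x : V} (h : IsTreeOn A S) (hx : x ∈ A)
    (hS : ∀ e ∈ S, x ∉ e) : S = ∅ := by
  have hA : ∀ y ∈ A, y = x := fun y hy =>
    edgeClosure_induction (P := (· = x)) (fun a b hab ha => absurd (by simp [ha]) (hS _ hab))
      (h.conn x hx y hy) rfl
  have := h.card_eq
  rw [Finset.eq_singleton_iff_unique_mem.2 ⟨hx, hA⟩, Finset.card_singleton] at this
  exact Finset.card_eq_zero.1 (by lia)

theorem IsTreeOn.smallSide_eq_zero_iff (h : IsTreeOn A S) (he : e ∈ S) :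
    smallSide S e = 0 ↔ IsPendant S e := by
  constructor
  · intro h₀
    obtain ⟨A₁, S₁, A₂, S₂, hs, hcard⟩ := h.exists_isSplit_smallSide he
    obtain rfl : S₁ = ∅ := Finset.card_eq_zero.1 (hcard.trans h₀)
    obtain ⟨u, hu, v, -, rfl⟩ := hs.joins
    refine ⟨u, by simp, fun e' he' hue' => ?_⟩
    rw [hs.eq_insert, Finset.empty_union, Finset.mem_insert] at he'
    exact he'.resolve_right fun he' => hs.symm.notMem_right_of_mem_left e' he' u hue' hu
  · rintro ⟨x, hx, hpend⟩
    obtain ⟨A₁, S₁, A₂, S₂, hxA, hs⟩ : ∃ A₁ S₁ A₂ S₂, x ∈ A₁ ∧ IsSplit S e A₁ S₁ A₂ S₂ := by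
      obtain ⟨A₁, S₁, A₂, S₂, rfl, hs⟩ := h.exists_isSplit he
      rcases Finset.mem_union.1 (h.mem e he x hx) with hxA | hxA
      exacts [⟨A₁, S₁, A₂, S₂, hxA, hs⟩, ⟨A₂, S₂, A₁, S₁, hxA, hs.symm⟩]
    have hS₁ : S₁ = ∅ := hs.left.eq_empty_of_notMem hxA fun e' he' hxe' =>
      hs.notMem (hpend e' (hs.eq_insert ▸ Finset.mem_insert_of_mem
        (Finset.mem_union_left _ he')) hxe' ▸ Finset.mem_union_left _ he')
    simpa [hS₁] using hs.smallSide_le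

theorem IsTreeOn.exists_forall_mem_of_isPendant (h : IsTreeOn A S)
    (hS : ∀ e ∈ S, IsPendant S e) : ∃ c, ∀ e ∈ S, c ∈ e := by
  rcases S.eq_empty_or_nonempty with rfl | ⟨e₀, he₀⟩
  · exact ⟨h.nonempty.choose, by simp⟩
  obtain ⟨u, v, he₀, hu⟩ : ∃ u v, s(u, v) ∈ S ∧ ∀ e ∈ S, u ∈ e → e = s(u, v) := by
    obtain ⟨x, hx, hpend⟩ := hS _ he₀
    obtain ⟨y, hy⟩ := hx
    exact ⟨x, y, hy ▸ he₀, hy ▸ hpend⟩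
  have centered : ∀ x ∈ A, ∀ e ∈ S, x ∈ e → v ∈ e := by
    refine fun x hx => edgeClosure_induction (P := fun x => ∀ e ∈ S, x ∈ e → v ∈ e)
      (fun a b hab ha e he hbe => ?_) (h.conn v (h.mem _ he₀ v (by simp)) x hx) fun _ _ => id
    rcases Sym2.mem_iff.1 (ha _ hab (by simp)) with rfl | rfl
    · obtain ⟨z, hz, hpend⟩ := hS _ hab
      rcases Sym2.mem_iff.1 hz with rfl | rfl
      · obtain rfl : u = b := Sym2.congr_right.1 (Sym2.eq_swap.trans (hpend _ he₀ (by simp)))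
        simp [hu e he hbe]
      · simp [hpend e he hbe]
    · exact hbe
  refine ⟨v, ?_⟩
  rintro ⟨x, y⟩ he
  exact centered x (h.mem _ he x (by simp)) _ he (by simp)

end Pendant

section Path

variable {f : ℕ → V} {i j k : ℕ}

/-- The edges of the path `f i, f (i + 1), …, f j`. -/
def pathEdges (f : ℕ → V) (i j : ℕ) : Finset (Sym2 V) :=
  (Finset.Ico i j).image fun k => s(f k, f (k + 1))

theorem pathEdges_eq_insert (hik : i ≤ k) (hkj : k < j) :
    pathEdges f i j = insert s(f k, f (k + 1)) (pathEdges f i k ∪ pathEdges f (k + 1) j) := by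
  have hIco : Finset.Ico i j = insert k (Finset.Ico i k ∪ Finset.Ico (k + 1) j) := by
    ext l
    simp only [Finset.mem_insert, Finset.mem_union, Finset.mem_Ico]
    lia
  rw [pathEdges, hIco, Finset.image_insert, Finset.image_union, pathEdges, pathEdges]

theorem isTreeOn_pathEdges (hf : Set.InjOn f (Set.Icc i j)) (hij : i ≤ j) :
    IsTreeOn ((Finset.Icc i j).image f) (pathEdges f i j) := by
  induction j, hij using Nat.le_induction with
  | base => simpa [pathEdges] using isTreeOn_singleton (f i)
  | succ j hij ih =>
    have hs : IsSplit (pathEdges f i (j + 1)) s(f j, f (j + 1)) ((Finset.Icc i j).image f)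
        (pathEdges f i j) {f (j + 1)} ∅ := by
      refine ⟨ih (hf.mono (Set.Icc_subset_Icc_right j.le_succ)), isTreeOn_singleton _, ?_, ?_,
        f j, Finset.mem_image_of_mem f (Finset.right_mem_Icc.2 hij), _,
        Finset.mem_singleton_self _, rfl⟩
      · rw [Finset.disjoint_singleton_right, Finset.mem_image]
        rintro ⟨k, hk, heq⟩
        rw [Finset.mem_Icc] at hk
        have := hf ⟨hk.1, by lia⟩ ⟨by lia, le_rfl⟩ heq
        lia
      · simpa [pathEdges] using pathEdges_eq_insert (f := f) hij j.lt_succ_self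
    convert hs.isTreeOn
    rw [← Finset.insert_Icc_right_eq_Icc_add_one (by lia), Finset.image_insert, Finset.union_comm]
    rfl

theorem isSplit_pathEdges (hf : Set.InjOn f (Set.Icc i j)) (hik : i ≤ k) (hkj : k < j) :
    IsSplit (pathEdges f i j) s(f k, f (k + 1)) ((Finset.Icc i k).image f) (pathEdges f i k)
      ((Finset.Icc (k + 1) j).image f) (pathEdges f (k + 1) j) where
  left := isTreeOn_pathEdges (hf.mono (Set.Icc_subset_Icc_right hkj.le)) hik
  right := isTreeOn_pathEdges (hf.mono (Set.Icc_subset_Icc_left (by lia))) hkj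
  disjoint := by
    simp only [Finset.disjoint_left, Finset.mem_image, Finset.mem_Icc]
    rintro _ ⟨a, ha, rfl⟩ ⟨b, hb, heq⟩
    have := hf ⟨by lia, hb.2⟩ ⟨ha.1, by lia⟩ heq
    lia
  eq_insert := pathEdges_eq_insert hik hkj
  joins := ⟨f k, Finset.mem_image_of_mem f (Finset.right_mem_Icc.2 hik), f (k + 1),
    Finset.mem_image_of_mem f (Finset.left_mem_Icc.2 hkj), rfl⟩

theorem injOn_mk_succ (hf : Set.InjOn f (Set.Icc i j)) :
    Set.InjOn (fun k => s(f k, f (k + 1))) (Set.Ico i j) := by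
  intro k hk l hl heq
  simp only [Set.mem_Ico] at hk hl
  rcases Sym2.eq_iff.1 heq with ⟨h, -⟩ | ⟨h, h'⟩
  · exact hf ⟨hk.1, by lia⟩ ⟨hl.1, by lia⟩ h
  · have := hf ⟨hk.1, by lia⟩ ⟨by lia, by lia⟩ h
    have := hf ⟨by lia, by lia⟩ ⟨hl.1, by lia⟩ h'
    lia

theorem card_pathEdges (hf : Set.InjOn f (Set.Icc i j)) : (pathEdges f i j).card = j - i := by
  rw [pathEdges, Finset.card_image_of_injOn (by simpa using injOn_mk_succ hf), Nat.card_Ico]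

end Path

section PathOfPendant

variable {A A₂ : Finset V} {S S₂ : Finset (Sym2 V)} {e : Sym2 V} {f g : ℕ → V} {u v : V}
  {i j m : ℕ}

theorem pathEdges_congr (h : ∀ k ∈ Set.Icc i j, f k = g k) : pathEdges f i j = pathEdges g i j := by
  refine Finset.image_congr fun k hk => ?_
  simp only [Finset.coe_Ico, Set.mem_Ico] at hk
  simp only [h k ⟨hk.1, by lia⟩, h (k + 1) ⟨by lia, hk.2⟩]

theorem injOn_reverse (hf : Set.InjOn f (Set.Icc 0 m)) :
    Set.InjOn (fun k => f (m - k)) (Set.Icc 0 m) := by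
  intro k hk l hl heq
  have := hf ⟨by lia, by lia⟩ ⟨by lia, by lia⟩ heq
  simp only [Set.mem_Icc] at hk hl
  lia

theorem image_reverse : (Finset.Icc 0 m).image (fun k => f (m - k)) = (Finset.Icc 0 m).image f := by
  ext x
  simp only [Finset.mem_image, Finset.mem_Icc]
  constructor
  · rintro ⟨k, hk, rfl⟩
    exact ⟨m - k, by lia, rfl⟩
  · rintro ⟨k, hk, rfl⟩
    exact ⟨m - k, by lia, by rw [Nat.sub_sub_self hk.2]⟩

theorem pathEdges_reverse : pathEdges (fun k => f (m - k)) 0 m = pathEdges f 0 m := by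
  have reverse_subset (f : ℕ → V) : pathEdges (fun k => f (m - k)) 0 m ⊆ pathEdges f 0 m := by
    refine Finset.image_subset_iff.2 fun k hk => Finset.mem_image.2 ⟨m - (k + 1), ?_, ?_⟩
    · simp only [Finset.mem_Ico] at hk ⊢
      lia
    · rw [Sym2.eq_swap, show m - (k + 1) + 1 = m - k by simp at hk; lia]
  refine (reverse_subset f).antisymm ?_
  calc pathEdges f 0 m = pathEdges (fun k => f (m - (m - k))) 0 m :=
        pathEdges_congr fun k hk => by rw [Nat.sub_sub_self hk.2]
    _ ⊆ _ := reverse_subset fun k => f (m - k)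

theorem eq_mk_of_mem_pathEdges (hf : Set.InjOn f (Set.Icc 0 m)) (he : e ∈ pathEdges f 0 m)
    (h : f 0 ∈ e) : e = s(f 0, f 1) := by
  obtain ⟨k, hk, rfl⟩ := Finset.mem_image.1 he
  rw [Finset.mem_Ico] at hk
  rcases Sym2.mem_iff.1 h with h | h
  · obtain rfl := hf ⟨le_rfl, by lia⟩ ⟨by lia, by lia⟩ h
    rfl
  · have := hf ⟨le_rfl, by lia⟩ ⟨by lia, by lia⟩ h
    lia

theorem isPendant_insert_pathEdges (hf : Set.InjOn f (Set.Icc 0 m)) (hi : 0 < i) (him : i ≤ m)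
    (hu : u ∉ (Finset.Icc 0 m).image f) :
    s(f 0, f 1) ∈ pathEdges f 0 m ∧
      IsPendant (insert s(u, f i) (pathEdges f 0 m)) s(f 0, f 1) := by
  refine ⟨Finset.mem_image.2 ⟨0, by simp; lia, rfl⟩, f 0, by simp, fun e he h => ?_⟩
  rcases Finset.mem_insert.1 he with rfl | he
  · rcases Sym2.mem_iff.1 h with h | h
    · exact absurd (Finset.mem_image_of_mem f (by simp)) (h ▸ hu)
    · exact absurd (hf ⟨le_rfl, by lia⟩ ⟨by lia, him⟩ h) hi.ne
  · exact eq_mk_of_mem_pathEdges hf he h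

theorem three_le_card_isPendant (hf : Set.InjOn f (Set.Icc 0 m)) (hi : 0 < i) (him : i < m)
    (hu : u ∉ (Finset.Icc 0 m).image f) :
    3 ≤ {e ∈ insert s(u, f i) (pathEdges f 0 m) |
      IsPendant (insert s(u, f i) (pathEdges f 0 m)) e}.card := by
  have hleft := isPendant_insert_pathEdges hf hi him.le hu
  have hright := isPendant_insert_pathEdges (i := m - i) (injOn_reverse hf) (by lia) (by lia)
    (image_reverse ▸ hu)
  simp only [pathEdges_reverse, Nat.sub_sub_self him.le, tsub_zero] at hright
  have u_notMem : ∀ e ∈ pathEdges f 0 m, u ∉ e := fun e he hue =>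
    hu ((isTreeOn_pathEdges hf m.zero_le).mem e he u hue)
  have hpend : IsPendant (insert s(u, f i) (pathEdges f 0 m)) s(u, f i) :=
    ⟨u, by simp, fun e he hue => (Finset.mem_insert.1 he).resolve_right
      fun he => u_notMem e he hue⟩
  have hne : s(f 0, f 1) ≠ s(f m, f (m - 1)) := by
    intro heq
    rcases Sym2.mem_iff.1 (heq ▸ Sym2.mem_mk_left (f 0) (f 1)) with h | h
    · have := hf ⟨le_rfl, by lia⟩ ⟨by lia, le_rfl⟩ h
      lia
    · have := hf ⟨le_rfl, by lia⟩ ⟨by lia, by lia⟩ h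
      lia
  have ne_of_mem : ∀ e ∈ pathEdges f 0 m, s(u, f i) ≠ e := fun e he heq =>
    u_notMem e he (heq ▸ Sym2.mem_mk_left u (f i))
  rw [← Finset.card_eq_three.2 ⟨_, _, _, ne_of_mem _ hleft.1, ne_of_mem _ hright.1, hne, rfl⟩]
  refine Finset.card_le_card ?_
  simp only [Finset.insert_subset_iff, Finset.singleton_subset_iff, Finset.mem_filter,
    Finset.mem_insert]
  exact ⟨⟨.inl trivial, hpend⟩, ⟨.inr hleft.1, hleft.2⟩, .inr hright.1, hright.2⟩

theorem exists_pathEdges_eq_insert (hf : Set.InjOn f (Set.Icc 0 m))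
    (hu : u ∉ (Finset.Icc 0 m).image f) :
    ∃ g : ℕ → V, Set.InjOn g (Set.Icc 0 (m + 1)) ∧
      (Finset.Icc 0 (m + 1)).image g = insert u ((Finset.Icc 0 m).image f) ∧
      pathEdges g 0 (m + 1) = insert s(u, f m) (pathEdges f 0 m) := by
  have hg : ∀ k ∈ Set.Icc 0 m, Function.update f (m + 1) u k = f k := fun k hk =>
    Function.update_of_ne (by simp at hk; lia) _ _
  have himage : (Finset.Icc 0 m).image (Function.update f (m + 1) u) = (Finset.Icc 0 m).image f :=
    Finset.image_congr (by simpa [Set.EqOn] using hg)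
  refine ⟨Function.update f (m + 1) u, ?_, ?_, ?_⟩
  · rw [← Set.insert_Icc_right_eq_Icc_add_one (by lia), Set.injOn_insert (by simp)]
    refine ⟨hf.congr fun k hk => (hg k hk).symm, ?_⟩
    have := himage ▸ hu
    simpa using this
  · rw [← Finset.insert_Icc_right_eq_Icc_add_one (by lia), Finset.image_insert, himage,
      Function.update_self]
  · rw [pathEdges_eq_insert m.zero_le m.lt_succ_self, pathEdges_congr hg, hg m ⟨m.zero_le, le_rfl⟩,
      Function.update_self, Sym2.eq_swap]
    simp [pathEdges]

theorem IsSplit.isPendant (h : IsSplit S s(u, v) {u} ∅ A₂ S₂) : IsPendant S s(u, v) := by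
  refine ⟨u, by simp, fun e he hue => ?_⟩
  rw [h.eq_insert, Finset.empty_union, Finset.mem_insert] at he
  exact he.resolve_right fun he =>
    h.symm.notMem_right_of_mem_left e he u hue (Finset.mem_singleton_self u)

theorem IsSplit.card_isPendant_right_le (h : IsSplit S s(u, v) {u} ∅ A₂ S₂) :
    {e ∈ S₂ | IsPendant S₂ e}.card ≤ {e ∈ S | IsPendant S e}.card := by
  have hS : S = insert s(u, v) S₂ := by rw [h.eq_insert, Finset.empty_union]
  have hmem : s(u, v) ∈ {e ∈ S | IsPendant S e} := Finset.mem_filter.2 ⟨h.mem, h.isPendant⟩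
  have hcard : {e ∈ S₂ | v ∈ e ∧ ∀ e' ∈ S₂, v ∈ e' → e' = e}.card ≤ 1 := by
    simp only [Finset.card_le_one_iff, Finset.mem_filter]
    exact fun h₁ h₂ => h₂.2.2 _ h₁.1 h₁.2.1
  have hsub : {e ∈ S₂ | IsPendant S₂ e} ⊆ {e ∈ S | IsPendant S e}.erase s(u, v) ∪
      {e ∈ S₂ | v ∈ e ∧ ∀ e' ∈ S₂, v ∈ e' → e' = e} := by
    intro e he
    obtain ⟨heS₂, x, hx, hpend⟩ := Finset.mem_filter.1 he
    have hxu : x ≠ u := fun hxu => h.symm.notMem_right_of_mem_left e heS₂ x hx (by simp [hxu])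
    rw [Finset.mem_union, Finset.mem_erase, Finset.mem_filter, Finset.mem_filter]
    rcases eq_or_ne x v with rfl | hxv
    · exact .inr ⟨heS₂, hx, hpend⟩
    · refine .inl ⟨fun heq => by simp [heq, hxu, hxv] at hx, hS ▸ Finset.mem_insert_of_mem heS₂,
        x, hx, fun e' he' hxe' => ?_⟩
      rw [hS, Finset.mem_insert] at he'
      exact hpend e' (he'.resolve_left fun heq => by simp [heq, hxu, hxv] at hxe') hxe'
  have := (Finset.card_le_card hsub).trans (Finset.card_union_le _ _)
  rw [Finset.card_erase_of_mem hmem] at this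
  have := Finset.card_pos.2 ⟨_, hmem⟩
  lia

theorem IsTreeOn.subset {B : Finset V} (hA : IsTreeOn A S) (hB : IsTreeOn B S)
    (hS : S.Nonempty) : A ⊆ B := by
  obtain ⟨⟨u, v⟩, he⟩ := hS
  exact fun x hx => edgeClosure_induction (P := (· ∈ B))
    (fun a b hab _ => hB.mem _ hab b (by simp)) (hA.conn u (hA.mem _ he u (by simp)) x hx)
    (hB.mem _ he u (by simp))

theorem IsTreeOn.exists_isSplit_empty (h : IsTreeOn A S) (hS : S.Nonempty) :
    ∃ u v A₂ S₂, v ∈ A₂ ∧ A = insert u A₂ ∧ IsSplit S s(u, v) {u} ∅ A₂ S₂ := by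
  have hpos : 0 < {e ∈ S | smallSide S e < 1}.card :=
    lt_of_lt_of_le (by have := hS.card_pos; lia) (h.min_le_card_smallSide_lt 1)
  obtain ⟨e, he⟩ := Finset.card_pos.1 hpos
  rw [Finset.mem_filter, Nat.lt_one_iff] at he
  obtain ⟨A₁, S₁, A₂, S₂, hs, hcard⟩ := h.exists_isSplit_smallSide he.1
  obtain rfl : S₁ = ∅ := Finset.card_eq_zero.1 (hcard.trans he.2)
  obtain ⟨u, hu, v, hv, rfl⟩ := hs.joins
  obtain rfl := hs.left.eq_singleton hu
  exact ⟨u, v, A₂, S₂, hv, (h.subset hs.isTreeOn hS).antisymm (hs.isTreeOn.subset h hS), hs⟩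

theorem IsTreeOn.exists_eq_pathEdges (h : IsTreeOn A S)
    (hS : {e ∈ S | IsPendant S e}.card ≤ 2) :
    ∃ f : ℕ → V, Set.InjOn f (Set.Icc 0 S.card) ∧ A = (Finset.Icc 0 S.card).image f ∧
      S = pathEdges f 0 S.card := by
  induction hm : S.card generalizing A S with
  | zero =>
    obtain rfl := Finset.card_eq_zero.1 hm
    obtain ⟨x, hx⟩ := h.nonempty
    exact ⟨fun _ => x, by simp, by simp [h.eq_singleton hx], by simp [pathEdges]⟩
  | succ m ih =>
    obtain ⟨u, v, A₂, S₂, hv, rfl, hs⟩ := h.exists_isSplit_empty (Finset.card_pos.1 (by lia))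
    have hcard := hs.card_eq
    obtain ⟨f, hf, hA₂, hS₂⟩ := ih hs.right (hs.card_isPendant_right_le.trans hS)
      (by rw [Finset.card_empty] at hcard; lia)
    have hu : u ∉ (Finset.Icc 0 m).image f := by
      rw [← hA₂]
      exact Finset.disjoint_singleton_left.1 hs.disjoint
    obtain ⟨i, hi, rfl⟩ := Finset.mem_image.1 (hA₂ ▸ hv)
    rw [hs.eq_insert, Finset.empty_union, hS₂] at hS ⊢
    have hi_end : i = 0 ∨ i = m := by
      by_contra! hne
      rw [Finset.mem_Icc] at hi
      have := three_le_card_isPendant hf (Nat.pos_of_ne_zero hne.1) (hi.2.lt_of_ne hne.2) hu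
      lia
    rcases hi_end with rfl | rfl
    · obtain ⟨g, hg, himage, hedges⟩ :=
        exists_pathEdges_eq_insert (injOn_reverse hf) (image_reverse ▸ hu)
      rw [image_reverse, ← hA₂] at himage
      rw [pathEdges_reverse, Nat.sub_self] at hedges
      exact ⟨g, hg, himage.symm, hedges.symm⟩
    · obtain ⟨g, hg, himage, hedges⟩ := exists_pathEdges_eq_insert hf hu
      rw [← hA₂] at himage
      exact ⟨g, hg, himage.symm, hedges.symm⟩

end PathOfPendant

section Matching

variable {α β : Type*} {s : Finset α} {t : Finset β}

theorem exists_equiv_of_card_filter_lt_le {u : α → ℕ} {v : β → ℕ} (hcard : s.card = t.card)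
    (h : ∀ j, {i ∈ s | u i < j}.card ≤ {k ∈ t | v k < j}.card) :
    ∃ σ : s ≃ t, ∀ i, v (σ i) ≤ u i := by
  have hall (r : Finset s) : r.card ≤ (r.biUnion fun i => {k : t | v k ≤ u i}).card := by
    rcases r.eq_empty_or_nonempty with rfl | hr
    · simp
    obtain ⟨i, hi, hmax⟩ := r.exists_max_image (fun i => u i) hr
    calc r.card = (r.map (Function.Embedding.subtype _)).card := (Finset.card_map _).symm
      _ ≤ {i' ∈ s | u i' < u i + 1}.card := Finset.card_le_card fun a ha => by
          obtain ⟨b, hb, rfl⟩ := Finset.mem_map.1 ha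
          exact Finset.mem_filter.2 ⟨b.2, Nat.lt_succ_of_le (hmax b hb)⟩
      _ ≤ {k ∈ t | v k < u i + 1}.card := h _
      _ = (({k : t | v k ≤ u i} : Finset t).map (Function.Embedding.subtype _)).card := by
          congr 1
          ext k
          simp [and_comm]
      _ = ({k : t | v k ≤ u i} : Finset t).card := Finset.card_map _
      _ ≤ _ := Finset.card_le_card
          (Finset.subset_biUnion_of_mem (fun i : s => {k : t | v k ≤ u i}) hi)
  obtain ⟨g, hg, hgt⟩ := (Finset.all_card_le_biUnion_card_iff_exists_injective _).1 hall
  have bij : Function.Bijective g := (Fintype.bijective_iff_injective_and_card g).2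
    ⟨hg, by simpa using hcard⟩
  exact ⟨Equiv.ofBijective g bij, fun i => (Finset.mem_filter.1 (hgt i)).2⟩

theorem sum_lt_sum_of_equiv {φ : α → ENNReal} {ψ : β → ENNReal} (σ : s ≃ t)
    (hle : ∀ i : s, φ i ≤ ψ (σ i)) (hlt : ∃ i : s, φ i < ψ (σ i)) (hfin : ∑ i ∈ s, φ i ≠ ⊤) :
    ∑ i ∈ s, φ i < ∑ k ∈ t, ψ k := by
  obtain ⟨i, hi⟩ := hlt
  rw [← Finset.sum_coe_sort] at hfin
  rw [← Finset.sum_coe_sort s, ← Finset.sum_coe_sort t, ← σ.sum_comp,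
    ← Finset.add_sum_erase _ _ (Finset.mem_univ i), ← Finset.add_sum_erase _ _ (Finset.mem_univ i)]
  refine ENNReal.add_lt_add_of_lt_of_le (ne_top_of_le_ne_top hfin ?_) hi
    (Finset.sum_le_sum fun j _ => hle j)
  exact Finset.sum_le_sum_of_subset (Finset.erase_subset _ _)

theorem sum_le_sum_of_equiv {φ : α → ENNReal} {ψ : β → ENNReal} (σ : s ≃ t)
    (hle : ∀ i : s, φ i ≤ ψ (σ i)) : ∑ i ∈ s, φ i ≤ ∑ k ∈ t, ψ k := by
  rw [← Finset.sum_coe_sort s, ← Finset.sum_coe_sort t, ← σ.sum_comp]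
  exact Finset.sum_le_sum fun i _ => hle i

end Matching

section Thresholds

variable [Fintype V] {ν ν' : Measure ℝ} {A A₁ A₂ : Finset V} {S S₁ S₂ : Finset (Sym2 V)}
  {e : Sym2 V} {c : ENNReal}

theorem measurable_measure_Ioi : Measurable fun t => ν (Set.Ioi t) :=
  Antitone.measurable fun _ _ h => measure_mono (Set.Ioi_subset_Ioi h)

theorem ae_measure_Ioi_le (t : ℝ) : ∀ᵐ s ∂ν'.restrict (Set.Iio t), ν (Set.Ioi t) ≤ ν (Set.Ioi s) :=
  (ae_restrict_mem measurableSet_Iio).mono fun _ hs =>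
    measure_mono (Set.Ioi_subset_Ioi (Set.mem_Iio.1 hs).le)

theorem measurable_forestProb_restrict [SigmaFinite ν'] :
    Measurable fun t => forestProb ν (ν'.restrict (Set.Iio t)) S := by
  refine Monotone.measurable fun t t' htt' => ?_
  simp only [forestProb, lmarginal_restrict fun _ => measurableSet_Iio]
  refine lmarginal_mono (fun w => Set.indicator_le_indicator_of_subset ?_ (fun _ => bot_le) w) 0
  exact fun y hy i hi => (hy i hi).trans_le htt'

theorem cutTerm_lt_top [IsFiniteMeasure ν] [IsFiniteMeasure ν'] [NullSingletonClass ν']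
    (hS : EdgeIndep S) (he : e ∈ S) : cutTerm ν ν' S e < ⊤ :=
  calc cutTerm ν ν' S e ≤ ∑ e ∈ S, cutTerm ν ν' S e :=
        Finset.single_le_sum (fun _ _ => bot_le) he
    _ = forestProb ν ν' S := (forestProb_eq_sum_cutTerm hS ⟨e, he⟩).symm
    _ < ⊤ := forestProb_lt_top

theorem IsSplit.cutTerm_eq [SFinite ν] [SigmaFinite ν'] (h : IsSplit S e A₁ S₁ A₂ S₂) :
    cutTerm ν ν' S e = ∫⁻ t, ν (Set.Ioi t) ^ (S₁.card + S₂.card) *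
      (ν (Set.Ioi t) ^ (S₁.card * S₂.card) * (forestProb ν (ν'.restrict (Set.Iio t)) S₁ *
        forestProb ν (ν'.restrict (Set.Iio t)) S₂)) ∂ν' := by
  have hindep : EdgeIndep (S₁ ∪ S₂) := by
    rw [← h.erase_eq]
    exact h.isTreeOn.indep.mono (Finset.erase_subset _ _)
  simp only [cutTerm, h.card_chords_sdiff, ← mul_assoc, ← pow_add]
  simp only [h.erase_eq, forestProb_union_of_chords hindep h.disjoint_edges h.chords_union,
    add_comm (S₁.card * S₂.card), mul_assoc]

theorem card_chords_sdiff_of_disjoint (h₁ : IsTreeOn A₁ S₁) (h₂ : IsTreeOn A₂ S₂)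
    (h : IsTreeOn A (S₁ ∪ S₂)) (hd : Disjoint S₁ S₂) :
    (chords (S₁ ∪ S₂) \ (chords S₁ ∪ chords S₂)).card = S₁.card * S₂.card := by
  have hempty : IsTreeOn {h.nonempty.choose} (S₁ ∩ S₂) := by
    rw [Finset.disjoint_iff_inter_eq_empty.1 hd]
    exact isTreeOn_singleton _
  rw [card_chords_sdiff h₁ h₂ hempty h, Finset.sdiff_eq_self_of_disjoint hd,
    Finset.sdiff_eq_self_of_disjoint hd.symm]

theorem pow_mul_forestProb_mul_forestProb_le [IsFiniteMeasure ν] [IsFiniteMeasure ν']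
    (h₁ : IsTreeOn A₁ S₁) (h₂ : IsTreeOn A₂ S₂) (h : IsTreeOn A (S₁ ∪ S₂)) (hd : Disjoint S₁ S₂)
    (hc : ∀ᵐ t ∂ν', c ≤ ν (Set.Ioi t)) :
    c ^ (S₁.card * S₂.card) * (forestProb ν ν' S₁ * forestProb ν ν' S₂) ≤
      forestProb ν ν' (S₁ ∪ S₂) := by
  have := forestProb_logSupermodular h.indep hc
  rwa [card_chords_sdiff_of_disjoint h₁ h₂ h hd, Finset.disjoint_iff_inter_eq_empty.1 hd,
    forestProb_empty, one_mul] at this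

theorem pow_mul_forestProb_mul_forestProb_lt [IsFiniteMeasure ν] [IsFiniteMeasure ν']
    (hν' : ν' ≠ 0) (h₁ : IsTreeOn A₁ S₁) (h₂ : IsTreeOn A₂ S₂) (h : IsTreeOn A (S₁ ∪ S₂))
    (hd : Disjoint S₁ S₂) (hne₁ : S₁.Nonempty) (hne₂ : S₂.Nonempty)
    (hc : ∀ᵐ t ∂ν', c < ν (Set.Ioi t)) :
    c ^ (S₁.card * S₂.card) * (forestProb ν ν' S₁ * forestProb ν ν' S₂) <
      forestProb ν ν' (S₁ ∪ S₂) := by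
  have hcard := card_chords_sdiff_of_disjoint h₁ h₂ h hd
  rw [← hcard]
  refine pow_card_mul_forestProb_mul_forestProb_lt hν' h.indep hd hc (Finset.card_pos.1 ?_)
  rw [hcard]
  exact Nat.mul_pos hne₁.card_pos hne₂.card_pos

/-- The weight law `ν'` charges every half-line below almost all of its thresholds `t`, and the
tail `z ↦ ν (Ioi z)` drops strictly before `t`. This is what makes the comparisons strict. -/
def HasStrictTails (ν ν' : Measure ℝ) : Prop :=
  ∀ᵐ t ∂ν', ν'.restrict (Set.Iio t) ≠ 0 ∧ ν (Set.Ioi t) ≠ 0 ∧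
    ∀ᵐ s ∂ν'.restrict (Set.Iio t), ν (Set.Ioi t) < ν (Set.Ioi s)

/-- The law of the weight of a single edge. -/
abbrev weightLaw : Measure ℝ :=
  volume.restrict (Set.Icc (0 : ℝ) 1)

theorem hasStrictTails_weightLaw : HasStrictTails weightLaw weightLaw := by
  rw [weightLaw, ← Measure.restrict_congr_set Ioo_ae_eq_Icc]
  have tail {t : ℝ} (ht : 0 < t) :
      volume.restrict (Set.Ioo (0 : ℝ) 1) (Set.Ioi t) = ENNReal.ofReal (1 - t) := by
    have : Set.Ioi t ∩ Set.Ioo 0 1 = Set.Ioo t 1 := by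
      rw [Set.inter_comm, Set.Ioo_inter_Ioi, max_eq_right ht.le]
    rw [Measure.restrict_apply measurableSet_Ioi, this, Real.volume_Ioo]
  refine (ae_restrict_mem measurableSet_Ioo).mono fun t ht => ⟨fun h => ?_, ?_, ?_⟩
  · have : Set.Iio t ∩ Set.Ioo 0 1 = Set.Ioo 0 t := by
      rw [Set.Iio_inter_Ioo, min_eq_left ht.2.le]
    rw [Measure.restrict_eq_zero, Measure.restrict_apply measurableSet_Iio, this, Real.volume_Ioo,
      ENNReal.ofReal_eq_zero] at h
    linarith [ht.1]
  · rw [tail ht.1, ne_eq, ENNReal.ofReal_eq_zero, not_le, sub_pos]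
    exact ht.2
  · filter_upwards [ae_restrict_mem measurableSet_Iio,
      ae_restrict_of_ae (ae_restrict_mem measurableSet_Ioo)] with s hst hs
    rw [tail ht.1, tail hs.1, ENNReal.ofReal_lt_ofReal_iff (sub_pos.2 hs.2)]
    linarith [Set.mem_Iio.1 hst]

end Thresholds

section Star

variable {R S S' : Finset (Sym2 V)} {e e' : Sym2 V} {c : V}

/-- `S` is the edge set of a star with center `c`. -/
structure IsStar (c : V) (S : Finset (Sym2 V)) : Prop where
  indep : EdgeIndep S
  mem : ∀ e ∈ S, c ∈ e

theorem IsStar.mono (h : IsStar c S) (hR : R ⊆ S) : IsStar c R :=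
  ⟨h.indep.mono hR, fun e he => h.mem e (hR he)⟩

variable [Fintype V] {ν ν' : Measure ℝ} {A A₁ A₂ : Finset V} {S₁ S₂ : Finset (Sym2 V)}

theorem IsStar.isTreeOn (h : IsStar c S) :
    IsTreeOn (insert c ({x | s(c, x) ∈ S} : Finset V)) S := by
  have center_mem (x : V) (hx : x ∈ insert c ({x | s(c, x) ∈ S} : Finset V)) :
      s(c, x) ∈ edgeClosure S := by
    rcases Finset.mem_insert.1 hx with rfl | hx
    · exact mem_edgeClosure_of_isDiag (by simp)
    · exact mem_edgeClosure_of_mem (Finset.mem_filter.1 hx).2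
  refine ⟨Finset.insert_nonempty _ _, h.indep, fun e he x hx => ?_, fun x hx y hy => ?_⟩
  · obtain ⟨y, rfl⟩ := h.mem e he
    rcases Sym2.mem_iff.1 hx with rfl | rfl
    · exact Finset.mem_insert_self _ _
    · exact Finset.mem_insert_of_mem (by simpa using he)
  · refine mk_mem_edgeClosure_trans ?_ (center_mem y hy)
    rw [Sym2.eq_swap]
    exact center_mem x hx

theorem IsStar.cutTerm_eq (h : IsStar c S) (he : e ∈ S) :
    cutTerm ν ν' S e = ∫⁻ t, ν (Set.Ioi t) ^ (S.erase e).card *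
      forestProb ν (ν'.restrict (Set.Iio t)) (S.erase e) ∂ν' := by
  have hsub := chords_subset_chords h.indep (S.erase_subset e)
  have hcard : (chords S \ chords (S.erase e)).card = (S.erase e).card := by
    rw [Finset.card_sdiff_of_subset hsub, h.isTreeOn.card_chords,
      (h.mono (S.erase_subset e)).isTreeOn.card_chords, ← Finset.card_erase_add_one he,
      Nat.choose_succ_succ, Nat.choose_one_right, Nat.add_sub_cancel]
  rw [cutTerm, hcard]

theorem IsStar.exists_cutTerm_eq (h : IsStar c S) (he : e ∈ S) {a b : ℕ}
    (hab : S.card = a + b + 1) :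
    ∃ R₁ R₂, R₁.card = a ∧ R₂.card = b ∧ IsStar c R₁ ∧ IsStar c R₂ ∧ IsStar c (R₁ ∪ R₂) ∧
      Disjoint R₁ R₂ ∧ cutTerm ν ν' S e = ∫⁻ t, ν (Set.Ioi t) ^ (a + b) *
        forestProb ν (ν'.restrict (Set.Iio t)) (R₁ ∪ R₂) ∂ν' := by
  have herase := h.mono (S.erase_subset e)
  have hcard : (S.erase e).card = a + b := by
    rw [Finset.card_erase_of_mem he, hab, Nat.add_sub_cancel]
  obtain ⟨R, hR, hRcard⟩ := Finset.exists_subset_card_eq (hcard ▸ Nat.le_add_right a b)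
  have hunion := Finset.union_sdiff_of_subset hR
  refine ⟨R, S.erase e \ R, hRcard, ?_, herase.mono hR, herase.mono Finset.sdiff_subset, ?_,
    Finset.disjoint_sdiff, ?_⟩
  · rw [Finset.card_sdiff_of_subset hR, hcard, hRcard, Nat.add_sub_cancel_left]
  · rwa [hunion]
  · rw [h.cutTerm_eq he, hunion, hcard]

variable [IsFiniteMeasure ν] [IsFiniteMeasure ν']

theorem IsSplit.cutTerm_le_of_isStar (h : IsSplit S e A₁ S₁ A₂ S₂) (h' : IsStar c S')
    (hcard : S.card = S'.card) (he' : e' ∈ S')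
    (h₁ : ∀ t R, IsStar c R → S₁.card = R.card →
      forestProb ν (ν'.restrict (Set.Iio t)) S₁ ≤ forestProb ν (ν'.restrict (Set.Iio t)) R)
    (h₂ : ∀ t R, IsStar c R → S₂.card = R.card →
      forestProb ν (ν'.restrict (Set.Iio t)) S₂ ≤ forestProb ν (ν'.restrict (Set.Iio t)) R) :
    cutTerm ν ν' S e ≤ cutTerm ν ν' S' e' := by
  obtain ⟨R₁, R₂, hR₁, hR₂, hstar₁, hstar₂, hstar, hd, hcut⟩ :=
    h'.exists_cutTerm_eq (ν := ν) (ν' := ν') he' (hcard ▸ h.card_eq)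
  rw [h.cutTerm_eq, hcut]
  refine lintegral_mono fun t => mul_le_mul' le_rfl ?_
  calc _ ≤ ν (Set.Ioi t) ^ (R₁.card * R₂.card) * (forestProb ν (ν'.restrict (Set.Iio t)) R₁ *
        forestProb ν (ν'.restrict (Set.Iio t)) R₂) := by
        rw [hR₁, hR₂]
        gcongr
        · exact h₁ t R₁ hstar₁ hR₁.symm
        · exact h₂ t R₂ hstar₂ hR₂.symm
    _ ≤ _ := pow_mul_forestProb_mul_forestProb_le hstar₁.isTreeOn hstar₂.isTreeOn
      hstar.isTreeOn hd (ae_measure_Ioi_le t)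

variable [NullSingletonClass ν']

theorem IsStar.forestProb_le (h' : IsStar c S') (h : IsTreeOn A S) (hcard : S.card = S'.card) :
    forestProb ν ν' S ≤ forestProb ν ν' S' := by
  induction hm : S.card using Nat.strong_induction_on generalizing ν' A S S' with
  | _ m ih =>
  rcases S.eq_empty_or_nonempty with rfl | hne
  · rw [Finset.card_eq_zero.1 (hcard.symm.trans Finset.card_empty)]
  have hne' : S'.Nonempty := Finset.card_pos.1 (hcard ▸ hne.card_pos)
  rw [forestProb_eq_sum_cutTerm h.indep hne, forestProb_eq_sum_cutTerm h'.indep hne']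
  refine sum_le_sum_of_equiv (Finset.equivOfCardEq hcard) fun e => ?_
  obtain ⟨A₁, S₁, A₂, S₂, -, hsplit⟩ := h.exists_isSplit e.2
  have := hsplit.card_eq
  exact hsplit.cutTerm_le_of_isStar h' hcard (Subtype.prop _)
    (fun t R hR hRcard => ih _ (by lia) hR hsplit.left hRcard rfl)
    (fun t R hR hRcard => ih _ (by lia) hR hsplit.right hRcard rfl)

theorem IsSplit.cutTerm_lt_of_isStar (hν' : ν' ≠ 0) (hν : HasStrictTails ν ν')
    (h : IsSplit S e A₁ S₁ A₂ S₂) (hne₁ : S₁.Nonempty) (hne₂ : S₂.Nonempty) (h' : IsStar c S')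
    (hcard : S.card = S'.card) (he' : e' ∈ S') : cutTerm ν ν' S e < cutTerm ν ν' S' e' := by
  obtain ⟨R₁, R₂, hR₁, hR₂, hstar₁, hstar₂, hstar, hd, hcut⟩ :=
    h'.exists_cutTerm_eq (ν := ν) (ν' := ν') he' (hcard ▸ h.card_eq)
  have hfin : cutTerm ν ν' S e < ⊤ := cutTerm_lt_top h.isTreeOn.indep h.mem
  rw [h.cutTerm_eq] at hfin ⊢
  rw [hcut]
  refine lintegral_strict_mono hν' ?_ hfin.ne (hν.mono fun t ht => ?_)
  · exact ((measurable_measure_Ioi.pow_const _).mul measurable_forestProb_restrict).aemeasurable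
  refine ENNReal.mul_lt_mul_right (pow_ne_zero _ ht.2.1)
    (ENNReal.pow_ne_top (measure_ne_top _ _)) ?_
  calc _ ≤ ν (Set.Ioi t) ^ (R₁.card * R₂.card) * (forestProb ν (ν'.restrict (Set.Iio t)) R₁ *
        forestProb ν (ν'.restrict (Set.Iio t)) R₂) := by
        rw [hR₁, hR₂]
        gcongr
        · exact hstar₁.forestProb_le h.left hR₁.symm
        · exact hstar₂.forestProb_le h.right hR₂.symm
    _ < _ := pow_mul_forestProb_mul_forestProb_lt ht.1 hstar₁.isTreeOn hstar₂.isTreeOn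
      hstar.isTreeOn hd (Finset.card_pos.1 (hR₁ ▸ hne₁.card_pos))
      (Finset.card_pos.1 (hR₂ ▸ hne₂.card_pos)) ht.2.2

theorem IsStar.forestProb_lt (hν' : ν' ≠ 0) (hν : HasStrictTails ν ν') (h' : IsStar c S')
    (h : IsTreeOn A S) (hcard : S.card = S'.card) (hS : ∀ x, ¬∀ e ∈ S, x ∈ e) :
    forestProb ν ν' S < forestProb ν ν' S' := by
  obtain ⟨e, he, hpend⟩ : ∃ e ∈ S, ¬IsPendant S e := by
    by_contra! hpend
    obtain ⟨x, hx⟩ := h.exists_forall_mem_of_isPendant hpend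
    exact hS x hx
  rw [← h.smallSide_eq_zero_iff he] at hpend
  have hne' : S'.Nonempty := Finset.card_pos.1 (hcard ▸ Finset.card_pos.2 ⟨e, he⟩)
  have hsum := forestProb_eq_sum_cutTerm (ν := ν) (ν' := ν') h.indep ⟨e, he⟩
  rw [hsum, forestProb_eq_sum_cutTerm h'.indep hne']
  refine sum_lt_sum_of_equiv (Finset.equivOfCardEq hcard) (fun e => ?_) ⟨⟨e, he⟩, ?_⟩
    (hsum ▸ forestProb_lt_top.ne)
  · obtain ⟨A₁, S₁, A₂, S₂, -, hsplit⟩ := h.exists_isSplit e.2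
    exact hsplit.cutTerm_le_of_isStar h' hcard (Subtype.prop _)
      (fun t R hR => hR.forestProb_le hsplit.left) (fun t R hR => hR.forestProb_le hsplit.right)
  · obtain ⟨A₁, S₁, A₂, S₂, -, hsplit⟩ := h.exists_isSplit he
    refine hsplit.cutTerm_lt_of_isStar hν' hν ?_ ?_ h' hcard (Subtype.prop _)
    · exact Finset.card_pos.1 ((Nat.pos_of_ne_zero hpend).trans_le hsplit.smallSide_le)
    · exact Finset.card_pos.1 ((Nat.pos_of_ne_zero hpend).trans_le hsplit.symm.smallSide_le)

end Star

section PathBound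

variable {f : ℕ → V} {i j k l : ℕ}

theorem pathEdges_union_pathEdges (hik : i ≤ k) (hkj : k ≤ j) (hjl : j ≤ l) :
    pathEdges f i j ∪ pathEdges f k l = pathEdges f i l := by
  rw [pathEdges, pathEdges, ← Finset.image_union, Finset.Ico_union_Ico' hkj (by lia),
    min_eq_left hik, max_eq_right hjl, pathEdges]

theorem pathEdges_inter_pathEdges (hf : Set.InjOn f (Set.Icc i l)) (hik : i ≤ k) (hjl : j ≤ l) :
    pathEdges f i j ∩ pathEdges f k l = pathEdges f k j := by
  rw [pathEdges, pathEdges, ← Finset.image_inter_of_injOn, Finset.Ico_inter_Ico,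
    max_eq_right hik, min_eq_left hjl, pathEdges]
  refine (injOn_mk_succ hf).mono ?_
  simp only [Finset.coe_Ico, Set.union_subset_iff]
  exact ⟨Set.Ico_subset_Ico_right hjl, Set.Ico_subset_Ico_left hik⟩

variable {A A₁ A₂ : Finset V} {S S₁ S₂ : Finset (Sym2 V)} {e : Sym2 V}

theorem card_filter_min_lt_le (i j m : ℕ) :
    {k ∈ Finset.Ico i (j + 1) | min (k - i) (j - k) < m}.card ≤ min (2 * m) (j + 1 - i) := by
  refine le_min ?_ ((Finset.card_filter_le _ _).trans_eq (Nat.card_Ico _ _))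
  calc _ ≤ (Finset.Ico i (i + m) ∪ Finset.Ico (j + 1 - m) (j + 1)).card :=
        Finset.card_le_card fun k hk => by
          simp only [Finset.mem_filter, Finset.mem_union, Finset.mem_Ico] at hk ⊢
          lia
    _ ≤ m + m := (Finset.card_union_le _ _).trans (by simp only [Nat.card_Ico]; lia)
    _ = 2 * m := (two_mul m).symm

theorem IsTreeOn.exists_equiv_smallSide_le (h : IsTreeOn A S) (hcard : S.card = j + 1 - i) :
    ∃ σ : Finset.Ico i (j + 1) ≃ S, ∀ k, smallSide S (σ k) ≤ min (k - i) (j - k) :=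
  exists_equiv_of_card_filter_lt_le (by rw [Nat.card_Ico, hcard]) fun m =>
    (card_filter_min_lt_le i j m).trans (hcard ▸ h.min_le_card_smallSide_lt m)

theorem IsTreeOn.exists_smallSide_eq_zero (h : IsTreeOn A S)
    (hS : 2 < {e ∈ S | IsPendant S e}.card) (hij : i ≤ j) (σ : Finset.Ico i (j + 1) ≃ S) :
    ∃ k, smallSide S (σ k) = 0 ∧ i < k ∧ (k : ℕ) < j := by
  obtain ⟨e, he, hne⟩ := Finset.exists_mem_notMem_of_card_lt_card (s := {(σ ⟨i, by simpa⟩ : Sym2 V),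
    (σ ⟨j, by simpa⟩ : Sym2 V)}) (Finset.card_le_two.trans_lt hS)
  obtain ⟨heS, hpend⟩ := Finset.mem_filter.1 he
  obtain ⟨k, hk⟩ := σ.surjective ⟨e, heS⟩
  obtain rfl : (σ k : Sym2 V) = e := congrArg Subtype.val hk
  have hki : (k : ℕ) ≠ i := fun hki => hne (by simp [← hki])
  have hkj : (k : ℕ) ≠ j := fun hkj => hne (by simp [← hkj])
  have := Finset.mem_Ico.1 k.2
  exact ⟨k, (h.smallSide_eq_zero_iff heS).2 hpend, by lia, by lia⟩

variable [Fintype V] {ν ν' : Measure ℝ} {c : ENNReal} [IsFiniteMeasure ν] [IsFiniteMeasure ν']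

theorem pow_mul_forestProb_pathEdges_mul_le (hf : Set.InjOn f (Set.Icc i l)) (hik : i ≤ k)
    (hkj : k ≤ j) (hjl : j ≤ l) (hc : ∀ᵐ t ∂ν', c ≤ ν (Set.Ioi t)) :
    c ^ ((k - i) * (l - j)) *
        (forestProb ν ν' (pathEdges f i j) * forestProb ν ν' (pathEdges f k l)) ≤
      forestProb ν ν' (pathEdges f k j) * forestProb ν ν' (pathEdges f i l) := by
  have tree {a b : ℕ} (ha : i ≤ a) (hab : a ≤ b) (hb : b ≤ l) :=
    isTreeOn_pathEdges (hf.mono (Set.Icc_subset_Icc ha hb)) hab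
  have card {a b : ℕ} (ha : i ≤ a) (hb : b ≤ l) : (pathEdges f a b).card = b - a :=
    card_pathEdges (hf.mono (Set.Icc_subset_Icc ha hb))
  have hunion := pathEdges_union_pathEdges (f := f) hik hkj hjl
  have hinter := pathEdges_inter_pathEdges hf hik hjl
  have htree := tree le_rfl (hik.trans (hkj.trans hjl)) le_rfl
  have hdiff₁ : (pathEdges f i j \ pathEdges f k l).card = k - i := by
    rw [Finset.card_sdiff, Finset.inter_comm, hinter, card le_rfl hjl, card hik hjl]
    lia
  have hdiff₂ : (pathEdges f k l \ pathEdges f i j).card = l - j := by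
    rw [Finset.card_sdiff, hinter, card hik le_rfl, card hik hjl]
    lia
  have hcross := card_chords_sdiff (tree le_rfl (hik.trans hkj) hjl)
    (tree hik (hkj.trans hjl) le_rfl) (hinter ▸ tree hik hkj hjl) (hunion ▸ htree)
  have := forestProb_logSupermodular (S₁ := pathEdges f i j) (S₂ := pathEdges f k l)
    (hunion ▸ htree.indep) hc
  rwa [hcross, hdiff₁, hdiff₂, hunion, hinter] at this

theorem cutTerm_pathEdges_eq (hf : Set.InjOn f (Set.Icc i (j + 1))) (hik : i ≤ k) (hkj : k ≤ j) :
    cutTerm ν ν' (pathEdges f i (j + 1)) s(f k, f (k + 1)) =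
      ∫⁻ t, ν (Set.Ioi t) ^ (j - i) * (ν (Set.Ioi t) ^ ((k - i) * (j - k)) *
        (forestProb ν (ν'.restrict (Set.Iio t)) (pathEdges f i k) *
          forestProb ν (ν'.restrict (Set.Iio t)) (pathEdges f (k + 1) (j + 1)))) ∂ν' := by
  rw [(isSplit_pathEdges hf hik (Nat.lt_succ_of_le hkj)).cutTerm_eq,
    card_pathEdges (hf.mono (Set.Icc_subset_Icc_right (by lia))),
    card_pathEdges (hf.mono (Set.Icc_subset_Icc_left (by lia))), Nat.add_sub_add_right,
    show k - i + (j - k) = j - i by lia]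

theorem mul_eq_mul_add_sub_mul_sub {a b p q : ℕ} (h : a + b = p + q) (hp : a ≤ p) (hq : a ≤ q) :
    p * q = a * b + (p - a) * (q - a) := by
  zify [hp, hq] at h ⊢
  linear_combination -(a : ℤ) * h

theorem IsSplit.pow_mul_forestProb_pathEdges_mul_le (h : IsSplit S e A₁ S₁ A₂ S₂)
    (hf : Set.InjOn f (Set.Icc i (j + 1))) (hcard : S₁.card + S₂.card = j - i)
    (h₁ : i + S₁.card ≤ k) (h₂ : k + S₁.card ≤ j) (hc : ∀ᵐ t ∂ν', c ≤ ν (Set.Ioi t))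
    (hle : ∀ a b, ∀ (B : Finset V) R, Set.InjOn f (Set.Icc a b) → a ≤ b → b - a ≤ j - i →
      IsTreeOn B R → R.card = b - a → forestProb ν ν' (pathEdges f a b) ≤ forestProb ν ν' R) :
    c ^ ((k - i) * (j - k)) *
        (forestProb ν ν' (pathEdges f i k) * forestProb ν ν' (pathEdges f (k + 1) (j + 1))) ≤
      c ^ (S₁.card * S₂.card) * (forestProb ν ν' S₁ * forestProb ν ν' S₂) := by
  have sub {a b : ℕ} (ha : i ≤ a) (hb : b ≤ j + 1) := hf.mono (Set.Icc_subset_Icc ha hb)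
  obtain ⟨m, rfl⟩ : ∃ m, k = m + S₁.card := Nat.exists_eq_add_of_le' (by lia)
  obtain ⟨l, rfl⟩ : ∃ l, j = l + S₁.card := Nat.exists_eq_add_of_le' (by lia)
  have hexp : (m + S₁.card - i) * (l + S₁.card - (m + S₁.card)) =
      S₁.card * S₂.card + (m - i) * (l - (m + S₁.card)) := by
    rw [mul_eq_mul_add_sub_mul_sub (a := S₁.card) (b := S₂.card) (by lia) (by lia) (by lia)]
    congr 2 <;> lia
  rw [hexp, pow_add, mul_assoc]
  refine mul_le_mul' le_rfl ?_
  -- The second subpath has as many edges as `f m, …, f l`, which overlaps the first one in as many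
  -- edges as `S₁` has, so that log-supermodularity applies.
  calc c ^ ((m - i) * (l - (m + S₁.card))) * (forestProb ν ν' (pathEdges f i (m + S₁.card)) *
        forestProb ν ν' (pathEdges f (m + S₁.card + 1) (l + S₁.card + 1)))
      ≤ c ^ ((m - i) * (l - (m + S₁.card))) *
          (forestProb ν ν' (pathEdges f i (m + S₁.card)) * forestProb ν ν' (pathEdges f m l)) := by
        gcongr
        refine hle _ _ _ _ (sub (by lia) le_rfl) (by lia) (by lia)
          (isTreeOn_pathEdges (sub (by lia) (by lia)) (by lia)) ?_
        rw [card_pathEdges (sub (by lia) (by lia))]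
        lia
    _ ≤ forestProb ν ν' (pathEdges f m (m + S₁.card)) * forestProb ν ν' (pathEdges f i l) :=
        RST.pow_mul_forestProb_pathEdges_mul_le (sub le_rfl (by lia)) (by lia) (by lia) (by lia) hc
    _ ≤ forestProb ν ν' S₁ * forestProb ν ν' S₂ := by
        gcongr
        · exact hle _ _ _ _ (sub (by lia) (by lia)) (by lia) (by lia) h.left (by lia)
        · exact hle _ _ _ _ (sub (by lia) (by lia)) (by lia) (by lia) h.right (by lia)

theorem pow_mul_forestProb_pathEdges_mul_lt (hν' : ν' ≠ 0) (hf : Set.InjOn f (Set.Icc i j))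
    (hik : i < k) (hkj : k < j) (hc : ∀ᵐ t ∂ν', c < ν (Set.Ioi t)) :
    c ^ ((k - i) * (j - k)) *
        (forestProb ν ν' (pathEdges f i k) * forestProb ν ν' (pathEdges f k j)) <
      forestProb ν ν' (pathEdges f i j) := by
  have hf₁ := hf.mono (Set.Icc_subset_Icc_right hkj.le)
  have hf₂ := hf.mono (Set.Icc_subset_Icc_left hik.le)
  have hunion := pathEdges_union_pathEdges (f := f) hik.le le_rfl hkj.le
  have hinter := pathEdges_inter_pathEdges hf hik.le hkj.le
  have hcard₁ := card_pathEdges hf₁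
  have hcard₂ := card_pathEdges hf₂
  rw [← hcard₁, ← hcard₂]
  refine (pow_mul_forestProb_mul_forestProb_lt hν' (isTreeOn_pathEdges hf₁ hik.le)
    (isTreeOn_pathEdges hf₂ hkj.le) (hunion ▸ isTreeOn_pathEdges hf (hik.trans hkj).le) ?_ ?_ ?_
    hc).trans_eq (by rw [hunion])
  · simpa [Finset.disjoint_iff_inter_eq_empty, pathEdges] using hinter
  · exact Finset.card_pos.1 (by lia)
  · exact Finset.card_pos.1 (by lia)

theorem IsSplit.cutTerm_pathEdges_le (h : IsSplit S e A₁ S₁ A₂ S₂)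
    (hf : Set.InjOn f (Set.Icc i (j + 1))) (hcard : S₁.card + S₂.card = j - i)
    (h₁ : i + S₁.card ≤ k) (h₂ : k + S₁.card ≤ j)
    (hle : ∀ t a b, ∀ (B : Finset V) R, Set.InjOn f (Set.Icc a b) → a ≤ b → b - a ≤ j - i →
      IsTreeOn B R → R.card = b - a → forestProb ν (ν'.restrict (Set.Iio t)) (pathEdges f a b) ≤
        forestProb ν (ν'.restrict (Set.Iio t)) R) :
    cutTerm ν ν' (pathEdges f i (j + 1)) s(f k, f (k + 1)) ≤ cutTerm ν ν' S e := by
  rw [cutTerm_pathEdges_eq hf (by lia) (by lia), h.cutTerm_eq, hcard]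
  exact lintegral_mono fun t => mul_le_mul' le_rfl
    (h.pow_mul_forestProb_pathEdges_mul_le hf hcard h₁ h₂ (ae_measure_Ioi_le t) (hle t))

variable [NullSingletonClass ν']

theorem forestProb_pathEdges_eq_sum (hf : Set.InjOn f (Set.Icc i j)) (hij : i < j) :
    forestProb ν ν' (pathEdges f i j) =
      ∑ k ∈ Finset.Ico i j, cutTerm ν ν' (pathEdges f i j) s(f k, f (k + 1)) := by
  rw [forestProb_eq_sum_cutTerm (isTreeOn_pathEdges hf hij.le).indep
    (Finset.card_pos.1 (by rw [card_pathEdges hf]; lia))]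
  conv_lhs => rw [pathEdges, Finset.sum_image (by simpa using injOn_mk_succ hf)]
  rfl

theorem forestProb_pathEdges_le (hf : Set.InjOn f (Set.Icc i j)) (hij : i ≤ j) (h : IsTreeOn A S)
    (hcard : S.card = j - i) : forestProb ν ν' (pathEdges f i j) ≤ forestProb ν ν' S := by
  induction hm : S.card using Nat.strong_induction_on generalizing ν' A S i j with
  | _ m ih =>
  rcases hij.eq_or_lt with rfl | hij
  · obtain rfl : S = ∅ := Finset.card_eq_zero.1 (hcard.trans (Nat.sub_self i))
    simp [pathEdges]
  obtain ⟨j, rfl⟩ := Nat.exists_eq_succ_of_ne_zero (Nat.ne_zero_of_lt hij)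
  obtain ⟨σ, hσ⟩ := h.exists_equiv_smallSide_le hcard
  rw [forestProb_pathEdges_eq_sum hf hij,
    forestProb_eq_sum_cutTerm h.indep (Finset.card_pos.1 (by lia))]
  refine sum_le_sum_of_equiv σ fun k => ?_
  obtain ⟨A₁, S₁, A₂, S₂, hsplit, hsmall⟩ := h.exists_isSplit_smallSide (σ k).2
  have hk := Finset.mem_Ico.1 k.2
  have := hsplit.card_eq
  have := hσ k
  exact hsplit.cutTerm_pathEdges_le hf (by lia) (by lia) (by lia)
    fun t a b B R hf hab hba hR hRcard => ih _ (by lia) hf hab hR hRcard rfl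

theorem IsSplit.cutTerm_pathEdges_lt (hν' : ν' ≠ 0) (hν : HasStrictTails ν ν')
    (h : IsSplit S e A₁ ∅ A₂ S₂) (hf : Set.InjOn f (Set.Icc i (j + 1))) (hcard : S₂.card = j - i)
    (hik : i < k) (hkj : k < j) :
    cutTerm ν ν' (pathEdges f i (j + 1)) s(f k, f (k + 1)) < cutTerm ν ν' S e := by
  have sub {a b : ℕ} (ha : i ≤ a) (hb : b ≤ j + 1) := hf.mono (Set.Icc_subset_Icc ha hb)
  have hfin : cutTerm ν ν' (pathEdges f i (j + 1)) s(f k, f (k + 1)) < ⊤ :=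
    cutTerm_lt_top (isTreeOn_pathEdges hf (by lia)).indep
      (Finset.mem_image_of_mem _ (Finset.mem_Ico.2 (by lia)))
  rw [cutTerm_pathEdges_eq hf hik.le hkj.le] at hfin ⊢
  simp only [h.cutTerm_eq, Finset.card_empty, zero_add, zero_mul, pow_zero, one_mul,
    forestProb_empty, hcard]
  refine lintegral_strict_mono hν' ?_ hfin.ne (hν.mono fun t ht => ?_)
  · exact ((measurable_measure_Ioi.pow_const _).mul measurable_forestProb_restrict).aemeasurable
  refine ENNReal.mul_lt_mul_right (pow_ne_zero _ ht.2.1)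
    (ENNReal.pow_ne_top (measure_ne_top _ _)) ?_
  calc _ ≤ ν (Set.Ioi t) ^ ((k - i) * (j - k)) *
        (forestProb ν (ν'.restrict (Set.Iio t)) (pathEdges f i k) *
          forestProb ν (ν'.restrict (Set.Iio t)) (pathEdges f k j)) := by
        gcongr
        refine forestProb_pathEdges_le (sub (by lia) le_rfl) (by lia)
          (isTreeOn_pathEdges (sub hik.le (by lia)) hkj.le) ?_
        rw [card_pathEdges (sub hik.le (by lia)), Nat.add_sub_add_right]
    _ < forestProb ν (ν'.restrict (Set.Iio t)) (pathEdges f i j) :=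
        pow_mul_forestProb_pathEdges_mul_lt ht.1 (sub le_rfl (by lia)) hik hkj ht.2.2
    _ ≤ forestProb ν (ν'.restrict (Set.Iio t)) S₂ :=
        forestProb_pathEdges_le (sub le_rfl (by lia)) (by lia) h.right hcard

theorem forestProb_pathEdges_lt (hν' : ν' ≠ 0) (hν : HasStrictTails ν ν')
    (hf : Set.InjOn f (Set.Icc i j)) (hij : i < j) (h : IsTreeOn A S)
    (hcard : S.card = j - i) (hS : 2 < {e ∈ S | IsPendant S e}.card) :
    forestProb ν ν' (pathEdges f i j) < forestProb ν ν' S := by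
  obtain ⟨j, rfl⟩ := Nat.exists_eq_succ_of_ne_zero (Nat.ne_zero_of_lt hij)
  obtain ⟨σ, hσ⟩ := h.exists_equiv_smallSide_le hcard
  obtain ⟨k, hk₀, hik, hkj⟩ := h.exists_smallSide_eq_zero hS (by lia) σ
  have hsum := forestProb_pathEdges_eq_sum (ν := ν) (ν' := ν') hf hij
  rw [hsum, forestProb_eq_sum_cutTerm h.indep (Finset.card_pos.1 (by lia))]
  refine sum_lt_sum_of_equiv σ (fun l => ?_) ⟨k, ?_⟩ (hsum ▸ forestProb_lt_top.ne)
  · obtain ⟨A₁, S₁, A₂, S₂, hsplit, hsmall⟩ := h.exists_isSplit_smallSide (σ l).2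
    have hl := Finset.mem_Ico.1 l.2
    have := hsplit.card_eq
    have := hσ l
    exact hsplit.cutTerm_pathEdges_le hf (by lia) (by lia) (by lia)
      fun t a b B R hf hab _ hR hRcard => forestProb_pathEdges_le hf hab hR hRcard
  · obtain ⟨A₁, S₁, A₂, S₂, hsplit, hsmall⟩ := h.exists_isSplit_smallSide (σ k).2
    obtain rfl : S₁ = ∅ := Finset.card_eq_zero.1 (hsmall.trans hk₀)
    have := hsplit.card_eq
    rw [Finset.card_empty] at this
    exact hsplit.cutTerm_pathEdges_lt hν' hν hf (by lia) hik hkj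

end PathBound

section MinimumSpanningTree

variable {A : Finset V} {R S T : Finset (Sym2 V)} {f : Sym2 V} {w : Sym2 V → ℝ}

theorem exists_notMem_edgeClosure_of_notMem (hf : f ∈ edgeClosure S) (hfR : f ∉ edgeClosure R) :
    ∃ e ∈ S, e ∉ edgeClosure R := by
  by_contra! hSR
  obtain ⟨x, y⟩ := f
  exact hfR (edgeClosure_induction (P := fun z => s(x, z) ∈ edgeClosure R)
    (fun a b hab hxa => mk_mem_edgeClosure_trans hxa (hSR _ hab)) hf
    (mem_edgeClosure_of_isDiag (by simp)))

theorem sum_insert_erase_add {e : Sym2 V} (he : e ∈ S) (hf : f ∉ S) :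
    ∑ a ∈ insert f (S.erase e), w a + w e = ∑ a ∈ S, w a + w f := by
  rw [Finset.sum_insert fun h => hf (Finset.mem_of_mem_erase h), add_assoc,
    Finset.sum_erase_add _ _ he, add_comm]

variable [Fintype V]

theorem IsTreeOn.mem_closingWeights (h : IsTreeOn A S)
    (hmin : ∀ T, IsTreeOn A T → T ≠ S → ∑ e ∈ S, w e < ∑ e ∈ T, w e) (hf : f ∈ chords S) :
    w f ∈ closingWeights S f w := by
  by_contra hcl
  have hfA : ∀ x ∈ f, x ∈ A := by
    have := h.chords_union_self ▸ Finset.mem_union_left S hf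
    simp only [Finset.mem_image, Finset.mem_offDiag, Prod.exists,
      Function.uncurry_apply_pair] at this
    obtain ⟨x, y, hxy, rfl⟩ := this
    simp [hxy]
  rw [mem_chords] at hf
  obtain ⟨e, he, heR, hfe⟩ := h.indep.exists_notMem_edgeClosure_erase hf.2.1 hcl
  have hwe : w f ≤ w e := by simpa [he] using heR
  have hne : insert f (S.erase e) ≠ S := fun heq => hf.2.2 (heq ▸ Finset.mem_insert_self _ _)
  linarith [hmin _ (h.insert_erase he hfA hfe) hne, sum_insert_erase_add (w := w) he hf.2.2]

theorem IsTreeOn.sum_lt_sum (h : IsTreeOn A S)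
    (hchords : ∀ f ∈ chords S, w f ∈ closingWeights S f w) (hT : IsTreeOn A T) (hne : T ≠ S) :
    ∑ e ∈ S, w e < ∑ e ∈ T, w e := by
  induction hn : (T \ S).card using Nat.strong_induction_on generalizing T with
  | _ n ih =>
    obtain ⟨f, hfT, hfS⟩ : ∃ f ∈ T, f ∉ S := by
      by_contra! hTS
      exact hne (Finset.eq_of_subset_of_card_le hTS
        (Nat.add_right_cancel (h.card_eq.symm.trans hT.card_eq)).le)
    have hfA := hT.mem f hfT
    have hfcl : f ∈ edgeClosure S := by
      obtain ⟨x, y⟩ := f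
      exact h.conn x (hfA x (by simp)) y (hfA y (by simp))
    obtain ⟨e, he, hecl⟩ := exists_notMem_edgeClosure_of_notMem
      (hchords f (mem_chords.2 ⟨hT.indep.not_isDiag hfT, hfcl, hfS⟩)) (hT.indep f hfT)
    obtain ⟨heS, hwe⟩ := Finset.mem_filter.1 he
    have heT : e ∉ T := fun heT => hecl (mem_edgeClosure_of_mem
      (Finset.mem_erase.2 ⟨fun hef => hfS (hef ▸ heS), heT⟩))
    have hT' := hT.insert_erase hfT (h.mem e heS) hecl
    have hcard : (insert e (T.erase f) \ S).card < n := by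
      rw [Finset.insert_sdiff_of_mem _ heS, Finset.erase_sdiff_comm, ← hn]
      exact Finset.card_erase_lt_of_mem (Finset.mem_sdiff.2 ⟨hfT, hfS⟩)
    have hle : ∑ a ∈ S, w a ≤ ∑ a ∈ insert e (T.erase f), w a := by
      by_cases heq : insert e (T.erase f) = S
      · rw [heq]
      · exact (ih _ hcard hT' heq rfl).le
    linarith [sum_insert_erase_add (w := w) hfT heT]

theorem treeWeight_domRestrict {G : SimpleGraph V} (hT : ↑T ⊆ G.edgeSet) :
    treeWeight G (G.edgeSet.domRestrict w) T = ∑ e ∈ T, w e := by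
  simp only [treeWeight, Set.domRestrict_apply]
  rw [Finset.sum_set_coe _ (f := fun e => if e ∈ T then w e else 0), Finset.sum_ite_mem,
    Finset.inter_eq_right.2]
  exact fun e he => Set.mem_toFinset.2 (hT he)

theorem domRestrict_mem_mstEvent_iff (hS : IsSpanningTree ⊤ S) :
    (⊤ : SimpleGraph V).edgeSet.domRestrict w ∈ mstEvent ⊤ S ↔
      ∀ f ∈ chords S, w f ∈ closingWeights S f w := by
  have h := isTreeOn_univ_iff.2 hS
  constructor
  · rintro ⟨-, hmin⟩ f hf
    refine h.mem_closingWeights (fun T hT hne => ?_) hf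
    rw [isTreeOn_univ_iff] at hT
    simpa only [treeWeight_domRestrict hS.1, treeWeight_domRestrict hT.1] using hmin T hT hne
  · refine fun hchords => ⟨hS, fun T hT hne => ?_⟩
    rw [treeWeight_domRestrict hS.1, treeWeight_domRestrict hT.1]
    exact h.sum_lt_sum hchords (isTreeOn_univ_iff.2 hT) hne

theorem measurableSet_forall_chords : MeasurableSet
    {w : Sym2 V → ℝ | ∀ f ∈ chords S, w f ∈ closingWeights S f w} := by
  have : {w : Sym2 V → ℝ | ∀ f ∈ chords S, w f ∈ closingWeights S f w} =
      ⋂ f ∈ chords S, (fun w => (w, w f)) ⁻¹' {p | p.2 ∈ closingWeights S f p.1} := by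
    ext w
    simp
  rw [this]
  exact Finset.measurableSet_biInter _ fun f _ =>
    (measurable_id.prodMk (measurable_pi_apply f)) (measurableSet_closingWeights S f)

theorem lmarginal_compl_forall_chords (ν : Measure ℝ) [IsProbabilityMeasure ν] :
    (∫⋯∫⁻_Sᶜ, {w | ∀ f ∈ chords S, w f ∈ closingWeights S f w}.indicator 1 ∂fun _ => ν) =
      survival ν S := by
  ext w
  let U (f : Sym2 V) : Set ℝ := if f ∈ chords S then closingWeights S f w else Set.univ
  have event_eq (y : (Sᶜ : Finset (Sym2 V)) → ℝ) :
      {w | ∀ f ∈ chords S, w f ∈ closingWeights S f w}.indicator (1 : (Sym2 V → ℝ) → ENNReal)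
        (Function.updateFinset w Sᶜ y) =
      (Set.univ.pi fun f : (Sᶜ : Finset (Sym2 V)) => U f).indicator 1 y := by
    have closing (f : Sym2 V) :
        closingWeights S f (Function.updateFinset w Sᶜ y) = closingWeights S f w :=
      closingWeights_congr fun e he => by simp [Function.updateFinset, he]
    have mem_iff : (∀ f ∈ chords S, Function.updateFinset w Sᶜ y f ∈ closingWeights S f w) ↔
        ∀ f : (Sᶜ : Finset (Sym2 V)), y f ∈ U f := by
      refine ⟨fun h f => ?_, fun h f hf => ?_⟩
      · by_cases hf : (f : Sym2 V) ∈ chords S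
        · simpa [U, hf, Function.updateFinset, (mem_chords.1 hf).2.2] using h f hf
        · simp [U, hf]
      · have hfS := (mem_chords.1 hf).2.2
        simpa [U, hf, Function.updateFinset, hfS] using h ⟨f, Finset.mem_compl.2 hfS⟩
    simp only [Set.indicator, Set.mem_ofPred, closing, mem_iff, Set.mem_univ_pi, Pi.one_apply]
  have hU : MeasurableSet (Set.univ.pi fun f : (Sᶜ : Finset (Sym2 V)) => U f) := by
    refine MeasurableSet.univ_pi fun f => ?_
    by_cases hf : (f : Sym2 V) ∈ chords S
    · simpa [U, hf] using isUpperSet_closingWeights.ordConnected.measurableSet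
    · simp [U, hf]
  simp only [lmarginal, event_eq]
  rw [lintegral_indicator_one hU, Measure.pi_pi, Finset.prod_coe_sort Sᶜ fun f => ν (U f)]
  have hsub : chords S ⊆ Sᶜ := fun f hf => Finset.mem_compl.2 (mem_chords.1 hf).2.2
  rw [survival, ← Finset.prod_subset hsub fun f _ hf => by simp [U, hf]]
  exact Finset.prod_congr rfl fun f hf => by simp [U, hf]

theorem pi_forall_chords (ν : Measure ℝ) [IsProbabilityMeasure ν] :
    Measure.pi (fun _ : Sym2 V => ν) {w | ∀ f ∈ chords S, w f ∈ closingWeights S f w} =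
      forestProb ν ν S := by
  have hmeas := measurableSet_forall_chords (S := S)
  rw [← lintegral_indicator_one hmeas, lintegral_eq_lmarginal_univ 0,
    ← Finset.union_compl S, lmarginal_union _ _ (measurable_one.indicator hmeas)
      disjoint_compl_right, lmarginal_compl_forall_chords, forestProb]

instance : IsProbabilityMeasure weightLaw :=
  ⟨by simp⟩

theorem map_domRestrict_edgeUniform {ι : Type*} [Fintype ι] (E : Set ι) [Fintype E] :
    (edgeUniform ι).map E.domRestrict = edgeUniform E := by
  rw [edgeUniform, edgeUniform, ← Measure.infinitePi_eq_pi, ← Measure.infinitePi_eq_pi,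
    Measure.infinitePi_map_restrict']

theorem measurable_treeWeight (G : SimpleGraph V) : Measurable fun w => treeWeight G w T :=
  Finset.measurable_sum _ fun e _ => by split_ifs <;> fun_prop

theorem measurableSet_mstEvent (G : SimpleGraph V) : MeasurableSet (mstEvent G T) := by
  simp only [mstEvent, Set.ofPred_and, Set.ofPred_forall]
  exact (MeasurableSet.const _).inter <| .iInter fun T' => .iInter fun _ =>
    .iInter fun _ => measurableSet_lt (measurable_treeWeight G)
      (measurable_treeWeight G)

theorem mstProb_eq_toReal_forestProb (hS : IsSpanningTree ⊤ S) :
    mstProb ⊤ S = (forestProb weightLaw weightLaw S).toReal := by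
  have preimage : (⊤ : SimpleGraph V).edgeSet.domRestrict ⁻¹' mstEvent ⊤ S =
      {w | ∀ f ∈ chords S, w f ∈ closingWeights S f w} :=
    Set.ext fun w => domRestrict_mem_mstEvent_iff hS
  rw [mstProb, ← map_domRestrict_edgeUniform, Measure.map_apply (by fun_prop)
    (measurableSet_mstEvent ⊤), preimage, edgeUniform, pi_forall_chords]

theorem mstProb_le_of_forestProb_le (hS : IsSpanningTree ⊤ S) (hT : IsSpanningTree ⊤ T)
    (h : forestProb weightLaw weightLaw S ≤ forestProb weightLaw weightLaw T) :
    mstProb ⊤ S ≤ mstProb ⊤ T := by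
  rw [mstProb_eq_toReal_forestProb hS, mstProb_eq_toReal_forestProb hT]
  exact ENNReal.toReal_mono forestProb_lt_top.ne h

theorem mstProb_lt_of_forestProb_lt (hS : IsSpanningTree ⊤ S) (hT : IsSpanningTree ⊤ T)
    (h : forestProb weightLaw weightLaw S < forestProb weightLaw weightLaw T) :
    mstProb ⊤ S < mstProb ⊤ T := by
  rw [mstProb_eq_toReal_forestProb hS, mstProb_eq_toReal_forestProb hT]
  exact ENNReal.toReal_strict_mono forestProb_lt_top.ne h

end MinimumSpanningTree

section Extremal

variable {n : ℕ} {S T : Finset (Sym2 (Fin n))}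

theorem isPathTree_iff : IsPathTree n T ↔ IsSpanningTree ⊤ T ∧
    ∃ f : ℕ → Fin n, Set.InjOn f (Set.Icc 0 (n - 1)) ∧ T = pathEdges f 0 (n - 1) := by
  refine and_congr_right fun hT => exists_congr fun f => and_congr ?_ ?_
  · have := Fin.pos_iff_nonempty.2 hT.2.1.nonempty
    have mem_Icc (i : ℕ) : i ∈ Set.Icc 0 (n - 1) ↔ i < n := by
      simp only [Set.mem_Icc]
      lia
    simp only [Set.InjOn, mem_Icc]
  · rw [pathEdges, Finset.range_eq_Ico]
    convert Iff.rfl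

theorem card_eq_of_isSpanningTree (hT : IsSpanningTree ⊤ T) : T.card = n - 1 := by
  have := (isTreeOn_univ_iff.2 hT).card_eq
  rw [Finset.card_univ, Fintype.card_fin] at this
  lia

theorem IsStarTree.exists_isStar (h : IsStarTree n S) : ∃ c, IsStar c S :=
  h.2.imp fun _ hc => ⟨(isTreeOn_univ_iff.2 h.1).indep, hc⟩

theorem weightLaw_ne_zero : weightLaw ≠ 0 :=
  IsProbabilityMeasure.ne_zero _

theorem IsStarTree.mstProb_le (h : IsStarTree n S) (hT : IsSpanningTree ⊤ T) :
    mstProb ⊤ T ≤ mstProb ⊤ S := by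
  obtain ⟨c, hc⟩ := h.exists_isStar
  refine mstProb_le_of_forestProb_le hT h.1 (hc.forestProb_le (isTreeOn_univ_iff.2 hT) ?_)
  rw [card_eq_of_isSpanningTree hT, card_eq_of_isSpanningTree h.1]

theorem IsStarTree.mstProb_lt (h : IsStarTree n S) (hT : IsSpanningTree ⊤ T)
    (hT' : ¬IsStarTree n T) : mstProb ⊤ T < mstProb ⊤ S := by
  obtain ⟨c, hc⟩ := h.exists_isStar
  refine mstProb_lt_of_forestProb_lt hT h.1 (hc.forestProb_lt weightLaw_ne_zero
    hasStrictTails_weightLaw (isTreeOn_univ_iff.2 hT) ?_ fun x hx => hT' ⟨hT, x, hx⟩)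
  rw [card_eq_of_isSpanningTree hT, card_eq_of_isSpanningTree h.1]

theorem IsPathTree.mstProb_le (h : IsPathTree n S) (hT : IsSpanningTree ⊤ T) :
    mstProb ⊤ S ≤ mstProb ⊤ T := by
  obtain ⟨hS, f, hf, rfl⟩ := isPathTree_iff.1 h
  exact mstProb_le_of_forestProb_le hS hT (forestProb_pathEdges_le hf (Nat.zero_le _)
    (isTreeOn_univ_iff.2 hT) (card_eq_of_isSpanningTree hT))

theorem two_lt_card_isPendant (hT : IsSpanningTree ⊤ T) (hT' : ¬IsPathTree n T) :
    2 < {e ∈ T | IsPendant T e}.card := by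
  by_contra! hcard
  obtain ⟨f, hf, -, hTf⟩ := (isTreeOn_univ_iff.2 hT).exists_eq_pathEdges hcard
  rw [card_eq_of_isSpanningTree hT] at hf hTf
  exact hT' (isPathTree_iff.2 ⟨hT, f, hf, hTf⟩)

theorem IsPathTree.mstProb_lt (h : IsPathTree n S) (hT : IsSpanningTree ⊤ T)
    (hT' : ¬IsPathTree n T) : mstProb ⊤ S < mstProb ⊤ T := by
  obtain ⟨hS, f, hf, rfl⟩ := isPathTree_iff.1 h
  have hpend := two_lt_card_isPendant hT hT'
  have hcard := card_eq_of_isSpanningTree hT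
  have := Finset.card_filter_le T (IsPendant T)
  exact mstProb_lt_of_forestProb_lt hS hT (forestProb_pathEdges_lt weightLaw_ne_zero
    hasStrictTails_weightLaw hf (by lia) (isTreeOn_univ_iff.2 hT) hcard hpend)

end Extremal

/-- Most and least likely trees in `K_n` (`n ≥ 2`): for every spanning tree `T`,
`P_MST(T⋆) ≥ P_MST(T) ≥ P_MST(T_P)` where `T⋆` is any star and `T_P` any Hamiltonian
path; equality holds on the left iff `T` is a star, and on the right iff `T` is a
path. -/
theorem stars_and_paths_extremal (n : ℕ) (hn : 2 ≤ n)
    (Tstar TP T : Finset (Sym2 (Fin n)))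
    (hstar : IsStarTree n Tstar) (hpath : IsPathTree n TP)
    (hT : IsSpanningTree (⊤ : SimpleGraph (Fin n)) T) :
    (mstProb (⊤ : SimpleGraph (Fin n)) Tstar ≥ mstProb (⊤ : SimpleGraph (Fin n)) T ∧
      mstProb (⊤ : SimpleGraph (Fin n)) T ≥ mstProb (⊤ : SimpleGraph (Fin n)) TP) ∧
    (mstProb (⊤ : SimpleGraph (Fin n)) Tstar = mstProb (⊤ : SimpleGraph (Fin n)) T ↔
      IsStarTree n T) ∧
    (mstProb (⊤ : SimpleGraph (Fin n)) T = mstProb (⊤ : SimpleGraph (Fin n)) TP ↔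
      IsPathTree n T) := by
  refine ⟨⟨hstar.mstProb_le hT, hpath.mstProb_le hT⟩, ⟨fun heq => ?_, fun hT' => ?_⟩,
    fun heq => ?_, fun hT' => ?_⟩
  · by_contra hT'
    exact (hstar.mstProb_lt hT hT').ne' heq
  · exact (hT'.mstProb_le hstar.1).antisymm (hstar.mstProb_le hT)
  · by_contra hT'
    exact (hpath.mstProb_lt hT hT').ne' heq
  · exact (hT'.mstProb_le hpath.1).antisymm (hpath.mstProb_le hT)

end RST
end
end

section
/- For every s = (s_1, …, s_m) ∈ ℝ^m there exists s' = (s'_1, …, s'_m) ∈ ℝ^m such that the union ⋃_{i=1}^m [s'_i, s'_i + 1] is a connected subset of ℝ, and such that the induced distributions on permutations agree: for independent random variables U_i uniform on [s_i, s_i+1] and U'_i uniform on [s'_i, s'_i+1], every permutation σ of {1,…,m} satisfies P(U_{σ(1)} < U_{σ(2)} < ⋯ < U_{σ(m)}) = P(U'_{σ(1)} < U'_{σ(2)} < ⋯ < U'_{σ(m)}). -/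
/-!
Let `U` be the union of the intervals and let `F y` be the signed length of the part of `U` between
`0` and `y`. On each interval of `U` the map `F` is a translation, on each gap it is constant, and
away from the right endpoints of the intervals it is strictly increasing on `U`. Take
`s' i = F (s i)`: if `x` has the law attached to `s`, then the `F (x i)` have the law attached to
`s'` and almost surely come in the same order as the `x i`, while the new union is `F '' U`, which
has no gaps left.
-/

open MeasureTheory

noncomputable section

namespace RST

/-- The shifted-interval product measure on `ℝ^m`: the `i`-th coordinate is uniform on
`[s i, s i + 1]`. -/
def shiftPi (m : ℕ) (s : Fin m → ℝ) : Measure (Fin m → ℝ) :=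
  Measure.pi fun i => (volume : Measure ℝ).restrict (Set.Icc (s i) (s i + 1))

open Set

lemma measurableSet_strictMono_comp {ι κ α : Type*} [Countable ι] [Preorder ι] [LinearOrder α]
    [TopologicalSpace α] [OrderClosedTopology α] [SecondCountableTopology α] [MeasurableSpace α]
    [OpensMeasurableSpace α] (e : ι → κ) :
    MeasurableSet {x : κ → α | StrictMono fun i => x (e i)} := by
  simp only [StrictMono, ofPred_forall]
  measurability

section Collapse

/-- The map collapsing the gaps of `U`: the signed length of the part of `U` between `0` and `y`.
The base point `0` is arbitrary, and only affects the map by an additive constant. -/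
def collapse (U : Set ℝ) (y : ℝ) : ℝ := ∫ _ in (0 : ℝ)..y, (1 : ℝ) ∂volume.restrict U

variable {U : Set ℝ} {a b x y : ℝ}

lemma continuous_collapse (U : Set ℝ) : Continuous (collapse U) :=
  intervalIntegral.continuous_primitive (fun _ _ => intervalIntegrable_const) 0

lemma collapse_sub_collapse (U : Set ℝ) (hxy : x ≤ y) :
    collapse U y - collapse U x = volume.real (Ioc x y ∩ U) := by
  rw [collapse, collapse, intervalIntegral.integral_interval_sub_left intervalIntegrable_const
    intervalIntegrable_const, intervalIntegral.integral_of_le hxy, setIntegral_const,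
    measureReal_restrict_apply measurableSet_Ioc, smul_eq_mul, mul_one]

lemma monotone_collapse (U : Set ℝ) : Monotone (collapse U) := fun _ _ hxy =>
  sub_nonneg.1 <| (collapse_sub_collapse U hxy).symm ▸ measureReal_nonneg

lemma collapse_eq_of_disjoint (hxy : x ≤ y) (hU : Disjoint (Ioc x y) U) :
    collapse U y = collapse U x := by
  rw [← sub_eq_zero, collapse_sub_collapse U hxy, hU.inter_eq, measureReal_empty]

lemma eqOn_collapse_add_const (hU : Icc a b ⊆ U) :
    EqOn (collapse U) (fun y => y + (collapse U a - a)) (Icc a b) := by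
  intro y hy
  have hyU : Ioc a y ⊆ U := fun t ht => hU ⟨ht.1.le, ht.2.trans hy.2⟩
  have hlength : collapse U y - collapse U a = y - a := by
    rw [collapse_sub_collapse U hy.1, inter_eq_left.2 hyU, Real.volume_real_Ioc_of_le hy.1]
  linarith

lemma image_collapse_Icc (hU : Icc a b ⊆ U) :
    collapse U '' Icc a b = Icc (collapse U a) (collapse U a + (b - a)) := by
  rw [(eqOn_collapse_add_const hU).image_eq, image_add_const_Icc]
  congr 1 <;> ring

lemma measurePreserving_collapse (hU : Icc a b ⊆ U) :
    MeasurePreserving (collapse U) (volume.restrict (Icc a b))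
      (volume.restrict (collapse U '' Icc a b)) := by
  have htranslate := (measurePreserving_add_right volume (collapse U a - a)).restrict_image_emb
    (measurableEmbedding_addRight _) (Icc a b)
  have heq := eqOn_collapse_add_const hU
  rw [heq.image_eq]
  refine ⟨(continuous_collapse U).measurable, ?_⟩
  rw [Measure.map_congr (ae_restrict_of_forall_mem measurableSet_Icc heq), htranslate.map_eq]

lemma strictMonoOn_collapse {ι : Type*} {l r : ι → ℝ} (hU : ∀ i, Icc (l i) (r i) ⊆ U) :
    StrictMonoOn (collapse U) (⋃ i, Ico (l i) (r i)) := by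
  intro x hx y _ hxy
  obtain ⟨i, hi⟩ := mem_iUnion.1 hx
  have hlt : x < min y (r i) := lt_min hxy hi.2
  have heq := eqOn_collapse_add_const (hU i)
  calc
    collapse U x = x + (collapse U (l i) - l i) := heq ⟨hi.1, hi.2.le⟩
    _ < min y (r i) + (collapse U (l i) - l i) := by gcongr
    _ = collapse U (min y (r i)) := (heq ⟨hi.1.trans hlt.le, min_le_right _ _⟩).symm
    _ ≤ collapse U y := monotone_collapse U (min_le_left _ _)

lemma isPreconnected_image_collapse (hU : IsClosed U) : IsPreconnected (collapse U '' U) := by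
  refine (ordConnected_of_Ioo ?_).isPreconnected
  rintro _ ⟨x, hx, rfl⟩ _ ⟨y, -, rfl⟩ hlt z hz
  have hxy : x ≤ y := ((monotone_collapse U).reflect_lt hlt).le
  obtain ⟨w, hw, rfl⟩ :=
    intermediate_value_Icc hxy (continuous_collapse U).continuousOn (Ioo_subset_Icc_self hz)
  have hcompact : IsCompact (Icc x w ∩ U) := isCompact_Icc.inter_right hU
  -- `collapse U` is constant from the last point `v` of `U` before `w` up to `w`.
  obtain ⟨v, ⟨hv, hvU⟩, hmax⟩ := hcompact.exists_isGreatest ⟨x, ⟨le_rfl, hw.1⟩, hx⟩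
  refine ⟨v, hvU, (collapse_eq_of_disjoint hv.2 ?_).symm⟩
  exact disjoint_left.2 fun t ht htU =>
    ht.1.not_ge (hmax ⟨⟨hv.1.trans ht.1.le, ht.2⟩, htU⟩)

end Collapse

section ShiftPi

variable {m : ℕ} {U : Set ℝ} {s : Fin m → ℝ}

lemma measurePreserving_shiftPi_collapse (hU : ∀ i, Icc (s i) (s i + 1) ⊆ U) :
    MeasurePreserving (fun x i => collapse U (x i)) (shiftPi m s)
      (shiftPi m fun i => collapse U (s i)) := by
  refine measurePreserving_pi _ _ fun i => ?_
  simpa only [image_collapse_Icc (hU i), add_sub_cancel_left] using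
    measurePreserving_collapse (hU i)

lemma ae_shiftPi_mem_Ico (s : Fin m → ℝ) :
    ∀ᵐ x ∂shiftPi m s, ∀ i, x i ∈ Ico (s i) (s i + 1) := by
  simp only [shiftPi, ← restrict_Ico_eq_restrict_Icc]
  exact ae_all_iff.2 fun i =>
    Measure.tendsto_eval_ae_ae.eventually (ae_restrict_mem measurableSet_Ico)

lemma shiftPi_strictMono_eq_shiftPi_collapse (hU : ∀ i, Icc (s i) (s i + 1) ⊆ U)
    (σ : Equiv.Perm (Fin m)) :
    shiftPi m s {x | StrictMono fun i => x (σ i)} =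
      shiftPi m (fun i => collapse U (s i)) {x | StrictMono fun i => x (σ i)} := by
  rw [← (measurePreserving_shiftPi_collapse hU).measure_preimage
    (measurableSet_strictMono_comp σ).nullMeasurableSet]
  apply measure_congr
  filter_upwards [ae_shiftPi_mem_Ico s] with x hx
  have hmem (i : Fin m) : x i ∈ ⋃ i, Ico (s i) (s i + 1) := mem_iUnion_of_mem i (hx i)
  have hlt_iff (i j : Fin m) : x i < x j ↔ collapse U (x i) < collapse U (x j) :=
    ((strictMonoOn_collapse hU).lt_iff_lt (hmem i) (hmem j)).symm
  exact propext (forall₂_congr fun i j => imp_congr_right fun _ => hlt_iff (σ i) (σ j))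

end ShiftPi

/-- Closing gaps: for every `s ∈ ℝ^m` there is `s' ∈ ℝ^m` such that
`⋃ i [s'_i, s'_i + 1]` is a connected subset of `ℝ` and the induced distributions on
permutations agree: for every permutation `σ`, the probability that the coordinates
occur in the order `σ` is the same for the two shifted-interval product measures. -/
theorem closing_gaps (m : ℕ) (hm : 0 < m) (s : Fin m → ℝ) :
    ∃ s' : Fin m → ℝ,
      IsConnected (⋃ i, Set.Icc (s' i) (s' i + 1)) ∧
      ∀ σ : Equiv.Perm (Fin m),
        shiftPi m s {x | StrictMono fun i => x (σ i)} =
          shiftPi m s' {x | StrictMono fun i => x (σ i)} := by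
  let U : Set ℝ := ⋃ i, Icc (s i) (s i + 1)
  have hU (i : Fin m) : Icc (s i) (s i + 1) ⊆ U := subset_iUnion_of_subset i subset_rfl
  have hne : U.Nonempty := ⟨s ⟨0, hm⟩, hU _ ⟨le_rfl, by linarith⟩⟩
  have hclosed : IsClosed U := isClosed_iUnion_of_finite fun _ => isClosed_Icc
  have hunion : collapse U '' U = ⋃ i, Icc (collapse U (s i)) (collapse U (s i) + 1) :=
    (image_iUnion ..).trans <| iUnion_congr fun i => by
      rw [image_collapse_Icc (hU i), add_sub_cancel_left]
  refine ⟨fun i => collapse U (s i), ?_, shiftPi_strictMono_eq_shiftPi_collapse hU⟩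
  rw [← hunion]
  exact ⟨hne.image _, isPreconnected_image_collapse hclosed⟩

end RST
end
end
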